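/- Under the hypotheses of Theorem 1.2 (strictly hyperbolic system in normalized coordinates, matching condition, the stated L^1/BV small initial data, α < ∞, J_1 = {i ∈ J : α_i = α} ≠ ∅, and existence of i_0 ∈ J_1 and x_0 ∈ ℝ with (∂^{α+1}λ_{i_0}/∂u_{i_0}^{α+1})(0) ψ_{i_0}(x_0)^α ψ'_{i_0}(x_0) < 0), the lifespan T̃(ε) satisfies the upper bound limsup_{ε→0^+} ε^{α+1} T̃(ε) ≤ M_0, where M_0 = [ max_{i ∈ J_1} sup_{x ∈ ℝ} ( −(1/α!) (∂^{α+1}λ_i/∂u_i^{α+1})(0) ψ_i(x)^α ψ_i'(x) ) ]^{-1}. -/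

import Mathlib

open scoped ENNReal
open MeasureTheory Matrix Set Filter Topology

noncomputable section

/-- The state space `ℝⁿ`, realized as `Fin n → ℝ`. -/
abbrev V (n : ℕ) := Fin n → ℝ

/-- The Euclidean norm on `Fin n → ℝ`. -/
def eunorm {n : ℕ} (v : V n) : ℝ := Real.sqrt (∑ i, v i ^ 2)

/-- The `i`-th standard basis vector `e_i`. -/
def eb {n : ℕ} (i : Fin n) : V n := Pi.single i 1

/-- A first-order quasilinear strictly hyperbolic system
`∂u/∂t + A(u) ∂u/∂x = B(u)`, with suitably smooth coefficients on the
neighborhood `{|u| < δ}` of `u = 0`, real distinct eigenvalues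
`λ_1(u) < ⋯ < λ_n(u)` and complete systems of left/right eigenvectors
normalized by `l_i(u) r_j(u) ≡ δ_ij`, `r_i(u)ᵀ r_i(u) ≡ 1`. -/
structure HypSys (n : ℕ) where
  A : V n → Matrix (Fin n) (Fin n) ℝ
  B : V n → V n
  lam : Fin n → V n → ℝ
  l : Fin n → V n → V n
  r : Fin n → V n → V n
  δ : ℝ
  δ_pos : 0 < δ
  smooth_A : ∀ i j : Fin n, ContDiffOn ℝ (⊤ : ℕ∞) (fun u => A u i j) {u | eunorm u < δ}
  smooth_B : ContDiffOn ℝ (⊤ : ℕ∞) B {u | eunorm u < δ}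
  smooth_lam : ∀ i : Fin n, ContDiffOn ℝ (⊤ : ℕ∞) (lam i) {u | eunorm u < δ}
  smooth_l : ∀ i : Fin n, ContDiffOn ℝ (⊤ : ℕ∞) (l i) {u | eunorm u < δ}
  smooth_r : ∀ i : Fin n, ContDiffOn ℝ (⊤ : ℕ∞) (r i) {u | eunorm u < δ}
  strict_hyp : ∀ u : V n, eunorm u < δ → ∀ i j : Fin n, i < j → lam i u < lam j u
  eig_r : ∀ u : V n, eunorm u < δ → ∀ i, Matrix.mulVec (A u) (r i u) = lam i u • r i u
  eig_l : ∀ u : V n, eunorm u < δ → ∀ i, Matrix.vecMul (l i u) (A u) = lam i u • l i u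
  norm_lr : ∀ u : V n, eunorm u < δ → ∀ i j : Fin n, l i u ⬝ᵥ r j u = if i = j then 1 else 0
  norm_rr : ∀ u : V n, eunorm u < δ → ∀ i : Fin n, r i u ⬝ᵥ r i u = 1

namespace HypSys

variable {n : ℕ} (S : HypSys n)

/-- Normalized coordinates: `r_i(u_i e_i) ≡ e_i` for `|u_i|` small. -/
def Normalized : Prop := ∀ i : Fin n, ∀ s : ℝ, |s| < S.δ → S.r i (s • eb i) = eb i

/-- Matching condition for the inhomogeneous term: `B(u_i e_i) ≡ 0` for `|u_i|` small. -/
def Matching : Prop := ∀ i : Fin n, ∀ s : ℝ, |s| < S.δ → S.B (s • eb i) = 0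

/-- In normalized coordinates, `∂^k λ_i / ∂u_i^k (0)`. -/
def axisDeriv (i : Fin n) (k : ℕ) : ℝ := iteratedDeriv k (fun s : ℝ => S.lam i (s • eb i)) 0

/-- The `i`-th characteristic field is weakly linearly degenerate:
`λ_i(u_i e_i) ≡ λ_i(0)` for `|u_i|` small (in normalized coordinates). -/
def WLD (i : Fin n) : Prop := ∀ s : ℝ, |s| < S.δ → S.lam i (s • eb i) = S.lam i 0

/-- `α_i = a`: the derivatives `∂^k λ_i/∂u_i^k (0)` vanish for `k = 1, …, a`
but not for `k = a + 1`. -/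
def IsAlphaOf (i : Fin n) (a : ℕ) : Prop :=
  (∀ k : ℕ, 1 ≤ k → k ≤ a → S.axisDeriv i k = 0) ∧ S.axisDeriv i (a + 1) ≠ 0

/-- `a = α = min { α_i : i ∈ J } < ∞`, where `J` is the set of non weakly
linearly degenerate indices.  (In particular the system is not weakly
linearly degenerate.) -/
def IsMinAlpha (a : ℕ) : Prop :=
  (∃ i : Fin n, ¬ S.WLD i ∧ S.IsAlphaOf i a) ∧
    ∀ i : Fin n, ¬ S.WLD i → ∀ b : ℕ, S.IsAlphaOf i b → a ≤ b

/-- `b_i(u) = l_i(u) B(u)`. -/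
def bcoef (i : Fin n) (u : V n) : ℝ := S.l i u ⬝ᵥ S.B u

/-- `β_{ijk}(u) = (λ_k(u) − λ_i(u)) l_i(u) ∇r_j(u) r_k(u)`. -/
def beta (i j k : Fin n) (u : V n) : ℝ :=
  (S.lam k u - S.lam i u) * (S.l i u ⬝ᵥ fderiv ℝ (S.r j) u (S.r k u))

/-- `ν_{ijk}(u) = − l_i(u) ∇r_j(u) r_k(u)`. -/
def nu (i j k : Fin n) (u : V n) : ℝ := -(S.l i u ⬝ᵥ fderiv ℝ (S.r j) u (S.r k u))

/-- `γ_{ijk}(u) = (λ_k(u) − λ_j(u)) l_i(u) ∇r_j(u) r_k(u) − ∇λ_j(u) r_k(u) δ_ij`. -/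
def gamma (i j k : Fin n) (u : V n) : ℝ :=
  (S.lam k u - S.lam j u) * (S.l i u ⬝ᵥ fderiv ℝ (S.r j) u (S.r k u)) -
    (if i = j then fderiv ℝ (S.lam j) u (S.r k u) else 0)

/-- `σ_{ijk}(u) = l_i(u) (∇r_k(u) r_j(u) − ∇r_j(u) r_k(u))`. -/
def sigma (i j k : Fin n) (u : V n) : ℝ :=
  S.l i u ⬝ᵥ (fderiv ℝ (S.r k) u (S.r j u) - fderiv ℝ (S.r j) u (S.r k u))

/-- `β̃_{ijk}(u) = β_{ijk}(u) + ∇λ_i(u) r_k(u) δ_ij`. -/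
def betaT (i j k : Fin n) (u : V n) : ℝ :=
  S.beta i j k u + (if i = j then fderiv ℝ (S.lam i) u (S.r k u) else 0)

/-- `γ̃_{ijk}(u) = γ_{ijk}(u) + ½ [∇λ_j(u) r_k(u) δ_ij + ∇λ_k(u) r_j(u) δ_ik]`. -/
def gammaT (i j k : Fin n) (u : V n) : ℝ :=
  S.gamma i j k u + (1 / 2) *
    ((if i = j then fderiv ℝ (S.lam j) u (S.r k u) else 0) +
     (if i = k then fderiv ℝ (S.lam k) u (S.r j u) else 0))

/-- `b̃_{ik}(u) = Σ_l (∂b_i/∂u_l)(u) r_{kl}(u)`. -/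
def btilde (i k : Fin n) (u : V n) : ℝ :=
  ∑ m : Fin n, fderiv ℝ (S.bcoef i) u (Pi.single m 1) * S.r k u m

/-- `u` is a `C¹` solution of the Cauchy problem on `[0,T] × ℝ`, with initial
data `u0`, staying in the neighborhood `{|u| < δ}` of `u = 0`. -/
structure IsSolutionOn (u : ℝ → ℝ → V n) (u0 : ℝ → V n) (T : ℝ) : Prop where
  smooth : ContDiffOn ℝ 1 (fun p : ℝ × ℝ => u p.1 p.2) (Icc 0 T ×ˢ univ)
  small : ∀ t ∈ Icc (0 : ℝ) T, ∀ x : ℝ, eunorm (u t x) < S.δ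
  pde : ∀ t ∈ Icc (0 : ℝ) T, ∀ x : ℝ,
    derivWithin (fun s => u s x) (Icc 0 T) t +
      Matrix.mulVec (S.A (u t x)) (deriv (fun y => u t y) x) = S.B (u t x)
  init : ∀ x : ℝ, u 0 x = u0 x

/-- The lifespan `T̃` of the Cauchy problem with initial data `u0`
(as an extended nonnegative real). -/
def lifespan (u0 : ℝ → V n) : ℝ≥0∞ :=
  ⨆ (T : ℝ) (_ : ∃ u : ℝ → ℝ → V n, S.IsSolutionOn u u0 T), ENNReal.ofReal T

/-- `v_i = l_i(u) u`. -/
def vC (u : ℝ → ℝ → V n) (i : Fin n) (t x : ℝ) : ℝ := S.l i (u t x) ⬝ᵥ u t x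

/-- `w_i = l_i(u) u_x`. -/
def wC (u : ℝ → ℝ → V n) (i : Fin n) (t x : ℝ) : ℝ :=
  S.l i (u t x) ⬝ᵥ deriv (fun y => u t y) x

/-- `v = (v_1, …, v_n)`. -/
def vV (u : ℝ → ℝ → V n) (t x : ℝ) : V n := fun i => S.vC u i t x

/-- `w = (w_1, …, w_n)`. -/
def wV (u : ℝ → ℝ → V n) (t x : ℝ) : V n := fun i => S.wC u i t x

/-- `U_∞(T) = sup_{0≤t≤T} sup_x |u(t,x)|`. -/
def Uinf (_S : HypSys n) (u : ℝ → ℝ → V n) (T : ℝ) : ℝ :=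
  ⨆ p : Icc (0 : ℝ) T × ℝ, eunorm (u p.1.1 p.2)

/-- `V_∞(T) = sup_{0≤t≤T} sup_x |v(t,x)|`. -/
def Vinf (u : ℝ → ℝ → V n) (T : ℝ) : ℝ :=
  ⨆ p : Icc (0 : ℝ) T × ℝ, eunorm (S.vV u p.1.1 p.2)

/-- `W_∞(T) = sup_{0≤t≤T} sup_x |w(t,x)|`. -/
def Winf (u : ℝ → ℝ → V n) (T : ℝ) : ℝ :=
  ⨆ p : Icc (0 : ℝ) T × ℝ, eunorm (S.wV u p.1.1 p.2)

/-- `V_1(T) = sup_{0≤t≤T} ∫_ℝ |v(t,x)| dx`. -/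
def V1 (u : ℝ → ℝ → V n) (T : ℝ) : ℝ :=
  ⨆ t : Icc (0 : ℝ) T, ∫ x : ℝ, eunorm (S.vV u t.1 x)

/-- `W_1(T) = sup_{0≤t≤T} ∫_ℝ |w(t,x)| dx`. -/
def W1 (u : ℝ → ℝ → V n) (T : ℝ) : ℝ :=
  ⨆ t : Icc (0 : ℝ) T, ∫ x : ℝ, eunorm (S.wV u t.1 x)

/-- `ξ` is a `j`-th characteristic curve on `[0,T]`:  `ξ'(t) = λ_j(u(t, ξ(t)))`. -/
def IsChar (u : ℝ → ℝ → V n) (j : Fin n) (T : ℝ) (ξ : ℝ → ℝ) : Prop :=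
  ∀ t ∈ Icc (0 : ℝ) T, HasDerivWithinAt ξ (S.lam j (u t (ξ t))) (Icc 0 T) t

/-- `Ṽ_1(T) = max_{i≠j} sup_{C̃_j} ∫_{C̃_j} |v_i| dt`. -/
def V1t (u : ℝ → ℝ → V n) (T : ℝ) : ℝ :=
  sSup {A : ℝ | ∃ i j : Fin n, i ≠ j ∧ ∃ ξ : ℝ → ℝ, S.IsChar u j T ξ ∧
    A = ∫ t in Icc (0 : ℝ) T, |S.vC u i t (ξ t)|}

/-- `W̃_1(T) = max_{i≠j} sup_{C̃_j} ∫_{C̃_j} |w_i| dt`. -/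
def W1t (u : ℝ → ℝ → V n) (T : ℝ) : ℝ :=
  sSup {A : ℝ | ∃ i j : Fin n, i ≠ j ∧ ∃ ξ : ℝ → ℝ, S.IsChar u j T ξ ∧
    A = ∫ t in Icc (0 : ℝ) T, |S.wC u i t (ξ t)|}

/-- `Q_W(T) = Σ_{j≠k} ∫∫ |w_j||w_k|`. -/
def QW (u : ℝ → ℝ → V n) (T : ℝ) : ℝ :=
  ∑ j : Fin n, ∑ k : Fin n, if j = k then 0 else
    ∫ t in Icc (0 : ℝ) T, ∫ x : ℝ, |S.wC u j t x| * |S.wC u k t x|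

/-- `Q_{VW}(T) = Σ_{j≠k} ∫∫ |v_j||w_k|`. -/
def QVW (u : ℝ → ℝ → V n) (T : ℝ) : ℝ :=
  ∑ j : Fin n, ∑ k : Fin n, if j = k then 0 else
    ∫ t in Icc (0 : ℝ) T, ∫ x : ℝ, |S.vC u j t x| * |S.wC u k t x|

/-- `Q_V(T) = Σ_{j≠k} ∫∫ |v_j||v_k|`. -/
def QV (u : ℝ → ℝ → V n) (T : ℝ) : ℝ :=
  ∑ j : Fin n, ∑ k : Fin n, if j = k then 0 else
    ∫ t in Icc (0 : ℝ) T, ∫ x : ℝ, |S.vC u j t x| * |S.vC u k t x|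

/-- The coefficient `a_0(t;i,y) = γ_{iii}(u)` of the Riccati equation (5.5),
evaluated at `(t,x)`. -/
def ricA0 (u : ℝ → ℝ → V n) (i : Fin n) (t x : ℝ) : ℝ := S.gamma i i i (u t x)

/-- The coefficient `a_1(t;i,y)` of the Riccati equation (5.5), evaluated at `(t,x)`. -/
def ricA1 (u : ℝ → ℝ → V n) (i : Fin n) (t x : ℝ) : ℝ :=
  (∑ j : Fin n, if j = i then 0 else
      (S.gamma i i j (u t x) + S.gamma i j i (u t x)) * S.wC u j t x)
  + (∑ j : Fin n, S.sigma i j i (u t x) * S.bcoef j (u t x))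
  + (S.btilde i i (u t x) - S.btilde i i ((u t x i) • eb i))

/-- The coefficient `a_2(t;i,y)` of the Riccati equation (5.5), evaluated at `(t,x)`. -/
def ricA2 (u : ℝ → ℝ → V n) (i : Fin n) (t x : ℝ) : ℝ :=
  (∑ j : Fin n, ∑ k : Fin n, if j = k ∨ j = i ∨ k = i then 0 else
      S.gamma i j k (u t x) * S.wC u j t x * S.wC u k t x)
  + (∑ j : Fin n, ∑ k : Fin n, if k = i then 0 else
      S.sigma i j k (u t x) * S.bcoef j (u t x) * S.wC u k t x)
  + (∑ k : Fin n, if k = i then 0 else S.btilde i k (u t x) * S.wC u k t x)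

/-- `u` is a `C¹` solution of the system on the open set `Ω`, with values in
the neighborhood `{|u| < δ}`. -/
structure IsSol1On (u : ℝ → ℝ → V n) (Ω : Set (ℝ × ℝ)) : Prop where
  isOpen : IsOpen Ω
  smooth : ContDiffOn ℝ 1 (fun p : ℝ × ℝ => u p.1 p.2) Ω
  small : ∀ p ∈ Ω, eunorm (u p.1 p.2) < S.δ
  pde : ∀ p ∈ Ω, deriv (fun s => u s p.2) p.1 +
    Matrix.mulVec (S.A (u p.1 p.2)) (deriv (fun y => u p.1 y) p.2) = S.B (u p.1 p.2)

/-- `u` is a `C²` solution of the system on the open set `Ω`, with values in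
the neighborhood `{|u| < δ}`. -/
structure IsSol2On (u : ℝ → ℝ → V n) (Ω : Set (ℝ × ℝ)) : Prop where
  isOpen : IsOpen Ω
  smooth : ContDiffOn ℝ 2 (fun p : ℝ × ℝ => u p.1 p.2) Ω
  small : ∀ p ∈ Ω, eunorm (u p.1 p.2) < S.δ
  pde : ∀ p ∈ Ω, deriv (fun s => u s p.2) p.1 +
    Matrix.mulVec (S.A (u p.1 p.2)) (deriv (fun y => u p.1 y) p.2) = S.B (u p.1 p.2)

end HypSys

/-- The family of initial data `u(0,x) = f(ε,x)`: `f` is `C¹` in `(ε,x)`,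
`f(0,x) ≡ 0`, `∂²f/∂ε∂x(·,x)` is uniformly `C^r` (Hölder) on `[0,ε₁]`,
`ψ(x) = ∂f/∂ε(0,x)` is `C¹`, and `M = sup_x |ψ'(x)| < ∞`. -/
structure InitData (n : ℕ) where
  f : ℝ → ℝ → V n
  ε₁ : ℝ
  ε₁_pos : 0 < ε₁
  rexp : ℝ
  rexp_pos : 0 < rexp
  rexp_le_one : rexp ≤ 1
  smooth : ContDiff ℝ 1 (fun p : ℝ × ℝ => f p.1 p.2)
  zero : ∀ x : ℝ, f 0 x = 0
  psi_smooth : ContDiff ℝ 1 (fun x : ℝ => deriv (fun e => f e x) 0)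
  M_bdd : BddAbove (Set.range fun x : ℝ =>
    eunorm (deriv (fun x' : ℝ => deriv (fun e => f e x') 0) x))
  holder : ∃ CH : ℝ, ∀ x ε ε' : ℝ, ε ∈ Set.Icc 0 ε₁ → ε' ∈ Set.Icc 0 ε₁ →
    eunorm (deriv (fun e => deriv (fun y => f e y) x) ε
      - deriv (fun e => deriv (fun y => f e y) x) ε') ≤ CH * |ε - ε'| ^ rexp

namespace InitData

variable {n : ℕ} (D : InitData n)

/-- `ψ(x) = ∂f/∂ε(0,x)`. -/
def psi : ℝ → V n := fun x => deriv (fun e => D.f e x) 0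

/-- `M = sup_x |ψ'(x)|`. -/
def M : ℝ := ⨆ x : ℝ, eunorm (deriv D.psi x)

/-- The smallness conditions (1.17) on the initial data:
`∫|∂f/∂x(ε,·)| ≤ K₁ ε` and `∫|f(ε,·)| ≤ K₂ ε / (M+1)`. -/
def Small (K1 K2 ε : ℝ) : Prop :=
  Integrable (fun x : ℝ => eunorm (deriv (fun y => D.f ε y) x)) ∧
  Integrable (fun x : ℝ => eunorm (D.f ε x)) ∧
  (∫ x : ℝ, eunorm (deriv (fun y => D.f ε y) x)) ≤ K1 * ε ∧
  (∫ x : ℝ, eunorm (D.f ε x)) ≤ K2 / (D.M + 1) * ε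

end InitData

/-- The right-hand side of the sharp lifespan formula (1.26):
`max_{i∈J₁} sup_{x∈ℝ} ( −(1/α!) ∂^{α+1}λ_i/∂u_i^{α+1}(0) ψ_i(x)^α ψ_i'(x) )`. -/
def blowRate {n : ℕ} (S : HypSys n) (D : InitData n) (a : ℕ) : ℝ :=
  ⨆ i : {i : Fin n // ¬ S.WLD i ∧ S.IsAlphaOf i a}, ⨆ x : ℝ,
    (-(1 / (Nat.factorial a : ℝ)) * S.axisDeriv i.1 (a + 1) * (D.psi x) i.1 ^ a *
      deriv (fun x' => (D.psi x') i.1) x)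


namespace LS

/-- A bounded scalar time-dependent field, `C¹` in `x`. -/
structure Fld (a ax : ℝ → ℝ → ℝ) (L K : ℝ) : Prop where
  cont : Continuous (Function.uncurry a)
  contx : Continuous (Function.uncurry ax)
  deriv : ∀ t x, HasDerivAt (a t) (ax t x) x
  bd : ∀ t x, |a t x| ≤ L
  bdx : ∀ t x, |ax t x| ≤ K

/-- Data of a flow on `[0,T]`. -/
structure IsFlow (T L K : ℝ) (a ax X J : ℝ → ℝ → ℝ) : Prop where
  zero : ∀ y, X 0 y = y
  hasDeriv : ∀ y, ∀ t ∈ Icc (0:ℝ) T, HasDerivWithinAt (fun s => X s y) (a t (X t y)) (Icc 0 T) t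
  cont : Continuous (Function.uncurry X)
  contJ : Continuous (Function.uncurry J)
  J_pos : ∀ t y, 0 < J t y
  J_zero : ∀ y, J 0 y = 1
  deriv_y : ∀ t y, HasDerivAt (X t) (J t y) y
  J_deriv : ∀ y, ∀ t ∈ Icc (0:ℝ) T,
    HasDerivWithinAt (fun s => J s y) (ax t (X t y) * J t y) (Icc 0 T) t
  lip : ∀ t y y', |X t y' - X t y| ≤ Real.exp (K * T) * |y' - y|
  expand : ∀ t y y', |y' - y| ≤ Real.exp (K * T) * |X t y' - X t y|
  mono : ∀ t y y', y < y' → X t y < X t y'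
  bound : ∀ y s t, 0 ≤ s → s ≤ t → t ≤ T → |X t y - X s y| ≤ L * (t - s)

lemma exists_traj {a ax : ℝ → ℝ → ℝ} {L K : ℝ} (h : Fld a ax L K) {T : ℝ} (hT : 0 ≤ T) (y : ℝ) :
    ∃ α : ℝ → ℝ, α 0 = y ∧
      ∀ t ∈ Icc (0:ℝ) T, HasDerivWithinAt α (a t (α t)) (Icc 0 T) t := by
  have hL : 0 ≤ L := (abs_nonneg _).trans (h.bd 0 0)
  have hK : 0 ≤ K := (abs_nonneg _).trans (h.bdx 0 0)
  have hp : IsPicardLindelof a (tmin := 0) (tmax := T) ⟨0, le_rfl, hT⟩ y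
      ⟨L * T, by positivity⟩ 0 ⟨L, hL⟩ ⟨K, hK⟩ := by
    refine ⟨?_, ?_, ?_, ?_⟩
    · intro t _
      have : LipschitzWith ⟨K, hK⟩ (a t) := by
        apply lipschitzWith_of_nnnorm_deriv_le (fun x => (h.deriv t x).differentiableAt)
        intro x
        rw [(h.deriv t x).deriv]
        exact h.bdx t x
      exact this.lipschitzOnWith
    · intro x _
      exact (h.cont.comp (by fun_prop : Continuous fun t : ℝ => (t, x))).continuousOn
    · intro t _ x _
      exact h.bd t x
    · simp only [NNReal.coe_zero, sub_zero, sub_self]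
      rw [max_eq_left hT]
      exact le_rfl
  exact hp.exists_eq_forall_mem_Icc_hasDerivWithinAt₀

/-- averaged slope -/
def slp (ax : ℝ → ℝ → ℝ) (t x x' : ℝ) : ℝ := ∫ θ in (0:ℝ)..1, ax t (x + θ * (x' - x))

lemma slp_eq {a ax : ℝ → ℝ → ℝ} (hd : ∀ t x, HasDerivAt (a t) (ax t x) x)
    (hcx : Continuous (Function.uncurry ax)) (t x x' : ℝ) :
    a t x' - a t x = slp ax t x x' * (x' - x) := by
  have hc : Continuous (ax t) := hcx.comp (by fun_prop : Continuous fun x : ℝ => (t, x))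
  have h1 : ∀ θ ∈ uIcc (0:ℝ) 1, HasDerivAt (fun θ : ℝ => a t (x + θ * (x' - x)))
      (ax t (x + θ * (x' - x)) * (x' - x)) θ := by
    intro θ _
    have : HasDerivAt (fun θ : ℝ => x + θ * (x' - x)) (x' - x) θ := by
      simpa using ((hasDerivAt_id θ).mul_const (x' - x)).const_add x
    exact (hd t _).comp θ this
  have h2 := intervalIntegral.integral_eq_sub_of_hasDerivAt h1
    (Continuous.intervalIntegrable (by fun_prop) _ _)
  rw [intervalIntegral.integral_mul_const] at h2
  unfold slp
  rw [h2]; simp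

lemma slp_bd {a ax : ℝ → ℝ → ℝ} {L K : ℝ} (h : Fld a ax L K) (t x x' : ℝ) :
    |slp ax t x x'| ≤ K := by
  have := intervalIntegral.norm_integral_le_of_norm_le_const (a := (0:ℝ)) (b := 1) (C := K)
    (f := fun θ => ax t (x + θ * (x' - x))) (fun θ _ => h.bdx _ _)
  simpa [slp] using this

lemma slp_cont {ax : ℝ → ℝ → ℝ} (hcx : Continuous (Function.uncurry ax)) :
    Continuous (fun p : ℝ × ℝ × ℝ => slp ax p.1 p.2.1 p.2.2) := by
  unfold slp
  apply intervalIntegral.continuous_parametric_intervalIntegral_of_continuous'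
  exact hcx.comp (by fun_prop :
    Continuous fun p : (ℝ × ℝ × ℝ) × ℝ => (p.1.1, p.1.2.1 + p.2 * (p.1.2.2 - p.1.2.1)))

lemma slp_self {ax : ℝ → ℝ → ℝ} (t x : ℝ) : slp ax t x x = ax t x := by
  simp [slp]

theorem exists_flow {a ax : ℝ → ℝ → ℝ} {L K : ℝ} (h : Fld a ax L K) {T : ℝ} (hT : 0 ≤ T) :
    ∃ X J : ℝ → ℝ → ℝ, IsFlow T L K a ax X J := by
  have hL : 0 ≤ L := (abs_nonneg _).trans (h.bd 0 0)
  have hK : 0 ≤ K := (abs_nonneg _).trans (h.bdx 0 0)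
  choose α hα0 hα using fun y => exists_traj h hT y
  set cl : ℝ → ℝ := fun t => max 0 (min t T) with hcl
  have hclm : ∀ t, cl t ∈ Icc (0:ℝ) T := fun t => ⟨le_max_left _ _, max_le hT (min_le_right _ _)⟩
  have hcle : ∀ t ∈ Icc (0:ℝ) T, cl t = t := by
    intro t ht; simp [hcl, ht.1, ht.2]
  have hclc : Continuous cl := by fun_prop
  have hαc : ∀ y, ContinuousOn (α y) (Icc 0 T) := fun y t ht => (hα y t ht).continuousWithinAt
  have hXc : ∀ y, Continuous (fun t => α y (cl t)) := fun y =>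
    (hαc y).comp_continuous hclc hclm
  let X : ℝ → ℝ → ℝ := fun t y => α y (cl t)
  let q : ℝ → ℝ → ℝ → ℝ := fun y y' s => slp ax s (X s y) (X s y')
  have hqc : ∀ y y', Continuous (q y y') := fun y y' =>
    (slp_cont h.contx).comp (continuous_id.prodMk ((hXc y).prodMk (hXc y')))
  have hqb : ∀ y y' s, |q y y' s| ≤ K := fun y y' s => slp_bd h _ _ _
  have hXd : ∀ y, ∀ t ∈ Icc (0:ℝ) T, HasDerivWithinAt (fun s => X s y) (a t (X t y)) (Icc 0 T) t := by
    intro y t ht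
    have := hα y t ht
    have e : X t y = α y t := by simp [X, hcle t ht]
    rw [e]
    exact this.congr (fun s hs => by simp [X, hcle s hs]) e
  have hI : ∀ y y' t, HasDerivAt (fun t => ∫ s in (0:ℝ)..t, q y y' s) (q y y' t) t := fun y y' t =>
    intervalIntegral.integral_hasDerivAt_right ((hqc y y').intervalIntegrable _ _)
      ((hqc y y').stronglyMeasurableAtFilter _ _) (hqc y y').continuousAt
  have hIb : ∀ y y', ∀ t ∈ Icc (0:ℝ) T, |∫ s in (0:ℝ)..t, q y y' s| ≤ K * T := by
    intro y y' t ht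
    have := intervalIntegral.norm_integral_le_of_norm_le_const (a := (0:ℝ)) (b := t) (C := K)
      (f := q y y') (fun θ _ => hqb y y' θ)
    rw [Real.norm_eq_abs, sub_zero, abs_of_nonneg ht.1] at this
    exact this.trans (by gcongr; exact ht.2)
  -- main identity
  have key : ∀ y y', ∀ t ∈ Icc (0:ℝ) T,
      X t y' - X t y = (y' - y) * Real.exp (∫ s in (0:ℝ)..t, q y y' s) := by
    intro y y' t ht
    have hd : ∀ s ∈ Icc (0:ℝ) T, HasDerivWithinAt
        (fun s => (X s y' - X s y) * Real.exp (-∫ r in (0:ℝ)..s, q y y' r)) 0 (Icc 0 T) s := by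
      intro s hs
      have h1 := ((hXd y' s hs).sub (hXd y s hs)).mul ((hI y y' s).neg.exp.hasDerivWithinAt (s := Icc 0 T))
      refine h1.congr_deriv ?_
      rw [slp_eq h.deriv h.contx]
      simp only [q, Pi.sub_apply, Pi.neg_apply]
      ring
    have hcst := (convex_Icc (0:ℝ) T).norm_image_sub_le_of_norm_hasDerivWithin_le (C := 0)
      hd (by simp) ⟨le_rfl, hT⟩ ht
    simp only [zero_mul] at hcst
    have h0 := sub_eq_zero.1 (norm_le_zero_iff.1 hcst)
    have e0 : ∀ y, X 0 y = y := fun y => by simp [X, hcle 0 ⟨le_rfl, hT⟩, hα0]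
    rw [e0, e0] at h0
    simp only [intervalIntegral.integral_same, neg_zero, Real.exp_zero, mul_one, Real.exp_neg] at h0
    rw [← h0, mul_assoc, inv_mul_cancel₀ (Real.exp_pos _).ne', mul_one]
  have keyc : ∀ t y y', X t y' - X t y = (y' - y) * Real.exp (∫ s in (0:ℝ)..(cl t), q y y' s) := by
    intro t y y'
    have := key y y' (cl t) (hclm t)
    have e : ∀ y, X (cl t) y = X t y := fun y => by simp [X, hcle _ (hclm t)]
    rwa [e, e] at this
  have hlip : ∀ t y y', |X t y' - X t y| ≤ Real.exp (K * T) * |y' - y| := by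
    intro t y y'
    rw [keyc, abs_mul, mul_comm, abs_of_pos (Real.exp_pos _)]
    gcongr
    exact (le_abs_self _).trans (hIb y y' _ (hclm t))
  have hexp : ∀ t y y', |y' - y| ≤ Real.exp (K * T) * |X t y' - X t y| := by
    intro t y y'
    rw [keyc, abs_mul, abs_of_pos (Real.exp_pos _), mul_comm |y' - y|, ← mul_assoc, ← Real.exp_add]
    have h1 : 1 ≤ Real.exp (K * T + ∫ s in (0:ℝ)..(cl t), q y y' s) := by
      apply Real.one_le_exp
      have := neg_abs_le (∫ s in (0:ℝ)..(cl t), q y y' s)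
      have := hIb y y' _ (hclm t)
      linarith
    nlinarith [abs_nonneg (y' - y)]
  have hbound : ∀ y s t, 0 ≤ s → s ≤ t → t ≤ T → |X t y - X s y| ≤ L * (t - s) := by
    intro y s t hs hst ht
    have := (convex_Icc (0:ℝ) T).norm_image_sub_le_of_norm_hasDerivWithin_le (C := L)
      (hXd y) (fun x _ => h.bd _ _) ⟨hs, hst.trans ht⟩ ⟨hs.trans hst, ht⟩
    rwa [Real.norm_eq_abs, Real.norm_eq_abs, abs_of_nonneg (by linarith : 0 ≤ t - s)] at this
  have hcont : Continuous (Function.uncurry X) := by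
    rw [continuous_iff_continuousAt]
    rintro ⟨t0, y0⟩
    have h1 : Tendsto (fun p : ℝ × ℝ => X p.1 y0) (𝓝 (t0, y0)) (𝓝 (X t0 y0)) :=
      ((hXc y0).comp continuous_fst).tendsto (t0, y0)
    have h2 : Tendsto (fun p : ℝ × ℝ => X p.1 p.2 - X p.1 y0) (𝓝 (t0, y0)) (𝓝 0) := by
      apply squeeze_zero_norm (a := fun p : ℝ × ℝ => Real.exp (K * T) * |p.2 - y0|)
      · intro p; exact hlip p.1 y0 p.2
      · have : Continuous (fun p : ℝ × ℝ => Real.exp (K * T) * |p.2 - y0|) := by fun_prop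
        simpa using this.tendsto (t0, y0)
    have := h1.add h2
    simpa [ContinuousAt, Function.uncurry_def] using this
  have haxX : Continuous (fun p : ℝ × ℝ => ax p.2 (X p.2 p.1)) :=
    h.contx.comp (continuous_snd.prodMk (hcont.comp (continuous_snd.prodMk continuous_fst)))
  let J : ℝ → ℝ → ℝ := fun t y => Real.exp (∫ s in (0:ℝ)..(cl t), ax s (X s y))
  have hqq : ∀ y s, q y y s = ax s (X s y) := fun y s => slp_self _ _
  refine ⟨X, J, ?_⟩
  refine ⟨?_, hXd, hcont, ?_, fun _ _ => Real.exp_pos _, ?_, ?_, ?_, hlip, hexp, ?_, hbound⟩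
  · intro y; simp [X, hcle 0 ⟨le_rfl, hT⟩, hα0]
  · apply Real.continuous_exp.comp
    apply intervalIntegral.continuous_parametric_intervalIntegral_of_continuous
      (f := fun (p : ℝ × ℝ) s => ax s (X s p.2)) (s := fun p : ℝ × ℝ => cl p.1)
    · exact haxX.comp (by fun_prop : Continuous fun p : (ℝ × ℝ) × ℝ => (p.1.2, p.2))
    · fun_prop
  · intro y; simp [J, hcle 0 ⟨le_rfl, hT⟩]
  · intro t y
    rw [hasDerivAt_iff_tendsto_slope]
    have hl : Tendsto (fun y' => Real.exp (∫ s in (0:ℝ)..(cl t), q y y' s)) (𝓝 y) (𝓝 (J t y)) := by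
      have : Continuous (fun y' => ∫ s in (0:ℝ)..(cl t), q y y' s) := by
        apply intervalIntegral.continuous_parametric_intervalIntegral_of_continuous'
        exact (slp_cont h.contx).comp (continuous_snd.prodMk (((hXc y).comp continuous_snd).prodMk
          (hcont.comp (continuous_snd.prodMk continuous_fst))))
      have := (Real.continuous_exp.comp this).tendsto y
      simpa [J, hqq, Function.comp_def] using this
    refine (hl.mono_left nhdsWithin_le_nhds).congr' ?_
    filter_upwards [self_mem_nhdsWithin] with y' hy'
    have hne : y' - y ≠ 0 := sub_ne_zero.2 hy'
    rw [slope_def_field, keyc]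
    field_simp
  · intro y t ht
    have h1 := (hI y y t).exp.hasDerivWithinAt (s := Icc 0 T)
    have e : ∀ s ∈ Icc (0:ℝ) T, J s y = Real.exp (∫ s in (0:ℝ)..s, q y y s) := by
      intro s hs; simp [J, hcle s hs, hqq]
    rw [e t ht]
    rw [hqq, mul_comm] at h1
    exact h1.congr e (e t ht)
  · intro t y y' hy
    have := keyc t y y'
    have : 0 < X t y' - X t y := by rw [this]; exact mul_pos (by linarith) (Real.exp_pos _)
    linarith

lemma IsFlow.surj {a ax X J : ℝ → ℝ → ℝ} {T L K : ℝ} (h : IsFlow T L K a ax X J) {t : ℝ}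
    (ht : t ∈ Icc (0:ℝ) T) : Function.Surjective (X t) := by
  have hb : ∀ y, |X t y - y| ≤ L * t := fun y => by
    have := h.bound y 0 t le_rfl ht.1 ht.2
    rwa [h.zero, sub_zero] at this
  have hc : Continuous (X t) := h.cont.comp (by fun_prop : Continuous fun x : ℝ => (t, x))
  intro x
  have h1 := abs_le.1 (hb (x - L * t))
  have h2 := abs_le.1 (hb (x + L * t))
  have hle : x - L * t ≤ x + L * t := by
    have := (abs_nonneg _).trans (hb 0); linarith
  obtain ⟨y, _, hy⟩ := intermediate_value_Icc hle hc.continuousOn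
    (show x ∈ Icc _ _ from ⟨by linarith, by linarith⟩)
  exact ⟨y, hy⟩

lemma IsFlow.inj {a ax X J : ℝ → ℝ → ℝ} {T L K : ℝ} (h : IsFlow T L K a ax X J) (t : ℝ) :
    Function.Injective (X t) :=
  (show StrictMono (X t) from fun _ _ hy => h.mono t _ _ hy).injective

end LS

namespace LS

/-- The truncated domain of determinacy. -/
def Gr (T R L : ℝ) : Set (ℝ × ℝ) := {p | 0 ≤ p.1 ∧ p.1 ≤ T ∧ |p.2| ≤ R - L * p.1}

lemma Gr_closed (T R L : ℝ) : IsClosed (Gr T R L) := by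
  have h1 : IsClosed {p : ℝ × ℝ | 0 ≤ p.1} := isClosed_le (by fun_prop) (by fun_prop)
  have h2 : IsClosed {p : ℝ × ℝ | p.1 ≤ T} := isClosed_le (by fun_prop) (by fun_prop)
  have h3 : IsClosed {p : ℝ × ℝ | |p.2| ≤ R - L * p.1} := isClosed_le (by fun_prop) (by fun_prop)
  exact h1.inter (h2.inter h3)

/-- indicator of the domain -/
def chi (T R L t x : ℝ) : ℝ≥0∞ := (Gr T R L).indicator 1 (t, x)

lemma chi_meas (T R L : ℝ) : Measurable (fun p : ℝ × ℝ => chi T R L p.1 p.2) :=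
  measurable_one.indicator (Gr_closed T R L).measurableSet

lemma chi_of_mem {T R L t x : ℝ} (h : (t, x) ∈ Gr T R L) : chi T R L t x = 1 := by
  simp [chi, h]

lemma chi_of_notMem {T R L t x : ℝ} (h : (t, x) ∉ Gr T R L) : chi T R L t x = 0 := by
  simp [chi, h]

lemma Gr_back {a ax X J : ℝ → ℝ → ℝ} {T L K R : ℝ} (h : IsFlow T L K a ax X J) {s t y : ℝ}
    (hs : 0 ≤ s) (hst : s ≤ t) (hG : (t, X t y) ∈ Gr T R L) : (s, X s y) ∈ Gr T R L := by
  obtain ⟨h0, h1, h2⟩ := hG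
  refine ⟨hs, hst.trans h1, ?_⟩
  have hb := h.bound y s t hs hst h1
  have h3 := abs_sub_abs_le_abs_sub (X s y) (X t y)
  rw [abs_sub_comm] at h3
  simp only at h2 ⊢
  nlinarith

/-- `z` is transported by the flow `X` with production at most `g`. -/
structure Dens (T R L : ℝ) (X J z g : ℝ → ℝ → ℝ) : Prop where
  cz : Continuous (Function.uncurry z)
  cg : Continuous (Function.uncurry g)
  tr : ∀ t ∈ Icc (0:ℝ) T, ∀ y, (t, X t y) ∈ Gr T R L →
    ENNReal.ofReal (|z t (X t y)| * J t y) ≤ ENNReal.ofReal |z 0 y| +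
      ∫⁻ s in Icc 0 t, ENNReal.ofReal (g s (X s y) * J s y)

/-- Lagrangian mass bound. -/
def lm (T R L : ℝ) (X J z g : ℝ → ℝ → ℝ) (y : ℝ) : ℝ≥0∞ :=
  chi T R L 0 y * ENNReal.ofReal |z 0 y| +
    ∫⁻ s in Icc 0 T, ENNReal.ofReal (J s y) * (chi T R L s (X s y) * ENNReal.ofReal (g s (X s y)))

/-- Total mass bound. -/
def mass (T R L : ℝ) (z g : ℝ → ℝ → ℝ) : ℝ≥0∞ :=
  (∫⁻ y, chi T R L 0 y * ENNReal.ofReal |z 0 y|) +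
    ∫⁻ s in Icc 0 T, ∫⁻ x, chi T R L s x * ENNReal.ofReal (g s x)

section
variable {a ax X J z g : ℝ → ℝ → ℝ} {T L K R : ℝ}

lemma chvar (h : IsFlow T L K a ax X J) {t : ℝ} (ht : t ∈ Icc (0:ℝ) T) (f : ℝ → ℝ≥0∞) :
    ∫⁻ x, f x = ∫⁻ y, ENNReal.ofReal (J t y) * f (X t y) := by
  have := lintegral_image_eq_lintegral_abs_deriv_mul (s := univ) (f := X t) (f' := J t)
    MeasurableSet.univ (fun y _ => (h.deriv_y t y).hasDerivWithinAt) (h.inj t).injOn f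
  rw [image_univ, (h.surj ht).range_eq, Measure.restrict_univ] at this
  rw [this]
  simp only [abs_of_pos (h.J_pos t _)]

lemma measX (h : IsFlow T L K a ax X J) : Measurable (fun p : ℝ × ℝ => (p.1, X p.1 p.2)) :=
  measurable_fst.prodMk h.cont.measurable

lemma measInt (h : IsFlow T L K a ax X J) (hg : Continuous (Function.uncurry g)) :
    Measurable (fun p : ℝ × ℝ => ENNReal.ofReal (J p.1 p.2) *
      (chi T R L p.1 (X p.1 p.2) * ENNReal.ofReal (g p.1 (X p.1 p.2)))) := by
  have h1 : Measurable (fun p : ℝ × ℝ => ENNReal.ofReal (J p.1 p.2)) :=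
    h.contJ.measurable.ennreal_ofReal
  have h2 : Measurable (fun p : ℝ × ℝ => chi T R L p.1 (X p.1 p.2)) :=
    (chi_meas T R L).comp (measX h)
  have h3 : Measurable (fun p : ℝ × ℝ => ENNReal.ofReal (g p.1 (X p.1 p.2))) :=
    (hg.measurable.comp (measX h)).ennreal_ofReal
  exact h1.mul (h2.mul h3)

lemma meas_lm (h : IsFlow T L K a ax X J) (hd : Dens T R L X J z g) :
    Measurable (lm T R L X J z g) := by
  unfold lm
  apply Measurable.add
  · apply Measurable.mul
    · exact (chi_meas T R L).comp (measurable_const.prodMk measurable_id)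
    · have := hd.cz.comp (by fun_prop : Continuous fun y : ℝ => ((0:ℝ), y))
      exact this.measurable.norm.ennreal_ofReal
  · exact Measurable.lintegral_prod_left' (measInt h hd.cg)

lemma lint_lm (h : IsFlow T L K a ax X J) (hd : Dens T R L X J z g) :
    ∫⁻ y, lm T R L X J z g y = mass T R L z g := by
  unfold lm mass
  rw [lintegral_add_left]
  · congr 1
    rw [lintegral_lintegral_swap]
    · apply setLIntegral_congr_fun measurableSet_Icc
      intro s hs
      exact (chvar h hs (fun x => chi T R L s x * ENNReal.ofReal (g s x))).symm
    · exact ((measInt h hd.cg).comp measurable_swap).aemeasurable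
  · apply Measurable.mul
    · exact (chi_meas T R L).comp (measurable_const.prodMk measurable_id)
    · have := hd.cz.comp (by fun_prop : Continuous fun y : ℝ => ((0:ℝ), y))
      exact this.measurable.norm.ennreal_ofReal

lemma le_lm (h : IsFlow T L K a ax X J) (hd : Dens T R L X J z g) {t y : ℝ}
    (ht : t ∈ Icc (0:ℝ) T) (hG : (t, X t y) ∈ Gr T R L) :
    ENNReal.ofReal (|z t (X t y)| * J t y) ≤ lm T R L X J z g y := by
  refine (hd.tr t ht y hG).trans ?_
  unfold lm
  have h0 := Gr_back h le_rfl ht.1 hG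
  rw [h.zero] at h0
  rw [chi_of_mem h0, one_mul]
  refine add_le_add le_rfl ?_
  calc ∫⁻ s in Icc 0 t, ENNReal.ofReal (g s (X s y) * J s y)
      = ∫⁻ s in Icc 0 t, ENNReal.ofReal (J s y) *
          (chi T R L s (X s y) * ENNReal.ofReal (g s (X s y))) := by
        apply setLIntegral_congr_fun measurableSet_Icc
        intro s hs
        simp only
        rw [chi_of_mem (Gr_back h hs.1 hs.2 hG), one_mul, mul_comm,
          ENNReal.ofReal_mul (h.J_pos _ _).le]
    _ ≤ _ := lintegral_mono_set (Icc_subset_Icc le_rfl ht.2)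

lemma lint_slice (h : IsFlow T L K a ax X J) (hd : Dens T R L X J z g) {t : ℝ}
    (ht : t ∈ Icc (0:ℝ) T) :
    ∫⁻ x, chi T R L t x * ENNReal.ofReal |z t x| ≤ mass T R L z g := by
  rw [chvar h ht, ← lint_lm h hd]
  apply lintegral_mono
  intro y
  by_cases hG : (t, X t y) ∈ Gr T R L
  · simp only
    rw [chi_of_mem hG, one_mul, ← ENNReal.ofReal_mul (h.J_pos _ _).le, mul_comm]
    exact le_lm h hd ht hG
  · simp [chi_of_notMem hG]

lemma crossing (h : IsFlow T L K a ax X J) (hd : Dens T R L X J z g) {a2 : ℝ → ℝ → ℝ} {c : ℝ}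
    (hc : 0 < c)
    (hgap : (∀ t x, (t, x) ∈ Gr T R L → c ≤ a2 t x - a t x) ∨
      (∀ t x, (t, x) ∈ Gr T R L → c ≤ a t x - a2 t x))
    {t' : ℝ} (ht' : t' ∈ Icc (0:ℝ) T) {ξ : ℝ → ℝ}
    (hξ : ∀ t ∈ Icc (0:ℝ) t', HasDerivWithinAt ξ (a2 t (ξ t)) (Icc 0 t') t)
    (hG : ∀ t ∈ Icc (0:ℝ) t', (t, ξ t) ∈ Gr T R L) :
    ∫⁻ s in Icc 0 t', ENNReal.ofReal |z s (ξ s)| ≤ ENNReal.ofReal (1 / c) * mass T R L z g := by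
  have hsub : Icc (0:ℝ) t' ⊆ Icc 0 T := Icc_subset_Icc le_rfl ht'.2
  have hex : ∀ s, ∃ y, s ∈ Icc (0:ℝ) T → X s y = ξ s := by
    intro s
    by_cases hs : s ∈ Icc (0:ℝ) T
    · obtain ⟨y, hy⟩ := h.surj hs (ξ s); exact ⟨y, fun _ => hy⟩
    · exact ⟨0, fun h => absurd h hs⟩
  choose y hy using hex
  have hDd : ∀ s ∈ Icc (0:ℝ) t', HasDerivWithinAt (fun r => ξ r - X r (y s))
      (a2 s (ξ s) - a s (ξ s)) (Icc 0 t') s := by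
    intro s hs
    have h1 := (hξ s hs).sub ((h.hasDeriv (y s) s (hsub hs)).mono hsub)
    rw [hy s (hsub hs)] at h1
    exact h1
  have hyc : ∀ s ∈ Icc (0:ℝ) t', ContinuousWithinAt y (Icc 0 t') s := by
    intro s hs
    have h1 : Tendsto (fun r => ξ r - X r (y s)) (𝓝[Icc 0 t'] s) (𝓝 0) := by
      have := (hDd s hs).continuousWithinAt.tendsto
      simpa [hy s (hsub hs)] using this
    have h2 : Tendsto (fun r => y r - y s) (𝓝[Icc 0 t'] s) (𝓝 0) := by
      apply squeeze_zero_norm' (a := fun r => Real.exp (K * T) * |ξ r - X r (y s)|)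
      · filter_upwards [self_mem_nhdsWithin] with r hr
        have := h.expand r (y s) (y r)
        rwa [hy r (hsub hr)] at this
      · simpa using (h1.abs.const_mul (Real.exp (K * T)))
    have := h2.add_const (y s)
    simpa [ContinuousWithinAt] using this
  let y' : ℝ → ℝ := fun s => (a2 s (ξ s) - a s (ξ s)) / J s (y s)
  have hyd : ∀ s ∈ Icc (0:ℝ) t', HasDerivWithinAt y (y' s) (Icc 0 t') s := by
    intro s hs
    rw [hasDerivWithinAt_iff_tendsto_slope]
    have h1 := hasDerivWithinAt_iff_tendsto_slope.1 (hDd s hs)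
    have h2 : Tendsto (fun r => slp J r (y s) (y r)) (𝓝[Icc 0 t'] s) (𝓝 (J s (y s))) := by
      have hc0 := (slp_cont h.contJ).tendsto (s, y s, y s)
      simp only [slp_self] at hc0
      have hp : Tendsto (fun r => (r, y s, y r)) (𝓝[Icc 0 t'] s) (𝓝 (s, y s, y s)) :=
        (tendsto_id.mono_left nhdsWithin_le_nhds).prodMk_nhds
          (tendsto_const_nhds.prodMk_nhds (hyc s hs))
      exact hc0.comp hp
    have h3 := h1.div (h2.mono_left (nhdsWithin_mono _ sdiff_subset)) (h.J_pos _ _).ne'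
    refine h3.congr' ?_
    have hne := (h2.mono_left (nhdsWithin_mono _ (sdiff_subset (t := {s})))).eventually_ne (h.J_pos s (y s)).ne'
    filter_upwards [self_mem_nhdsWithin, hne] with r hr hner
    have hrs : r - s ≠ 0 := sub_ne_zero.2 hr.2
    have e := slp_eq h.deriv_y h.contJ r (y s) (y r)
    rw [hy r (hsub hr.1)] at e
    rw [Pi.div_apply, slope_def_field, slope_def_field, hy s (hsub hs), sub_self, sub_zero, e]
    field_simp
  have hycont : ContinuousOn y (Icc 0 t') := hyc
  have hinj : InjOn y (Icc 0 t') := by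
    rcases hgap with hg | hg
    · refine (strictMonoOn_of_hasDerivWithinAt_pos (f' := y') (convex_Icc 0 t') hycont
        (fun x hx => (hyd x (interior_subset hx)).mono interior_subset) ?_).injOn
      intro x hx
      have := hg x _ (hG x (interior_subset hx))
      exact div_pos (by linarith) (h.J_pos _ _)
    · refine (strictAntiOn_of_hasDerivWithinAt_neg (f' := y') (convex_Icc 0 t') hycont
        (fun x hx => (hyd x (interior_subset hx)).mono interior_subset) ?_).injOn
      intro x hx
      have := hg x _ (hG x (interior_subset hx))
      exact div_neg_of_neg_of_pos (by linarith) (h.J_pos _ _)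
  have hcv := lintegral_image_eq_lintegral_abs_deriv_mul measurableSet_Icc hyd hinj
    (lm T R L X J z g)
  calc ∫⁻ s in Icc 0 t', ENNReal.ofReal |z s (ξ s)|
      ≤ ∫⁻ s in Icc 0 t', ENNReal.ofReal (1 / c) *
          (ENNReal.ofReal |y' s| * lm T R L X J z g (y s)) := by
        apply setLIntegral_mono' measurableSet_Icc
        intro s hs
        have hGs := hG s hs
        have hle := le_lm h hd (y := y s) (hsub hs) (by rw [hy s (hsub hs)]; exact hGs)
        rw [hy s (hsub hs)] at hle
        refine le_trans ?_ (mul_le_mul_right (mul_le_mul_right hle _) _)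
        rw [← ENNReal.ofReal_mul (abs_nonneg _), ← ENNReal.ofReal_mul (by positivity)]
        apply ENNReal.ofReal_le_ofReal
        have hJ := h.J_pos s (y s)
        have hab : c ≤ |a2 s (ξ s) - a s (ξ s)| := by
          rcases hgap with hg | hg
          · exact (hg _ _ hGs).trans (le_abs_self _)
          · rw [abs_sub_comm]; exact (hg _ _ hGs).trans (le_abs_self _)
        simp only [y', abs_div, abs_of_pos hJ]
        have e : 1 / c * (|a2 s (ξ s) - a s (ξ s)| / J s (y s) * (|z s (ξ s)| * J s (y s)))
            = |a2 s (ξ s) - a s (ξ s)| / c * |z s (ξ s)| := by field_simp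
        rw [e]
        have : 1 ≤ |a2 s (ξ s) - a s (ξ s)| / c := (one_le_div hc).2 hab
        nlinarith [abs_nonneg (z s (ξ s))]
    _ = ENNReal.ofReal (1 / c) * ∫⁻ x in y '' Icc 0 t', lm T R L X J z g x := by
        rw [hcv, lintegral_const_mul' _ _ ENNReal.ofReal_ne_top]
    _ ≤ ENNReal.ofReal (1 / c) * mass T R L z g := by
        rw [← lint_lm h hd]
        refine mul_le_mul_right ?_ _
        exact setLIntegral_le_lintegral _ _

lemma interact (h : IsFlow T L K a ax X J) (hd : Dens T R L X J z g)
    {a2 ax2 X2 J2 z2 g2 : ℝ → ℝ → ℝ} {K2 : ℝ}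
    (h2 : IsFlow T L K2 a2 ax2 X2 J2) (hd2 : Dens T R L X2 J2 z2 g2) {c : ℝ}
    (hc : 0 < c)
    (hgap : (∀ t x, (t, x) ∈ Gr T R L → c ≤ a2 t x - a t x) ∨
      (∀ t x, (t, x) ∈ Gr T R L → c ≤ a t x - a2 t x)) :
    ∫⁻ t in Icc 0 T, ∫⁻ x, chi T R L t x * ENNReal.ofReal (|z t x| * |z2 t x|) ≤
      ENNReal.ofReal (1 / c) * mass T R L z g * mass T R L z2 g2 := by
  have hm : Measurable (fun p : ℝ × ℝ => chi T R L p.1 (X2 p.1 p.2) *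
      ENNReal.ofReal |z p.1 (X2 p.1 p.2)|) :=
    ((chi_meas T R L).comp (measX h2)).mul
      ((hd.cz.measurable.comp (measX h2)).norm.ennreal_ofReal)
  have hin : ∀ y, ∫⁻ t in Icc 0 T, chi T R L t (X2 t y) * ENNReal.ofReal |z t (X2 t y)| ≤
      ENNReal.ofReal (1 / c) * mass T R L z g := by
    intro y
    let S : Set ℝ := {t | (t, X2 t y) ∈ Gr T R L}
    have hScl : IsClosed S := (Gr_closed T R L).preimage
      (continuous_id.prodMk (h2.cont.comp (continuous_id.prodMk continuous_const)))
    have hSsub : S ⊆ Icc 0 T := fun t ht => ⟨ht.1, ht.2.1⟩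
    rcases S.eq_empty_or_nonempty with hS | hS
    · have : ∀ t, chi T R L t (X2 t y) = 0 := fun t => by
        apply chi_of_notMem
        intro hh
        have : t ∈ S := hh
        rw [hS] at this; exact this
      simp [this]
    · have hcp : IsCompact S := isCompact_Icc.of_isClosed_subset hScl hSsub
      have hts := hcp.sSup_mem hS
      set ts := sSup S
      have hub : ∀ t ∈ S, t ≤ ts := fun t ht => le_csSup hcp.bddAbove ht
      have key := crossing h hd hc hgap (t' := ts) (hSsub hts) (ξ := fun t => X2 t y)
        (fun t ht => (h2.hasDeriv y t ⟨ht.1, ht.2.trans (hSsub hts).2⟩).mono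
          (Icc_subset_Icc le_rfl (hSsub hts).2))
        (fun t ht => Gr_back h2 ht.1 ht.2 hts)
      refine le_trans ?_ key
      rw [← lintegral_indicator measurableSet_Icc, ← lintegral_indicator measurableSet_Icc]
      apply lintegral_mono
      intro t
      by_cases ht : t ∈ S
      · rw [indicator_of_mem (hSsub ht), indicator_of_mem (show t ∈ Icc 0 ts from ⟨(hSsub ht).1, hub t ht⟩),
          chi_of_mem ht, one_mul]
      · have : chi T R L t (X2 t y) = 0 := chi_of_notMem ht
        simp [indicator, this]
  calc ∫⁻ t in Icc 0 T, ∫⁻ x, chi T R L t x * ENNReal.ofReal (|z t x| * |z2 t x|)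
      ≤ ∫⁻ t in Icc 0 T, ∫⁻ y, lm T R L X2 J2 z2 g2 y *
          (chi T R L t (X2 t y) * ENNReal.ofReal |z t (X2 t y)|) := by
        apply setLIntegral_mono' measurableSet_Icc
        intro t ht
        rw [chvar h2 ht]
        apply lintegral_mono
        intro y
        by_cases hG : (t, X2 t y) ∈ Gr T R L
        · simp only
          rw [chi_of_mem hG, one_mul, one_mul]
          have := le_lm h2 hd2 ht hG
          refine le_trans (le_of_eq ?_) (mul_le_mul_left this _)
          rw [← ENNReal.ofReal_mul (h2.J_pos _ _).le,
            ← ENNReal.ofReal_mul (mul_nonneg (abs_nonneg _) (h2.J_pos _ _).le)]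
          congr 1; ring
        · simp [chi_of_notMem hG]
    _ = ∫⁻ y, ∫⁻ t in Icc 0 T, lm T R L X2 J2 z2 g2 y *
          (chi T R L t (X2 t y) * ENNReal.ofReal |z t (X2 t y)|) := by
        rw [lintegral_lintegral_swap]
        exact (((meas_lm h2 hd2).comp measurable_snd).mul hm).aemeasurable
    _ ≤ ∫⁻ y, lm T R L X2 J2 z2 g2 y * (ENNReal.ofReal (1 / c) * mass T R L z g) := by
        apply lintegral_mono
        intro y
        simp only
        have hmy : Measurable (fun t => chi T R L t (X2 t y) * ENNReal.ofReal |z t (X2 t y)|) :=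
          hm.comp (measurable_id.prodMk measurable_const)
        rw [lintegral_const_mul _ hmy]
        gcongr
        exact hin y
    _ = _ := by
        rw [lintegral_mul_const _ (meas_lm h2 hd2), lint_lm h2 hd2, mul_comm]

end

end LS

namespace LS

/-- sum of the absolute values of the components other than the `m`-th -/
def off {n : ℕ} (u : V n) (m : Fin n) : ℝ := ∑ j, if j = m then 0 else |u j|

def h1 {n : ℕ} (u w : V n) : ℝ :=
  ∑ j, ∑ k, if j = k then 0 else (|w j| * |w k| + |u j| * |w k|)

def h2 {n : ℕ} (u : V n) : ℝ := ∑ j, ∑ k, if j = k then 0 else |u j| * |u k|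

def h3 {n : ℕ} (a : ℕ) (u w : V n) : ℝ := ∑ i, |u i| ^ (a + 1) * |w i|

/-- left coefficients -/
def lw {n : ℕ} (l : Fin n → V n → V n) (u p : V n) : V n := fun k => l k u ⬝ᵥ p

/-- Coefficients of the system together with the structural bounds. -/
structure Coef (n a : ℕ) where
  lam : Fin n → V n → ℝ
  l : Fin n → V n → V n
  B : V n → V n
  κ : ℝ
  C : ℝ
  c : ℝ
  L : ℝ
  d : Fin n → ℝ
  κ_pos : 0 < κ
  κ_le : κ ≤ 1
  C_one : 1 ≤ C
  c_pos : 0 < c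
  clam : ∀ i, ContDiff ℝ 1 (lam i)
  cl : ∀ i, ContDiff ℝ 1 (l i)
  cB : ContDiff ℝ 1 B
  hL : ∀ i u, |lam i u| ≤ L
  gap : ∀ i j, i < j → ∀ u, ‖u‖ ≤ κ → c ≤ lam j u - lam i u
  hl : ∀ u, ‖u‖ ≤ κ → ∀ k p, |l k u ⬝ᵥ p| ≤ C * ‖p‖
  hu : ∀ i u p q, ‖u‖ ≤ κ →
    (∀ k, l k u ⬝ᵥ q = l k u ⬝ᵥ B u + (lam i u - lam k u) * (l k u ⬝ᵥ p)) →
    |q i + fderiv ℝ (lam i) u p * u i| ≤ C * (h1 u (lw l u p) + h2 u + h3 a u (lw l u p))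
  hw : ∀ i u p q, ‖u‖ ≤ κ →
    (∀ k, l k u ⬝ᵥ q = l k u ⬝ᵥ B u + (lam i u - lam k u) * (l k u ⬝ᵥ p)) →
    |fderiv ℝ (l i) u q ⬝ᵥ p - fderiv ℝ (l i) u p ⬝ᵥ q + fderiv ℝ (fun v => l i v ⬝ᵥ B v) u p|
      ≤ C * h1 u (lw l u p)
  hq : ∀ i u p q, ‖u‖ ≤ κ →
    (∀ k, l k u ⬝ᵥ q = l k u ⬝ᵥ B u + (lam i u - lam k u) * (l k u ⬝ᵥ p)) →
    |q i| ≤ C * ‖u‖ * (off u i + off (lw l u p) i)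
  hlam : ∀ i u, ‖u‖ ≤ κ → |lam i u - lam i 0 - d i * u i ^ (a + 1)| ≤
    C * (|u i| ^ (a + 2) + off u i)

lemma off_nonneg {n : ℕ} (u : V n) (m : Fin n) : 0 ≤ off u m :=
  Finset.sum_nonneg fun j _ => by split_ifs <;> positivity

lemma le_off {n : ℕ} (u : V n) {j m : Fin n} (h : j ≠ m) : |u j| ≤ off u m := by
  have := Finset.single_le_sum (f := fun j => if j = m then 0 else |u j|)
    (fun j _ => by split_ifs <;> positivity) (Finset.mem_univ j)
  simpa [h, off] using this

lemma h1_nonneg {n : ℕ} (u w : V n) : 0 ≤ h1 u w :=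
  Finset.sum_nonneg fun j _ => Finset.sum_nonneg fun k _ => by split_ifs <;> positivity

lemma h2_nonneg {n : ℕ} (u : V n) : 0 ≤ h2 u :=
  Finset.sum_nonneg fun j _ => Finset.sum_nonneg fun k _ => by split_ifs <;> positivity

lemma h3_nonneg {n a : ℕ} (u w : V n) : 0 ≤ h3 a u w :=
  Finset.sum_nonneg fun j _ => by positivity

lemma norm_sub_axis {n : ℕ} (u : V n) (m : Fin n) : ‖u - u m • eb m‖ ≤ off u m := by
  rw [pi_norm_le_iff_of_nonneg (off_nonneg _ _)]
  intro j
  by_cases h : j = m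
  · subst h; simp [eb, off_nonneg]
  · simpa [eb, h] using le_off u h

lemma off_mul_le_h1 {n : ℕ} (u w : V n) (k : Fin n) : off u k * |w k| ≤ h1 u w := by
  unfold off h1
  rw [Finset.sum_mul]
  apply Finset.sum_le_sum
  intro j _
  have := Finset.single_le_sum (f := fun k => if j = k then 0 else (|w j| * |w k| + |u j| * |w k|))
    (fun j _ => by split_ifs <;> positivity) (Finset.mem_univ k)
  refine le_trans ?_ this
  split_ifs
  · simp
  · nlinarith [abs_nonneg (w j), abs_nonneg (w k)]

lemma w_mul_le_h1 {n : ℕ} (u w : V n) {j k : Fin n} (h : j ≠ k) : |w j| * |w k| ≤ h1 u w := by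
  unfold h1
  have h3 := Finset.single_le_sum
    (f := fun j => ∑ k, if j = k then 0 else (|w j| * |w k| + |u j| * |w k|))
    (fun j _ => Finset.sum_nonneg fun k _ => by split_ifs <;> positivity) (Finset.mem_univ j)
  have := Finset.single_le_sum (f := fun k => if j = k then 0 else (|w j| * |w k| + |u j| * |w k|))
    (fun j _ => by split_ifs <;> positivity) (Finset.mem_univ k)
  simp only [h, if_false] at this h3
  nlinarith [mul_nonneg (abs_nonneg (u j)) (abs_nonneg (w k))]

lemma off_mul_le_h2 {n : ℕ} (u : V n) (k : Fin n) : off u k * |u k| ≤ h2 u := by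
  unfold off h2
  rw [Finset.sum_mul]
  apply Finset.sum_le_sum
  intro j _
  have := Finset.single_le_sum (f := fun k => if j = k then 0 else (|u j| * |u k|))
    (fun j _ => by split_ifs <;> positivity) (Finset.mem_univ k)
  refine le_trans ?_ this
  split_ifs <;> simp

lemma unif {ι : Type*} [Finite ι] (P : ι → ℝ → Prop)
    (mono : ∀ i C C', C ≤ C' → P i C → P i C') (h : ∀ i, ∃ C, P i C) : ∃ C, 1 ≤ C ∧ ∀ i, P i C := by
  choose c hc using h
  obtain ⟨M, hM⟩ := (Set.finite_range c).bddAbove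
  exact ⟨max M 1, le_max_right _ _, fun i =>
    mono i _ _ ((hM ⟨i, rfl⟩).trans (le_max_left _ _)) (hc i)⟩

lemma bd_ball {n : ℕ} {E : Type*} [NormedAddCommGroup E] (F : V n → E)
    (hF : Continuous F) (ρ : ℝ) : ∃ C, 0 ≤ C ∧ ∀ u, ‖u‖ ≤ ρ → ‖F u‖ ≤ C := by
  obtain ⟨C, hC⟩ := (isCompact_closedBall (0 : V n) ρ).exists_bound_of_continuousOn hF.continuousOn
  exact ⟨max C 0, le_max_right _ _, fun u hu => (hC u (by simpa using hu)).trans (le_max_left _ _)⟩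

lemma lip_ball {n : ℕ} {E : Type*} [NormedAddCommGroup E] [NormedSpace ℝ E] (F : V n → E)
    (hF : ContDiff ℝ 1 F) (ρ : ℝ) :
    ∃ C, 0 ≤ C ∧ ∀ u v, ‖u‖ ≤ ρ → ‖v‖ ≤ ρ → ‖F u - F v‖ ≤ C * ‖u - v‖ := by
  obtain ⟨C, h0, hC⟩ := bd_ball (fderiv ℝ F) (hF.continuous_fderiv (by norm_num)) ρ
  refine ⟨C, h0, fun u v hu hv => ?_⟩
  exact Convex.norm_image_sub_le_of_norm_fderiv_le (s := Metric.closedBall (0 : V n) ρ)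
    (fun x _ => (hF.differentiable (by norm_num)) x) (fun x hx => hC x (by simpa using hx))
    (convex_closedBall _ _) (by simpa using hv) (by simpa using hu)

lemma norm_eb {n : ℕ} (m : Fin n) (s : ℝ) : ‖s • (eb m : V n)‖ = |s| := by
  rw [norm_smul, eb, Pi.norm_single]; simp

lemma axis_lip {n : ℕ} {E : Type*} [NormedAddCommGroup E] [NormedSpace ℝ E] (F : V n → E)
    (hF : ContDiff ℝ 1 F) {κ : ℝ} (m : Fin n) (h0 : ∀ s, |s| ≤ κ → F (s • eb m) = 0) :
    ∃ C, 0 ≤ C ∧ ∀ u, ‖u‖ ≤ κ → ‖F u‖ ≤ C * off u m := by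
  obtain ⟨C, hC0, hC⟩ := lip_ball F hF κ
  refine ⟨C, hC0, fun u hu => ?_⟩
  have h1 : |u m| ≤ κ := (norm_le_pi_norm u m).trans hu
  have := hC u (u m • eb m) hu (by rwa [norm_eb])
  rw [h0 _ h1, sub_zero] at this
  exact this.trans (mul_le_mul_of_nonneg_left (norm_sub_axis u m) hC0)

lemma taylor0 (a : ℕ) : ∀ (φ : ℝ → ℝ), ContDiff ℝ (⊤ : ℕ∞) φ →
    (∀ k < a, iteratedDeriv k φ 0 = 0) → ∀ κ : ℝ, ∃ C, 0 ≤ C ∧ ∀ s, |s| ≤ κ → |φ s| ≤ C * |s| ^ a := by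
  induction a with
  | zero =>
    intro φ hφ _ κ
    obtain ⟨C, hC⟩ := (isCompact_Icc (a := -κ) (b := κ)).exists_bound_of_continuousOn
      hφ.continuous.continuousOn
    exact ⟨max C 0, le_max_right _ _, fun s hs => by
      simpa using Or.inl (hC s (abs_le.1 hs))⟩
  | succ a ih =>
    intro φ hφ h0 κ
    have hφ' : ContDiff ℝ (⊤ : ℕ∞) (deriv φ) := by
      have := (contDiff_infty_iff_deriv (𝕜 := ℝ) (f := φ)).1 hφ
      exact this.2
    obtain ⟨C, hC0, hC⟩ := ih (deriv φ) hφ' (fun k hk => by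
      have := h0 (k + 1) (by omega)
      rwa [iteratedDeriv_succ'] at this) κ
    refine ⟨C, hC0, fun s hs => ?_⟩
    have hz : φ 0 = 0 := by simpa using h0 0 (by omega)
    have := Convex.norm_image_sub_le_of_norm_deriv_le (f := φ) (C := C * |s| ^ a)
      (s := Metric.closedBall (0 : ℝ) |s|) (x := 0) (y := s)
      (fun x _ => (hφ.differentiable (by simp)) x)
      (fun x hx => by
        have hx' : |x| ≤ |s| := by simpa using hx
        refine (hC x (hx'.trans hs)).trans ?_
        gcongr) (convex_closedBall _ _) (by simp) (by simp)
    rw [hz, sub_zero, sub_zero] at this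
    simpa [pow_succ, mul_assoc] using this

lemma quad_B {n : ℕ} (B : V n → V n) (hB : ContDiff ℝ 2 B) {κ : ℝ} (hκ : 0 < κ)
    (h0 : ∀ m : Fin n, ∀ s, |s| ≤ κ → B (s • eb m) = 0) :
    ∃ C, 0 ≤ C ∧ ∀ u, ‖u‖ ≤ κ → ‖B u‖ ≤ C * h2 u ∧ ‖B u‖ ≤ C * ‖u‖ * ‖u‖ ∧
      ∀ m, ‖B u‖ ≤ C * ‖u‖ * off u m := by
  have hD : ContDiff ℝ 1 (fderiv ℝ B) := hB.fderiv_right (by norm_num)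
  have hd : Differentiable ℝ B := hB.differentiable (by norm_num)
  obtain ⟨C, hC0, hC⟩ := lip_ball _ hD κ
  have hD0 : fderiv ℝ B 0 = 0 := by
    apply ContinuousLinearMap.coe_injective
    refine (Pi.basisFun ℝ (Fin n)).ext fun m => ?_
    have h1 : HasDerivAt (fun s : ℝ => B (s • eb m)) (fderiv ℝ B 0 (eb m)) 0 := by
      have h2 : HasDerivAt (fun s : ℝ => s • (eb m : V n)) (eb m) 0 := by
        simpa using (hasDerivAt_id (0:ℝ)).smul_const (eb m : V n)
      have h3 := (hd ((0:ℝ) • eb m)).hasFDerivAt.comp_hasDerivAt (0:ℝ) h2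
      rw [zero_smul] at h3
      exact h3
    have h2 : (fun s : ℝ => B (s • eb m)) =ᶠ[𝓝 0] fun _ => 0 := by
      filter_upwards [Metric.ball_mem_nhds (0:ℝ) hκ] with s hs
      exact h0 m s (by simpa using (mem_ball_zero_iff.1 hs).le)
    have h3 := (h2.hasDerivAt_iff.1 h1).unique (hasDerivAt_const _ _)
    simpa [eb] using h3
  have key : ∀ u, ‖u‖ ≤ κ → ∀ m, ‖B u‖ ≤ C * ‖u‖ * off u m := by
    intro u hu m
    have h1 : |u m| ≤ ‖u‖ := norm_le_pi_norm u m
    have := Convex.norm_image_sub_le_of_norm_fderiv_le (f := B) (C := C * ‖u‖) (𝕜 := ℝ)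
      (s := Metric.closedBall (0 : V n) ‖u‖) (x := u m • eb m) (y := u)
      (fun x _ => hd x) (fun x hx => by
        have hx' : ‖x‖ ≤ ‖u‖ := by simpa using hx
        have := hC x 0 (hx'.trans hu) (by simpa using hκ.le)
        rw [hD0, sub_zero, sub_zero] at this
        exact this.trans (mul_le_mul_of_nonneg_left hx' hC0))
      (convex_closedBall _ _) (by simpa [norm_eb] using h1) (by simp)
    rw [h0 m _ (h1.trans hu), sub_zero] at this
    exact this.trans (mul_le_mul_of_nonneg_left (norm_sub_axis u m) (by positivity))
  refine ⟨C, hC0, fun u hu => ⟨?_, ?_, key u hu⟩⟩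
  · rcases isEmpty_or_nonempty (Fin n) with he | he
    · have : B u = 0 := Subsingleton.elim _ _
      rw [this, norm_zero]; exact mul_nonneg hC0 (h2_nonneg _)
    obtain ⟨m, hm⟩ := Finite.exists_max (fun j => ‖u j‖)
    have h4 : ‖u‖ = |u m| := le_antisymm
      ((pi_norm_le_iff_of_nonneg (norm_nonneg _)).2 hm) (norm_le_pi_norm u m)
    refine (key u hu m).trans ?_
    rw [mul_assoc]
    refine mul_le_mul_of_nonneg_left ?_ hC0
    rw [h4, mul_comm]; exact off_mul_le_h2 u m
  · have := hd
    have h5 := Convex.norm_image_sub_le_of_norm_fderiv_le (f := B) (C := C * ‖u‖) (𝕜 := ℝ)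
      (s := Metric.closedBall (0 : V n) ‖u‖) (x := 0) (y := u)
      (fun x _ => hd x) (fun x hx => by
        have hx' : ‖x‖ ≤ ‖u‖ := by simpa using hx
        have := hC x 0 (hx'.trans hu) (by simpa using hκ.le)
        rw [hD0, sub_zero, sub_zero] at this
        exact this.trans (mul_le_mul_of_nonneg_left hx' hC0))
      (convex_closedBall _ _) (by simp) (by simp)
    rcases isEmpty_or_nonempty (Fin n) with he | ⟨⟨m⟩⟩
    · have : B u = 0 := Subsingleton.elim _ _
      rw [this, norm_zero]; positivity
    have h6 := h0 m 0 (by simpa using hκ.le)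
    rw [zero_smul] at h6
    simpa [h6] using h5

end LS

namespace LS

lemma two_le_top : (1 : WithTop ℕ∞) + 1 ≤ ((⊤ : ℕ∞) : WithTop ℕ∞) := by
  have : (1 : WithTop ℕ∞) + 1 = ((2 : ℕ∞) : WithTop ℕ∞) := by norm_num
  rw [this]
  exact_mod_cast le_top

lemma eb_self {n : ℕ} (k : Fin n) : (eb k : V n) k = 1 := by simp [eb]

lemma eb_ne {n : ℕ} {i k : Fin n} (h : i ≠ k) : (eb k : V n) i = 0 := by simp [eb, h]

lemma taylor1 (b : ℕ) : ∀ (φ : ℝ → ℝ), ContDiff ℝ (⊤ : ℕ∞) φ →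
    (∀ k < b, iteratedDeriv k φ 0 = 0) → ∀ κ : ℝ, ∃ C, 0 ≤ C ∧ ∀ s, |s| ≤ κ →
      |φ s - iteratedDeriv b φ 0 / (Nat.factorial b : ℝ) * s ^ b| ≤ C * |s| ^ (b + 1) := by
  induction b with
  | zero =>
    intro φ hφ _ κ
    have hφ' : ContDiff ℝ (⊤ : ℕ∞) (deriv φ) := ((contDiff_infty_iff_deriv (𝕜 := ℝ) (f := φ)).1 hφ).2
    obtain ⟨C, hC⟩ := (isCompact_closedBall (0:ℝ) κ).exists_bound_of_continuousOn
      hφ'.continuous.continuousOn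
    refine ⟨max C 0, le_max_right _ _, fun s hs => ?_⟩
    have := Convex.norm_image_sub_le_of_norm_deriv_le (f := φ) (C := C)
      (s := Metric.closedBall (0 : ℝ) κ) (x := 0) (y := s)
      (fun x _ => (hφ.differentiable (by simp)) x)
      hC (convex_closedBall _ _) (by simpa using (abs_nonneg s).trans hs) (by simpa using hs)
    simp only [iteratedDeriv_zero, Nat.factorial_zero, Nat.cast_one, div_one, pow_zero, mul_one,
      zero_add, pow_one]
    refine le_trans (by simpa using this) ?_
    gcongr
    exact le_max_left _ _
  | succ b ih =>
    intro φ hφ h0 κ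
    have hφ' : ContDiff ℝ (⊤ : ℕ∞) (deriv φ) := ((contDiff_infty_iff_deriv (𝕜 := ℝ) (f := φ)).1 hφ).2
    obtain ⟨C, hC0, hC⟩ := ih (deriv φ) hφ' (fun k hk => by
      have := h0 (k + 1) (by omega)
      rwa [iteratedDeriv_succ'] at this) κ
    refine ⟨C, hC0, fun s hs => ?_⟩
    have hz : φ 0 = 0 := by simpa using h0 0 (by omega)
    rw [iteratedDeriv_succ']
    set D := iteratedDeriv b (deriv φ) 0
    have hder : ∀ x : ℝ, HasDerivAt (fun x => φ x - D / (Nat.factorial (b + 1) : ℝ) * x ^ (b + 1))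
        (deriv φ x - D / (Nat.factorial b : ℝ) * x ^ b) x := by
      intro x
      have h1 : HasDerivAt φ (deriv φ x) x := (hφ.differentiable (by simp) x).hasDerivAt
      have h2 := (hasDerivAt_pow (b + 1) x).const_mul (D / (Nat.factorial (b + 1) : ℝ))
      refine (h1.sub h2).congr_deriv ?_
      rw [Nat.factorial_succ]
      have : (Nat.factorial b : ℝ) ≠ 0 := by positivity
      have : ((b : ℝ) + 1) ≠ 0 := by positivity
      push_cast
      field_simp
    have := Convex.norm_image_sub_le_of_norm_hasDerivWithin_le
      (f := fun x => φ x - D / (Nat.factorial (b + 1) : ℝ) * x ^ (b + 1)) (C := C * |s| ^ (b + 1))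
      (s := Metric.closedBall (0 : ℝ) |s|) (x := 0) (y := s)
      (fun x _ => (hder x).hasDerivWithinAt)
      (fun x hx => by
        have hx' : |x| ≤ |s| := by simpa using hx
        refine (hC x (hx'.trans hs)).trans ?_
        gcongr) (convex_closedBall _ _) (by simp) (by simp)
    simpa [hz, pow_succ, mul_assoc] using this

lemma contDiff_dot {n : ℕ} {E : Type*} [NormedAddCommGroup E] [NormedSpace ℝ E] {k : WithTop ℕ∞}
    {f g : E → V n} (hf : ContDiff ℝ k f) (hg : ContDiff ℝ k g) :
    ContDiff ℝ k (fun u => f u ⬝ᵥ g u) := by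
  simp only [dotProduct]
  exact ContDiff.sum fun i _ => (contDiff_pi.1 hf i).mul (contDiff_pi.1 hg i)

section
variable {n : ℕ} {lam : Fin n → V n → ℝ} {l r : Fin n → V n → V n} {B : V n → V n} {κ : ℝ} {a : ℕ}

lemma compl_of_dual {l r : Fin n → V n} (h : ∀ i j, l i ⬝ᵥ r j = if i = j then 1 else 0) (v : V n) :
    ∑ k, (l k ⬝ᵥ v) • r k = v := by
  have h1 : (Matrix.of l) * (Matrix.of r)ᵀ = 1 := by
    ext i j
    rw [Matrix.mul_apply, Matrix.one_apply, ← h i j]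
    rfl
  have h2 := mul_eq_one_comm.1 h1
  have h3 : (Matrix.of r)ᵀ *ᵥ ((Matrix.of l) *ᵥ v) = v := by
    rw [Matrix.mulVec_mulVec, h2, Matrix.one_mulVec]
  refine Eq.trans ?_ h3
  ext j
  simp only [Finset.sum_apply, Pi.smul_apply, smul_eq_mul, Matrix.mulVec, dotProduct,
    Matrix.transpose_apply, Matrix.of_apply]
  exact Finset.sum_congr rfl fun k _ => mul_comm _ _

lemma axis_deriv {E : Type*} [NormedAddCommGroup E] [NormedSpace ℝ E] {f : V n → E}
    (hf : Differentiable ℝ f) (m : Fin n) (s : ℝ) :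
    HasDerivAt (fun s : ℝ => f (s • eb m)) (fderiv ℝ f (s • eb m) (eb m)) s := by
  have h2 : HasDerivAt (fun s : ℝ => s • (eb m : V n)) (eb m) s := by
    simpa using (hasDerivAt_id s).smul_const (eb m : V n)
  exact (hf (s • eb m)).hasFDerivAt.comp_hasDerivAt s h2

/-- coefficient of `w_k` in the equation of `u_i` -/
lemma bdF (hlam : ∀ i, ContDiff ℝ (⊤ : ℕ∞) (lam i)) (hr : ∀ i, ContDiff ℝ (⊤ : ℕ∞) (r i))
    (hrn : ∀ i s, |s| ≤ κ → r i (s • eb i) = eb i)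
    (hax : ∀ i k, 1 ≤ k → k ≤ a → iteratedDeriv k (fun s : ℝ => lam i (s • eb i)) 0 = 0) (i k : Fin n) :
    ∃ C, 0 ≤ C ∧ ∀ u, ‖u‖ ≤ κ →
      |(lam i u - lam k u) * r k u i + fderiv ℝ (lam i) u (r k u) * u i| ≤
        C * (off u k + if k = i then |u i| ^ (a + 1) else 0) := by
  have hD : ContDiff ℝ 1 (fderiv ℝ (lam i)) := (hlam i).fderiv_right two_le_top
  have hl1 : ∀ i, ContDiff ℝ 1 (lam i) := fun i => (hlam i).of_le (by exact_mod_cast le_top)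
  have hr1 : ∀ i, ContDiff ℝ 1 (r i) := fun i => (hr i).of_le (by exact_mod_cast le_top)
  have hcoord : ∀ i : Fin n, ContDiff ℝ 1 (fun u : V n => u i) := fun i => contDiff_apply _ _ i
  by_cases hk : k = i
  · subst hk
    have hg : ContDiff ℝ (⊤ : ℕ∞) (fun s : ℝ => lam k (s • eb k)) :=
      (hlam k).comp (contDiff_id.smul contDiff_const)
    have hgd : deriv (fun s : ℝ => lam k (s • eb k)) = fun s => fderiv ℝ (lam k) (s • eb k) (eb k) :=
      funext fun s => (axis_deriv ((hlam k).differentiable (by simp)) k s).deriv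
    have hg' := ((contDiff_infty_iff_deriv (𝕜 := ℝ) (f := fun s : ℝ => lam k (s • eb k))).1 hg).2
    obtain ⟨C1, hC1, h1⟩ := taylor0 a (deriv (fun s : ℝ => lam k (s • eb k))) hg' (fun j hj => by
      have := hax k (j + 1) (by omega) (by omega)
      rwa [iteratedDeriv_succ'] at this) κ
    have hsm : ContDiff ℝ 1 (fun u : V n => u k • (eb k : V n)) := (hcoord k).smul contDiff_const
    obtain ⟨C2, hC2, h2⟩ := axis_lip (κ := κ)
      (fun u => fderiv ℝ (lam k) u (r k u) * u k - fderiv ℝ (lam k) (u k • eb k) (eb k) * u k)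
      ((((hD.clm_apply (hr1 k)).mul (hcoord k))).sub
        (((hD.comp hsm).clm_apply contDiff_const).mul (hcoord k))) k (by
        intro s hs
        simp [hrn k s hs, eb_self])
    refine ⟨max C1 C2, by positivity, fun u hu => ?_⟩
    have h3 := h1 (u k) ((norm_le_pi_norm u k).trans hu)
    rw [hgd] at h3
    have h4 := h2 u hu
    simp only [sub_self, zero_mul, zero_add, if_true]
    have h5 : fderiv ℝ (lam k) u (r k u) * u k =
      (fderiv ℝ (lam k) u (r k u) * u k - fderiv ℝ (lam k) (u k • eb k) (eb k) * u k) +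
        fderiv ℝ (lam k) (u k • eb k) (eb k) * u k := by ring
    rw [h5]
    refine (abs_add_le _ _).trans ?_
    rw [mul_add]
    refine add_le_add ?_ ?_
    · exact h4.trans (mul_le_mul_of_nonneg_right (le_max_right _ _) (off_nonneg _ _))
    · rw [abs_mul, pow_succ, ← mul_assoc]
      refine mul_le_mul_of_nonneg_right (h3.trans ?_) (abs_nonneg _)
      exact mul_le_mul_of_nonneg_right (le_max_left _ _) (by positivity)
  · obtain ⟨C2, hC2, h2⟩ := axis_lip (κ := κ)
      (fun u => (lam i u - lam k u) * r k u i + fderiv ℝ (lam i) u (r k u) * u i)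
      ((((hl1 i).sub (hl1 k)).mul (contDiff_pi.1 (hr1 k) i)).add
        ((hD.clm_apply (hr1 k)).mul (hcoord i))) k (by
        intro s hs
        have : i ≠ k := fun h => hk h.symm
        simp [hrn k s hs, eb_ne this])
    refine ⟨C2, hC2, fun u hu => ?_⟩
    simpa [hk] using h2 u hu

/-- coefficient of `w_m` in the equation of `w_i` -/
lemma bdE (hl : ∀ i, ContDiff ℝ (⊤ : ℕ∞) (l i)) (hr : ∀ i, ContDiff ℝ (⊤ : ℕ∞) (r i))
    (hB : ContDiff ℝ (⊤ : ℕ∞) B) (hκ : 0 < κ)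
    (hrn : ∀ i s, |s| ≤ κ → r i (s • eb i) = eb i)
    (hB0 : ∀ (m : Fin n) (s : ℝ), |s| ≤ 2 * κ → B (s • eb m) = 0) (i m : Fin n) :
    ∃ C, 0 ≤ C ∧ ∀ u, ‖u‖ ≤ κ →
      |fderiv ℝ (l i) u (B u) ⬝ᵥ r m u - fderiv ℝ (l i) u (r m u) ⬝ᵥ B u +
        fderiv ℝ (fun v => l i v ⬝ᵥ B v) u (r m u)| ≤ C * off u m := by
  have hD : ContDiff ℝ 1 (fderiv ℝ (l i)) := (hl i).fderiv_right two_le_top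
  have hb : ContDiff ℝ (⊤ : ℕ∞) (fun v => l i v ⬝ᵥ B v) := contDiff_dot (hl i) hB
  have hDb : ContDiff ℝ 1 (fderiv ℝ (fun v => l i v ⬝ᵥ B v)) :=
    hb.fderiv_right two_le_top
  have hB1 : ContDiff ℝ 1 B := hB.of_le (by exact_mod_cast le_top)
  have hr1 : ∀ i, ContDiff ℝ 1 (r i) := fun i => (hr i).of_le (by exact_mod_cast le_top)
  refine axis_lip (κ := κ) _
    (((contDiff_dot (hD.clm_apply hB1) (hr1 m)).sub
      (contDiff_dot (hD.clm_apply (hr1 m)) hB1)).add (hDb.clm_apply (hr1 m))) m ?_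
  intro s hs
  have h1 := axis_deriv (hb.differentiable (by simp)) m s
  have h2 : (fun s : ℝ => l i (s • eb m) ⬝ᵥ B (s • eb m)) =ᶠ[𝓝 s] fun _ => 0 := by
    have : {s : ℝ | |s| < 2 * κ} ∈ 𝓝 s := (isOpen_lt (by fun_prop) (by fun_prop)).mem_nhds
      (show |s| < 2 * κ by linarith)
    filter_upwards [this] with s hs
    rw [hB0 m s (le_of_lt hs), dotProduct_zero]
  have h3 := (h2.hasDerivAt_iff.1 h1).unique (hasDerivAt_const _ _)
  simp only [hrn m s hs, hB0 m s (by linarith), h3]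
  simp

end

end LS

namespace LS

section
variable {n : ℕ} {lam : Fin n → V n → ℝ} {l r : Fin n → V n → V n} {B : V n → V n} {κ : ℝ} {a : ℕ}

/-- expansion of a solution of the characteristic relations -/
lemma q_eq {u p q : V n} {i : Fin n} (hd : ∀ i j, l i u ⬝ᵥ r j u = if i = j then 1 else 0)
    (hq : ∀ k, l k u ⬝ᵥ q = l k u ⬝ᵥ B u + (lam i u - lam k u) * (l k u ⬝ᵥ p)) :
    q = B u + ∑ k, ((lam i u - lam k u) * lw l u p k) • r k u := by
  conv_lhs => rw [← compl_of_dual (l := fun k => l k u) (r := fun k => r k u) hd q]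
  simp only [hq, add_smul, Finset.sum_add_distrib]
  rw [compl_of_dual (l := fun k => l k u) (r := fun k => r k u) hd (B u)]
  rfl

lemma p_eq {u : V n} (hd : ∀ i j, l i u ⬝ᵥ r j u = if i = j then 1 else 0) (p : V n) :
    p = ∑ k, lw l u p k • r k u :=
  (compl_of_dual (l := fun k => l k u) (r := fun k => r k u) hd p).symm

lemma mk_hu (hlam : ∀ i, ContDiff ℝ (⊤ : ℕ∞) (lam i))
    (hr : ∀ i, ContDiff ℝ (⊤ : ℕ∞) (r i)) (hB : ContDiff ℝ (⊤ : ℕ∞) B) (hκ : 0 < κ)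
    (hdual : ∀ u, ‖u‖ ≤ κ → ∀ i j, l i u ⬝ᵥ r j u = if i = j then 1 else 0)
    (hrn : ∀ i s, |s| ≤ κ → r i (s • eb i) = eb i)
    (hB0 : ∀ (m : Fin n) (s : ℝ), |s| ≤ 2 * κ → B (s • eb m) = 0)
    (hax : ∀ i k, 1 ≤ k → k ≤ a → iteratedDeriv k (fun s : ℝ => lam i (s • eb i)) 0 = 0) :
    ∃ C, 0 ≤ C ∧ ∀ i u p q, ‖u‖ ≤ κ →
    (∀ k, l k u ⬝ᵥ q = l k u ⬝ᵥ B u + (lam i u - lam k u) * (l k u ⬝ᵥ p)) →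
    |q i + fderiv ℝ (lam i) u p * u i| ≤ C * (h1 u (lw l u p) + h2 u + h3 a u (lw l u p)) := by
  obtain ⟨CB, hCB0, hCB⟩ := quad_B B (hB.of_le (by simpa [one_add_one_eq_two] using two_le_top)) hκ
    (fun m s hs => hB0 m s (by linarith))
  choose CF hCF0 hCF using bdF (κ := κ) (a := a) hlam hr hrn hax
  set Cs := ∑ i, ∑ k, CF i k
  have hCs : ∀ i k, CF i k ≤ Cs := fun i k =>
    (Finset.single_le_sum (f := fun k => CF i k) (fun k _ => hCF0 i k) (Finset.mem_univ k)).trans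
    (Finset.single_le_sum (f := fun i => ∑ k, CF i k)
      (fun i _ => Finset.sum_nonneg fun k _ => hCF0 i k) (Finset.mem_univ i))
  have hCs0 : 0 ≤ Cs := Finset.sum_nonneg fun i _ => Finset.sum_nonneg fun k _ => hCF0 i k
  refine ⟨CB + (n : ℝ) * Cs, by positivity, fun i u p q hu hq => ?_⟩
  set w := lw l u p with hw
  have e1 : q i + fderiv ℝ (lam i) u p * u i = B u i + ∑ k, w k *
      ((lam i u - lam k u) * r k u i + fderiv ℝ (lam i) u (r k u) * u i) := by
    rw [congrFun (q_eq (hdual u hu) hq) i]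
    conv_lhs => rw [p_eq (hdual u hu) p]
    simp only [map_sum, map_smul, Pi.add_apply, Finset.sum_apply, Pi.smul_apply, smul_eq_mul,
      Finset.sum_mul, add_assoc, ← Finset.sum_add_distrib]
    congr 1
    refine Finset.sum_congr rfl fun k _ => ?_
    rw [← p_eq (hdual u hu) p]; ring
  rw [e1]
  have hh1 := h1_nonneg u w
  have hh2 := h2_nonneg u
  have hh3 := h3_nonneg (a := a) u w
  have b1 : |B u i| ≤ CB * h2 u := (norm_le_pi_norm (B u) i).trans (hCB u hu).1
  have b2 : ∀ k, |w k * ((lam i u - lam k u) * r k u i + fderiv ℝ (lam i) u (r k u) * u i)| ≤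
      Cs * (h1 u w + h3 a u w) := by
    intro k
    rw [abs_mul]
    have h4 := hCF i k u hu
    have h5 : off u k * |w k| ≤ h1 u w := off_mul_le_h1 u w k
    have h6 : (if k = i then |u i| ^ (a + 1) else 0) * |w k| ≤ h3 a u w := by
      split_ifs with hk
      · subst hk
        exact Finset.single_le_sum (f := fun i => |u i| ^ (a + 1) * |w i|)
          (fun i _ => by positivity) (Finset.mem_univ k)
      · simpa using hh3
    have h7 : (0:ℝ) ≤ (if k = i then |u i| ^ (a + 1) else 0) := by split_ifs <;> positivity
    calc _ ≤ |w k| * (Cs * (off u k + if k = i then |u i| ^ (a + 1) else 0)) := by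
          refine mul_le_mul_of_nonneg_left (h4.trans ?_) (abs_nonneg _)
          exact mul_le_mul_of_nonneg_right (hCs i k) (add_nonneg (off_nonneg _ _) h7)
      _ = Cs * (off u k * |w k| + (if k = i then |u i| ^ (a + 1) else 0) * |w k|) := by ring
      _ ≤ _ := by gcongr
  calc _ ≤ |B u i| + ∑ k, |w k * ((lam i u - lam k u) * r k u i +
        fderiv ℝ (lam i) u (r k u) * u i)| :=
        (abs_add_le _ _).trans (add_le_add le_rfl (Finset.abs_sum_le_sum_abs _ _))
    _ ≤ CB * h2 u + ∑ k : Fin n, Cs * (h1 u w + h3 a u w) :=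
        add_le_add b1 (Finset.sum_le_sum fun k _ => b2 k)
    _ = CB * h2 u + (n : ℝ) * Cs * (h1 u w + h3 a u w) := by simp [mul_assoc]
    _ ≤ _ := by
        have : 0 ≤ (n : ℝ) * Cs := by positivity
        nlinarith [mul_nonneg hCB0 hh1, mul_nonneg hCB0 hh3, mul_nonneg this hh2]

lemma mk_hq (hlam : ∀ i, ContDiff ℝ (⊤ : ℕ∞) (lam i))
    (hr : ∀ i, ContDiff ℝ (⊤ : ℕ∞) (r i)) (hB : ContDiff ℝ (⊤ : ℕ∞) B) (hκ : 0 < κ)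
    (hdual : ∀ u, ‖u‖ ≤ κ → ∀ i j, l i u ⬝ᵥ r j u = if i = j then 1 else 0)
    (hrn : ∀ i s, |s| ≤ κ → r i (s • eb i) = eb i)
    (hB0 : ∀ (m : Fin n) (s : ℝ), |s| ≤ 2 * κ → B (s • eb m) = 0) :
    ∃ C, 0 ≤ C ∧ ∀ i u p q, ‖u‖ ≤ κ →
    (∀ k, l k u ⬝ᵥ q = l k u ⬝ᵥ B u + (lam i u - lam k u) * (l k u ⬝ᵥ p)) →
    |q i| ≤ C * ‖u‖ * (off u i + off (lw l u p) i) := by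
  obtain ⟨CB, hCB0, hCB⟩ := quad_B B (hB.of_le (by simpa [one_add_one_eq_two] using two_le_top)) hκ
    (fun m s hs => hB0 m s (by linarith))
  have hl1 : ∀ i, ContDiff ℝ 1 (lam i) := fun i => (hlam i).of_le (by exact_mod_cast le_top)
  have hr1 : ∀ i, ContDiff ℝ 1 (r i) := fun i => (hr i).of_le (by exact_mod_cast le_top)
  choose CF hCF0 hCF using fun i k => lip_ball (fun u => (lam i u - lam k u) * r k u i)
    (((hl1 i).sub (hl1 k)).mul (contDiff_pi.1 (hr1 k) i)) κ
  set Cs := ∑ i, ∑ k, CF i k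
  have hCs : ∀ i k, CF i k ≤ Cs := fun i k =>
    (Finset.single_le_sum (f := fun k => CF i k) (fun k _ => hCF0 i k) (Finset.mem_univ k)).trans
    (Finset.single_le_sum (f := fun i => ∑ k, CF i k)
      (fun i _ => Finset.sum_nonneg fun k _ => hCF0 i k) (Finset.mem_univ i))
  have hCs0 : 0 ≤ Cs := Finset.sum_nonneg fun i _ => Finset.sum_nonneg fun k _ => hCF0 i k
  refine ⟨CB + Cs, by positivity, fun i u p q hu hq => ?_⟩
  set w := lw l u p with hw
  have e1 : q i = B u i + ∑ k, w k * ((lam i u - lam k u) * r k u i) := by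
    rw [congrFun (q_eq (hdual u hu) hq) i]
    simp only [Pi.add_apply, Finset.sum_apply, Pi.smul_apply, smul_eq_mul]
    congr 1
    exact Finset.sum_congr rfl fun k _ => by ring
  rw [e1]
  have b1 : |B u i| ≤ CB * ‖u‖ * off u i := (norm_le_pi_norm (B u) i).trans ((hCB u hu).2.2 i)
  have b2 : ∀ k, |w k * ((lam i u - lam k u) * r k u i)| ≤
      Cs * ‖u‖ * (if k = i then 0 else |w k|) := by
    intro k
    split_ifs with hk
    · subst hk; simp
    · have h4 := hCF i k u 0 hu (by simpa using hκ.le)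
      have h5 : r k (0 : V n) i = 0 := by
        have := hrn k 0 (by simpa using hκ.le)
        rw [zero_smul] at this
        rw [this]; exact eb_ne (fun h => hk h.symm)
      rw [h5, mul_zero, sub_zero, sub_zero] at h4
      rw [abs_mul, mul_comm]
      refine mul_le_mul_of_nonneg_right (h4.trans ?_) (abs_nonneg _)
      exact mul_le_mul_of_nonneg_right (hCs i k) (norm_nonneg _)
  calc _ ≤ |B u i| + ∑ k, |w k * ((lam i u - lam k u) * r k u i)| :=
        (abs_add_le _ _).trans (add_le_add le_rfl (Finset.abs_sum_le_sum_abs _ _))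
    _ ≤ CB * ‖u‖ * off u i + ∑ k : Fin n, Cs * ‖u‖ * (if k = i then 0 else |w k|) :=
        add_le_add b1 (Finset.sum_le_sum fun k _ => b2 k)
    _ = CB * ‖u‖ * off u i + Cs * ‖u‖ * off w i := by rw [← Finset.mul_sum]; rfl
    _ ≤ _ := by
        have := off_nonneg u i
        have := off_nonneg w i
        have h1 : 0 ≤ CB * ‖u‖ * off w i := by positivity
        have h2 : 0 ≤ Cs * ‖u‖ * off u i := by positivity
        nlinarith

lemma mk_hw (hlam : ∀ i, ContDiff ℝ (⊤ : ℕ∞) (lam i)) (hl : ∀ i, ContDiff ℝ (⊤ : ℕ∞) (l i))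
    (hr : ∀ i, ContDiff ℝ (⊤ : ℕ∞) (r i)) (hB : ContDiff ℝ (⊤ : ℕ∞) B) (hκ : 0 < κ)
    (hdual : ∀ u, ‖u‖ ≤ κ → ∀ i j, l i u ⬝ᵥ r j u = if i = j then 1 else 0)
    (hrn : ∀ i s, |s| ≤ κ → r i (s • eb i) = eb i)
    (hB0 : ∀ (m : Fin n) (s : ℝ), |s| ≤ 2 * κ → B (s • eb m) = 0) :
    ∃ C, 0 ≤ C ∧ ∀ i u p q, ‖u‖ ≤ κ →
    (∀ k, l k u ⬝ᵥ q = l k u ⬝ᵥ B u + (lam i u - lam k u) * (l k u ⬝ᵥ p)) →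
    |fderiv ℝ (l i) u q ⬝ᵥ p - fderiv ℝ (l i) u p ⬝ᵥ q + fderiv ℝ (fun v => l i v ⬝ᵥ B v) u p|
      ≤ C * h1 u (lw l u p) := by
  have hl1 : ∀ i, Continuous (fderiv ℝ (l i)) := fun i => (hl i).continuous_fderiv (by simp)
  choose CE hCE0 hCE using bdE (κ := κ) hl hr hB hκ hrn hB0
  choose CO hCO0 hCO using fun (i : Fin n) (km : Fin n × Fin n) => bd_ball (fun u =>
    (lam i u - lam km.1 u) * (fderiv ℝ (l i) u (r km.1 u) ⬝ᵥ r km.2 u -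
      fderiv ℝ (l i) u (r km.2 u) ⬝ᵥ r km.1 u)) (by
      have h1 : ∀ k, Continuous (fun u => fderiv ℝ (l i) u (r k u)) := fun k =>
        (hl1 i).clm_apply (hr k).continuous
      exact ((hlam i).continuous.sub (hlam _).continuous).mul
        (((h1 _).dotProduct (hr _).continuous).sub ((h1 _).dotProduct (hr _).continuous))) κ
  set Cs := ∑ i, ∑ k, CE i k
  have hCs : ∀ i k, CE i k ≤ Cs := fun i k =>
    (Finset.single_le_sum (f := fun k => CE i k) (fun k _ => hCE0 i k) (Finset.mem_univ k)).trans
    (Finset.single_le_sum (f := fun i => ∑ k, CE i k)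
      (fun i _ => Finset.sum_nonneg fun k _ => hCE0 i k) (Finset.mem_univ i))
  have hCs0 : 0 ≤ Cs := Finset.sum_nonneg fun i _ => Finset.sum_nonneg fun k _ => hCE0 i k
  set Ct := ∑ i, ∑ k, CO i k
  have hCt : ∀ i k, CO i k ≤ Ct := fun i k =>
    (Finset.single_le_sum (f := fun k => CO i k) (fun k _ => hCO0 i k) (Finset.mem_univ k)).trans
    (Finset.single_le_sum (f := fun i => ∑ k, CO i k)
      (fun i _ => Finset.sum_nonneg fun k _ => hCO0 i k) (Finset.mem_univ i))
  have hCt0 : 0 ≤ Ct := Finset.sum_nonneg fun i _ => Finset.sum_nonneg fun k _ => hCO0 i k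
  refine ⟨n * Cs + n * (n * Ct), by positivity, fun i u p q hu hq => ?_⟩
  set w := lw l u p with hw
  have e1 : fderiv ℝ (l i) u q ⬝ᵥ p - fderiv ℝ (l i) u p ⬝ᵥ q +
      fderiv ℝ (fun v => l i v ⬝ᵥ B v) u p =
      ∑ m, w m * (fderiv ℝ (l i) u (B u) ⬝ᵥ r m u - fderiv ℝ (l i) u (r m u) ⬝ᵥ B u +
        fderiv ℝ (fun v => l i v ⬝ᵥ B v) u (r m u)) +
      ∑ k, ∑ m, w k * w m * ((lam i u - lam k u) * (fderiv ℝ (l i) u (r k u) ⬝ᵥ r m u -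
      fderiv ℝ (l i) u (r m u) ⬝ᵥ r k u)) := by
    set b := fun v => l i v ⬝ᵥ B v
    have hq' := q_eq (hdual u hu) hq
    have hp' := p_eq (hdual u hu) p
    rw [← hw] at hq' hp'
    rw [hq', hp']
    simp only [map_add, map_sum, map_smul, add_dotProduct, dotProduct_add, sum_dotProduct,
      dotProduct_sum, smul_dotProduct, dotProduct_smul, smul_eq_mul, Finset.mul_sum, mul_add,
      mul_sub, Finset.sum_add_distrib, Finset.sum_sub_distrib]
    have sw : ∑ x, ∑ y, w x * ((lam i u - lam y u) * w y * (fderiv ℝ (l i) u (r y u) ⬝ᵥ r x u)) =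
       ∑ x, ∑ y, w x * w y * ((lam i u - lam x u) * (fderiv ℝ (l i) u (r x u) ⬝ᵥ r y u)) := by
      rw [Finset.sum_comm]
      exact Finset.sum_congr rfl fun x _ => Finset.sum_congr rfl fun y _ => by ring
    have sw2 : ∑ x, ∑ y, (lam i u - lam x u) * w x * (w y * (fderiv ℝ (l i) u (r y u) ⬝ᵥ r x u)) =
       ∑ x, ∑ y, w x * w y * ((lam i u - lam x u) * (fderiv ℝ (l i) u (r y u) ⬝ᵥ r x u)) :=
      Finset.sum_congr rfl fun x _ => Finset.sum_congr rfl fun y _ => by ring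
    rw [sw, sw2]
    ring
  rw [e1]
  have hh1 := h1_nonneg u w
  have b2 : ∀ m, |w m * (fderiv ℝ (l i) u (B u) ⬝ᵥ r m u - fderiv ℝ (l i) u (r m u) ⬝ᵥ B u +
        fderiv ℝ (fun v => l i v ⬝ᵥ B v) u (r m u))| ≤ Cs * h1 u w := by
    intro m
    rw [abs_mul]
    have h4 := hCE i m u hu
    have h5 : off u m * |w m| ≤ h1 u w := off_mul_le_h1 u w m
    calc _ ≤ |w m| * (Cs * off u m) := by
          refine mul_le_mul_of_nonneg_left (h4.trans ?_) (abs_nonneg _)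
          exact mul_le_mul_of_nonneg_right (hCs i m) (off_nonneg _ _)
      _ = Cs * (off u m * |w m|) := by ring
      _ ≤ _ := by gcongr
  have b3 : ∀ k m, |w k * w m * ((lam i u - lam k u) * (fderiv ℝ (l i) u (r k u) ⬝ᵥ r m u -
      fderiv ℝ (l i) u (r m u) ⬝ᵥ r k u))| ≤ Ct * h1 u w := by
    intro k m
    by_cases hkm : k = m
    · subst hkm; simp; positivity
    · rw [abs_mul, abs_mul, mul_comm]
      have h4 := (hCO i (k, m) u hu).trans (hCt i (k, m))
      exact mul_le_mul h4 (w_mul_le_h1 u w hkm) (by positivity) hCt0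
  refine (abs_add_le _ _).trans ?_
  rw [add_mul]
  refine add_le_add ?_ ?_
  · refine (Finset.abs_sum_le_sum_abs _ _).trans ((Finset.sum_le_sum fun m _ => b2 m).trans ?_)
    simp [mul_assoc]
  · refine (Finset.abs_sum_le_sum_abs _ _).trans ((Finset.sum_le_sum fun k _ =>
      (Finset.abs_sum_le_sum_abs _ _).trans (Finset.sum_le_sum fun m _ => b3 k m)).trans ?_)
    simp [mul_assoc]

end
end LS

namespace LS

section
variable {n : ℕ} {lam : Fin n → V n → ℝ} {l r : Fin n → V n → V n} {B : V n → V n} {κ : ℝ} {a : ℕ}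

lemma mk_hlam (hlam : ∀ i, ContDiff ℝ (⊤ : ℕ∞) (lam i))
    (hax : ∀ i k, 1 ≤ k → k ≤ a → iteratedDeriv k (fun s : ℝ => lam i (s • eb i)) 0 = 0) (i : Fin n) :
    ∃ C, 0 ≤ C ∧ ∀ u, ‖u‖ ≤ κ → |lam i u - lam i 0 -
      (iteratedDeriv (a + 1) (fun s : ℝ => lam i (s • eb i)) 0 / (Nat.factorial (a + 1) : ℝ)) *
        u i ^ (a + 1)| ≤ C * (|u i| ^ (a + 2) + off u i) := by
  have hl1 : ContDiff ℝ 1 (lam i) := (hlam i).of_le (by exact_mod_cast le_top)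
  have hcoord : ContDiff ℝ 1 (fun u : V n => u i) := contDiff_apply _ _ i
  have hsm : ContDiff ℝ 1 (fun u : V n => u i • (eb i : V n)) := hcoord.smul contDiff_const
  obtain ⟨C2, hC2, h2⟩ := axis_lip (κ := κ) (fun u => lam i u - lam i (u i • eb i))
    (hl1.sub (hl1.comp hsm)) i (by intro s _; simp [eb_self])
  have hg : ContDiff ℝ (⊤ : ℕ∞) (fun s : ℝ => lam i (s • eb i)) :=
    (hlam i).comp (contDiff_id.smul contDiff_const)
  have hsd : ∀ k, iteratedDeriv (k + 1) (fun s : ℝ => lam i (s • eb i) - lam i 0) 0 =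
      iteratedDeriv (k + 1) (fun s : ℝ => lam i (s • eb i)) 0 := by
    intro k
    rw [iteratedDeriv_succ', iteratedDeriv_succ']
    congr 1
    funext s
    exact deriv_sub_const _
  obtain ⟨C1, hC1, h1⟩ := taylor1 (a + 1) (fun s : ℝ => lam i (s • eb i) - lam i 0)
    (hg.sub contDiff_const) (by
      intro k hk
      cases k with
      | zero => simp
      | succ k => rw [hsd]; exact hax i (k + 1) (by omega) (by omega)) κ
  refine ⟨C1 + C2, by positivity, fun u hu => ?_⟩
  have h3 := h1 (u i) ((norm_le_pi_norm u i).trans hu)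
  have h4 := h2 u hu
  rw [hsd] at h3
  rw [Real.norm_eq_abs] at h4
  set d := iteratedDeriv (a + 1) (fun s : ℝ => lam i (s • eb i)) 0 / (Nat.factorial (a + 1) : ℝ)
  have e : lam i u - lam i 0 - d * u i ^ (a + 1) = (lam i u - lam i (u i • eb i)) +
    (lam i (u i • eb i) - lam i 0 - d * u i ^ (a + 1)) := by ring
  rw [e]
  refine (abs_add_le _ _).trans ((add_le_add h4 h3).trans ?_)
  have := off_nonneg u i
  have h5 : 0 ≤ |u i| ^ (a + 2) := by positivity
  have h6 : |u i| ^ (a + 1 + 1) = |u i| ^ (a + 2) := rfl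
  rw [h6]
  nlinarith [mul_nonneg hC1 this, mul_nonneg hC2 h5]

lemma mkCoef (hlam : ∀ i, ContDiff ℝ (⊤ : ℕ∞) (lam i)) (hl : ∀ i, ContDiff ℝ (⊤ : ℕ∞) (l i))
    (hr : ∀ i, ContDiff ℝ (⊤ : ℕ∞) (r i)) (hB : ContDiff ℝ (⊤ : ℕ∞) B) (hκ : 0 < κ) (hκ1 : κ ≤ 1)
    (hdual : ∀ u, ‖u‖ ≤ κ → ∀ i j, l i u ⬝ᵥ r j u = if i = j then 1 else 0)
    (hrn : ∀ i s, |s| ≤ κ → r i (s • eb i) = eb i)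
    (hB0 : ∀ (m : Fin n) (s : ℝ), |s| ≤ 2 * κ → B (s • eb m) = 0)
    (hax : ∀ i k, 1 ≤ k → k ≤ a → iteratedDeriv k (fun s : ℝ => lam i (s • eb i)) 0 = 0)
    (hgap : ∀ i j, i < j → ∀ u, ‖u‖ ≤ κ → lam i u < lam j u)
    (L : ℝ) (hL : ∀ i u, |lam i u| ≤ L) :
    ∃ G : Coef n a, G.lam = lam ∧ G.l = l ∧ G.B = B ∧ G.κ = κ ∧
      G.d = fun i => iteratedDeriv (a + 1) (fun s : ℝ => lam i (s • eb i)) 0 /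
        (Nat.factorial (a + 1) : ℝ) := by
  obtain ⟨C1, hC1, h1⟩ := mk_hu (a := a) hlam hr hB hκ hdual hrn hB0 hax
  obtain ⟨C2, hC2, h2⟩ := mk_hw hlam hl hr hB hκ hdual hrn hB0
  obtain ⟨C3, hC3, h3⟩ := mk_hq hlam hr hB hκ hdual hrn hB0
  choose C4 hC4 h4 using mk_hlam (κ := κ) (a := a) hlam hax
  choose C5 hC5 h5 using fun i => bd_ball (l i) (hl i).continuous κ
  have hs4 : ∀ i, C4 i ≤ ∑ i, C4 i := fun i =>
    Finset.single_le_sum (f := C4) (fun k _ => hC4 k) (Finset.mem_univ i)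
  have hs5 : ∀ i, C5 i ≤ ∑ i, C5 i := fun i =>
    Finset.single_le_sum (f := C5) (fun k _ => hC5 k) (Finset.mem_univ i)
  have h40 : 0 ≤ ∑ i, C4 i := Finset.sum_nonneg fun i _ => hC4 i
  have h50 : 0 ≤ ∑ i, C5 i := Finset.sum_nonneg fun i _ => hC5 i
  have hc : ∃ c > 0, ∀ i j, i < j → ∀ u, ‖u‖ ≤ κ → c ≤ lam j u - lam i u := by
    have : ∀ ij : Fin n × Fin n, ∃ c > 0, ij.1 < ij.2 → ∀ u, ‖u‖ ≤ κ →
        c ≤ lam ij.2 u - lam ij.1 u := by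
      intro ij
      by_cases hij : ij.1 < ij.2
      · obtain ⟨u0, hu0, hm⟩ := (isCompact_closedBall (0 : V n) κ).exists_isMinOn
          ⟨0, by simpa using hκ.le⟩
          (((hlam ij.2).continuous.sub (hlam ij.1).continuous).continuousOn)
        refine ⟨lam ij.2 u0 - lam ij.1 u0, sub_pos.2 (hgap _ _ hij u0 (by simpa using hu0)),
          fun _ u hu => hm (by simpa using hu)⟩
      · exact ⟨1, one_pos, fun h => absurd h hij⟩
    choose cc hcc0 hcc using this
    rcases isEmpty_or_nonempty (Fin n) with he | he
    · exact ⟨1, one_pos, fun i => he.elim i⟩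
    obtain ⟨m, hm⟩ := Finite.exists_min cc
    exact ⟨cc m, hcc0 m, fun i j hij u hu => (hm (i, j)).trans (hcc (i, j) hij u hu)⟩
  obtain ⟨c, hc0, hc⟩ := hc
  set C := 1 + C1 + C2 + C3 + ∑ i, C4 i + n * ∑ i, C5 i with hCdef
  have hn5 : 0 ≤ (n : ℝ) * ∑ i, C5 i := by positivity
  refine ⟨{ lam := lam, l := l, B := B, κ := κ, C := C, c := c, L := L
            d := fun i => iteratedDeriv (a + 1) (fun s : ℝ => lam i (s • eb i)) 0 /
              (Nat.factorial (a + 1) : ℝ)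
            κ_pos := hκ, κ_le := hκ1, C_one := by linarith, c_pos := hc0
            clam := fun i => (hlam i).of_le (by exact_mod_cast le_top)
            cl := fun i => (hl i).of_le (by exact_mod_cast le_top)
            cB := hB.of_le (by exact_mod_cast le_top)
            hL := hL, gap := hc, hl := ?_, hu := ?_, hw := ?_, hq := ?_, hlam := ?_ },
    rfl, rfl, rfl, rfl, rfl⟩
  · intro u hu k p
    have : |l k u ⬝ᵥ p| ≤ ∑ j : Fin n, (∑ i, C5 i) * ‖p‖ := by
      refine (Finset.abs_sum_le_sum_abs _ _).trans (Finset.sum_le_sum fun j _ => ?_)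
      rw [abs_mul]
      exact mul_le_mul (((norm_le_pi_norm (l k u) j).trans (h5 k u hu)).trans (hs5 k))
        (norm_le_pi_norm p j) (abs_nonneg _) h50
    refine this.trans ?_
    simp only [Finset.sum_const, Finset.card_univ, Fintype.card_fin, nsmul_eq_mul]
    rw [← mul_assoc]
    exact mul_le_mul_of_nonneg_right (by linarith) (norm_nonneg _)
  · intro i u p q hu hq
    refine (h1 i u p q hu hq).trans (mul_le_mul_of_nonneg_right (by linarith) ?_)
    exact add_nonneg (add_nonneg (h1_nonneg _ _) (h2_nonneg _)) (h3_nonneg _ _)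
  · intro i u p q hu hq
    exact (h2 i u p q hu hq).trans (mul_le_mul_of_nonneg_right (by linarith) (h1_nonneg _ _))
  · intro i u p q hu hq
    refine (h3 i u p q hu hq).trans (mul_le_mul_of_nonneg_right
      (mul_le_mul_of_nonneg_right (by linarith) (norm_nonneg _)) ?_)
    exact add_nonneg (off_nonneg _ _) (off_nonneg _ _)
  · intro i u hu
    refine (h4 i u hu).trans (mul_le_mul_of_nonneg_right (by linarith [hs4 i]) ?_)
    exact add_nonneg (by positivity) (off_nonneg _ _)

end

lemma norm_le_eunorm {n : ℕ} (v : V n) : ‖v‖ ≤ eunorm v := by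
  unfold eunorm
  rw [pi_norm_le_iff_of_nonneg (Real.sqrt_nonneg _)]
  intro i
  refine Real.le_sqrt_of_sq_le ?_
  rw [Real.norm_eq_abs, sq_abs]
  exact Finset.single_le_sum (f := fun i => v i ^ 2) (fun i _ => sq_nonneg _) (Finset.mem_univ i)

lemma eunorm_le {n : ℕ} (v : V n) : eunorm v ≤ n * ‖v‖ := by
  unfold eunorm
  rw [Real.sqrt_le_left (by positivity)]
  calc ∑ i, v i ^ 2 ≤ ∑ i : Fin n, ‖v‖ ^ 2 := Finset.sum_le_sum fun i _ => by
        rw [← sq_abs]; gcongr; exact norm_le_pi_norm v i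
    _ = n * ‖v‖ ^ 2 := by simp
    _ ≤ (n * ‖v‖) ^ 2 := by
        rw [mul_pow]
        refine mul_le_mul_of_nonneg_right ?_ (by positivity)
        have : n ≤ n ^ 2 := by nlinarith [Nat.zero_le n, Nat.le_self_pow two_ne_zero n]
        exact_mod_cast this

lemma eunorm_cont {n : ℕ} : Continuous (eunorm : V n → ℝ) := by
  unfold eunorm; fun_prop

lemma axis_zero {n a : ℕ} (S : HypSys n) (hMin : S.IsMinAlpha a) (i : Fin n) (k : ℕ) (h1 : 1 ≤ k)
    (hk : k ≤ a) : S.axisDeriv i k = 0 := by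
  classical
  by_cases hW : S.WLD i
  · have : (fun s : ℝ => S.lam i (s • eb i)) =ᶠ[𝓝 0] fun _ => S.lam i 0 := by
      filter_upwards [Metric.ball_mem_nhds (0:ℝ) S.δ_pos] with s hs
      exact hW s (by simpa using hs)
    unfold HypSys.axisDeriv
    rw [this.iteratedDeriv_eq]
    simp [iteratedDeriv_const]; omega
  · by_contra hne
    have hex : ∃ k, 1 ≤ k ∧ S.axisDeriv i k ≠ 0 := ⟨k, h1, hne⟩
    have hf := Nat.find_spec hex
    have hle : Nat.find hex ≤ k := Nat.find_min' hex ⟨h1, hne⟩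
    have := hMin.2 i hW (Nat.find hex - 1) ⟨fun j hj hj' => by
      by_contra hc
      exact Nat.find_min hex (show j < Nat.find hex by omega) ⟨hj, hc⟩, by
      have : Nat.find hex - 1 + 1 = Nat.find hex := by omega
      rw [this]; exact hf.2⟩
    omega

lemma cut_smooth {n : ℕ} {E : Type*} [NormedAddCommGroup E] [NormedSpace ℝ E] {δ : ℝ}
    (φ : ContDiffBump (0 : V n)) (hφ : ∀ u : V n, ‖u‖ ≤ φ.rOut → eunorm u < δ)
    {f : V n → E} (hf : ContDiffOn ℝ (⊤ : ℕ∞) f {u | eunorm u < δ}) :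
    ContDiff ℝ (⊤ : ℕ∞) (fun u => φ u • f u) := by
  rw [contDiff_iff_contDiffAt]
  intro u
  by_cases hu : eunorm u < δ
  · exact φ.contDiffAt.smul (hf.contDiffAt ((isOpen_lt eunorm_cont continuous_const).mem_nhds hu))
  · have h1 : u ∉ Metric.closedBall (0 : V n) φ.rOut := fun h => hu (hφ u (by simpa using h))
    have h2 : (fun u => φ u • f u) =ᶠ[𝓝 u] fun _ => 0 := by
      filter_upwards [Metric.isClosed_closedBall.isOpen_compl.mem_nhds h1] with v hv
      have : φ v = 0 := φ.zero_of_le_dist (by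
        have : ¬ dist v 0 ≤ φ.rOut := hv
        linarith)
      rw [this, zero_smul]
    exact contDiffAt_const.congr_of_eventuallyEq h2

theorem exists_coef {n a : ℕ} (S : HypSys n) (hNorm : S.Normalized) (hMatch : S.Matching)
    (hMin : S.IsMinAlpha a) : ∃ G : Coef n a,
      (∀ i u, ‖u‖ ≤ 2 * G.κ → G.lam i u = S.lam i u ∧ G.l i u = S.l i u ∧ G.B u = S.B u) ∧
      ∀ i, G.d i = S.axisDeriv i (a + 1) / (Nat.factorial (a + 1) : ℝ) := by
  set κ := min 1 (S.δ / (4 * (n + 1))) with hκd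
  have hδ := S.δ_pos
  have hκ : 0 < κ := lt_min one_pos (by positivity)
  have hκδ : (n + 1 : ℝ) * (4 * κ) ≤ S.δ := by
    have : κ ≤ S.δ / (4 * (n + 1)) := min_le_right _ _
    rw [le_div_iff₀ (by positivity)] at this
    linarith
  let φ : ContDiffBump (0 : V n) := ⟨2 * κ, 3 * κ, by positivity, by linarith⟩
  have hball : ∀ u : V n, ‖u‖ ≤ 3 * κ → eunorm u < S.δ := by
    intro u hu
    have h1 := eunorm_le u
    have hn : (0:ℝ) ≤ n := Nat.cast_nonneg n
    nlinarith
  have hφ1 : ∀ u : V n, ‖u‖ ≤ 2 * κ → φ u = 1 := fun u hu =>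
    φ.one_of_mem_closedBall (by simpa using hu)
  have hlam := fun i => cut_smooth φ hball (S.smooth_lam i)
  have hl := fun i => cut_smooth φ hball (S.smooth_l i)
  have hr := fun i => cut_smooth φ hball (S.smooth_r i)
  have hB := cut_smooth φ hball S.smooth_B
  have hab : ∀ (m : Fin n) (s : ℝ), |s| ≤ 2 * κ → ‖s • (eb m : V n)‖ ≤ 2 * κ := fun m s hs => by
    rwa [norm_eb]
  have hsδ : ∀ s : ℝ, |s| ≤ 2 * κ → |s| < S.δ := fun s hs => by
    have hn : (0:ℝ) ≤ n := Nat.cast_nonneg n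
    nlinarith
  have hev : ∀ i : Fin n, (fun s : ℝ => φ (s • eb i) • S.lam i (s • eb i)) =ᶠ[𝓝 0]
      fun s => S.lam i (s • eb i) := by
    intro i
    filter_upwards [Metric.ball_mem_nhds (0:ℝ) (show 0 < 2 * κ by positivity)] with s hs
    rw [hφ1 _ (hab i s (by simpa using (mem_ball_zero_iff.1 hs).le)), one_smul]
  have hLb : ∃ L, ∀ i u, |φ u • S.lam i u| ≤ L := by
    choose C hC0 hC using fun i => bd_ball _ (hlam i).continuous (3 * κ)
    refine ⟨∑ i, C i, fun i u => ?_⟩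
    have hs : C i ≤ ∑ i, C i :=
      Finset.single_le_sum (f := C) (fun k _ => hC0 k) (Finset.mem_univ i)
    by_cases hu : ‖u‖ ≤ 3 * κ
    · exact (hC i u hu).trans hs
    · have : φ u = 0 := φ.zero_of_le_dist (by
        simp only [dist_zero_right]; exact (not_le.1 hu).le)
      rw [this, zero_smul, abs_zero]; exact (hC0 i).trans hs
  obtain ⟨L, hL⟩ := hLb
  obtain ⟨G, e1, e2, e3, e4, e5⟩ := mkCoef (a := a) hlam hl hr hB hκ (min_le_left _ _)
    (fun u hu i j => by
      rw [hφ1 u (by linarith), one_smul, one_smul]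
      exact S.norm_lr u (hball u (by linarith)) i j)
    (fun i s hs => by
      have hs' : |s| ≤ 2 * κ := by linarith
      rw [hφ1 _ (hab i s hs'), one_smul, hNorm i s (hsδ s hs')])
    (fun m s hs => by rw [hMatch m s (hsδ s hs), smul_zero])
    (fun i k h1 hk => by
      rw [(hev i).iteratedDeriv_eq]; exact axis_zero S hMin i k h1 hk)
    (fun i j hij u hu => by
      simp only [hφ1 u (by linarith), one_smul]
      exact S.strict_hyp u (hball u (by linarith)) i j hij) L hL
  refine ⟨G, fun i u hu => ?_, fun i => ?_⟩
  · rw [e4] at hu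
    rw [e1, e2, e3]
    simp only [hφ1 u hu, one_smul, and_self]
  · rw [e5]
    simp only
    rw [(hev i).iteratedDeriv_eq]; rfl

end LS

namespace LS

/-- A `C¹` solution on `[0,T]`, extended continuously to all times. -/
structure Sol {n a : ℕ} (G : Coef n a) (T : ℝ) (u ut ux : ℝ → ℝ → V n) : Prop where
  cu : Continuous (Function.uncurry u)
  cut : Continuous (Function.uncurry ut)
  cux : Continuous (Function.uncurry ux)
  dx : ∀ t x, HasDerivAt (u t) (ux t x) x
  curve : ∀ s ⊆ Icc (0:ℝ) T, ∀ (ξ : ℝ → ℝ) (v t : ℝ), t ∈ s → HasDerivWithinAt ξ v s t →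
    HasDerivWithinAt (fun r => u r (ξ r)) (ut t (ξ t) + v • ux t (ξ t)) s t
  bdd : ∀ R : ℝ, ∃ K : ℝ, 0 ≤ K ∧ ∀ t x, |x| ≤ R → ‖u t x‖ ≤ K ∧ ‖ux t x‖ ≤ K
  pde : ∀ t ∈ Icc (0:ℝ) T, ∀ x, ‖u t x‖ ≤ 2 * G.κ → ∀ k,
    G.l k (u t x) ⬝ᵥ (ut t x + G.lam k (u t x) • ux t x) = G.l k (u t x) ⬝ᵥ G.B (u t x)

lemma Sol.mono {n a : ℕ} {G : Coef n a} {T τ : ℝ} {u ut ux : ℝ → ℝ → V n} (h : Sol G T u ut ux)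
    (hτ : τ ≤ T) : Sol G τ u ut ux :=
  ⟨h.cu, h.cut, h.cux, h.dx, fun s hs => h.curve s (hs.trans (Icc_subset_Icc le_rfl hτ)), h.bdd,
    fun t ht => h.pde t ⟨ht.1, ht.2.trans hτ⟩⟩

theorem exists_sol {n a : ℕ} (S : HypSys n) (G : Coef n a)
    (hG : ∀ i u, ‖u‖ ≤ 2 * G.κ → G.lam i u = S.lam i u ∧ G.l i u = S.l i u ∧ G.B u = S.B u)
    {v : ℝ → ℝ → V n} {f : ℝ → V n} {T : ℝ} (hT : 0 < T) (hv : S.IsSolutionOn v f T) :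
    ∃ u ut ux, Sol G T u ut ux ∧ ∀ x, u 0 x = f x := by
  set F : ℝ × ℝ → V n := fun p => v p.1 p.2 with hF
  set s0 : Set (ℝ × ℝ) := Icc 0 T ×ˢ univ with hs0
  have hud : UniqueDiffOn ℝ s0 := (uniqueDiffOn_Icc hT).prod uniqueDiffOn_univ
  set D := fderivWithin ℝ F s0 with hDdef
  have hDc : ContinuousOn D s0 := hv.smooth.continuousOn_fderivWithin hud le_rfl
  have hDd : ∀ p ∈ s0, HasFDerivWithinAt F (D p) s0 p := fun p hp =>
    (hv.smooth.differentiableOn (by norm_num) p hp).hasFDerivWithinAt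
  set cl : ℝ → ℝ := fun t => max 0 (min t T) with hcl
  have hclm : ∀ t, cl t ∈ Icc (0:ℝ) T := fun t =>
    ⟨le_max_left _ _, max_le hT.le (min_le_right _ _)⟩
  have hcle : ∀ t ∈ Icc (0:ℝ) T, cl t = t := by
    intro t ht; simp [hcl, ht.1, ht.2]
  have hclc : Continuous cl := by fun_prop
  have hmem : ∀ t x, (cl t, x) ∈ s0 := fun t x => ⟨hclm t, mem_univ _⟩
  have hcp : Continuous (fun p : ℝ × ℝ => (cl p.1, p.2)) := by fun_prop
  have cu : Continuous (Function.uncurry fun t x => v (cl t) x) :=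
    hv.smooth.continuousOn.comp_continuous hcp (fun p => hmem _ _)
  have cD : Continuous (fun p : ℝ × ℝ => D (cl p.1, p.2)) :=
    hDc.comp_continuous hcp (fun p => hmem _ _)
  have cux : Continuous (Function.uncurry fun t x => D (cl t, x) (0, 1)) :=
    cD.clm_apply continuous_const
  have cut : Continuous (Function.uncurry fun t x => D (cl t, x) (1, 0)) :=
    cD.clm_apply continuous_const
  have hdx : ∀ t ∈ Icc (0:ℝ) T, ∀ x, HasDerivAt (v t) (D (t, x) (0, 1)) x := by
    intro t ht x
    have h1 : HasDerivWithinAt (fun y : ℝ => (t, y)) ((0:ℝ), (1:ℝ)) univ x :=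
      ((hasDerivAt_const x t).prodMk (hasDerivAt_id x)).hasDerivWithinAt
    have h2 := (hDd (t, x) ⟨ht, mem_univ _⟩).comp_hasDerivWithinAt x h1
      (fun y _ => ⟨ht, mem_univ _⟩)
    rw [hasDerivWithinAt_univ] at h2
    exact h2
  have hcv : ∀ s ⊆ Icc (0:ℝ) T, ∀ (ξ : ℝ → ℝ) (w t : ℝ), t ∈ s → HasDerivWithinAt ξ w s t →
      HasDerivWithinAt (fun r => v r (ξ r)) (D (t, ξ t) (1, w)) s t := by
    intro s hs ξ w t ht hξ
    have h1 : HasDerivWithinAt (fun r : ℝ => (r, ξ r)) ((1:ℝ), w) s t :=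
      (hasDerivWithinAt_id t s).prodMk hξ
    exact HasFDerivWithinAt.comp_hasDerivWithinAt (l := F) (f := fun r : ℝ => (r, ξ r)) t
      (hDd (t, ξ t) ⟨hs ht, mem_univ _⟩) h1 (fun y hy => mk_mem_prod (hs hy) (mem_univ _))
  have hsplit : ∀ p w, D p (1, w) = D p (1, 0) + w • D p (0, 1) := by
    intro p w
    rw [← map_smul, ← map_add]; simp
  refine ⟨fun t x => v (cl t) x, fun t x => D (cl t, x) (1, 0), fun t x => D (cl t, x) (0, 1),
    ⟨cu, cut, cux, ?_, ?_, ?_, ?_⟩, ?_⟩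
  · intro t x; exact hdx _ (hclm t) x
  · intro s hs ξ w t ht hξ
    have h1 := hcv s hs ξ w t ht hξ
    rw [hsplit] at h1
    simp only [hcle t (hs ht)]
    exact h1.congr (fun r hr => by rw [hcle r (hs hr)]) (by rw [hcle t (hs ht)])
  · intro R
    have hK : IsCompact (Icc (0:ℝ) T ×ˢ Icc (-R) R) := isCompact_Icc.prod isCompact_Icc
    obtain ⟨K1, h1⟩ := hK.exists_bound_of_continuousOn cu.continuousOn
    obtain ⟨K2, h2⟩ := hK.exists_bound_of_continuousOn cux.continuousOn
    refine ⟨max 0 (max K1 K2), le_max_left _ _, fun t x hx => ?_⟩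
    have hm : (cl t, x) ∈ Icc (0:ℝ) T ×ˢ Icc (-R) R := ⟨hclm t, abs_le.1 hx⟩
    have h3 := h1 _ hm
    have h4 := h2 _ hm
    simp only [Function.uncurry, hcle _ (hclm t)] at h3 h4
    exact ⟨h3.trans ((le_max_left _ _).trans (le_max_right _ _)),
      h4.trans ((le_max_right _ _).trans (le_max_right _ _))⟩
  · intro t ht x hx k
    simp only [hcle t ht] at hx ⊢
    obtain ⟨e1, e2, e3⟩ := hG k _ hx
    rw [e1, e2, e3]
    have hp := hv.pde t ht x
    rw [(hdx t ht x).deriv] at hp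
    have h1 := hcv _ Subset.rfl (fun _ => x) 0 t ht (hasDerivWithinAt_const _ _ _)
    rw [h1.derivWithin ((uniqueDiffOn_Icc hT) t ht)] at hp
    rw [← hp, dotProduct_add, dotProduct_add, dotProduct_mulVec, S.eig_l _ (hv.small t ht x)]
    simp
  · intro x
    simp only [hcle 0 ⟨le_rfl, hT.le⟩]
    exact hv.init x

section
variable {n a : ℕ} {G : Coef n a} {T R : ℝ} {u ut ux : ℝ → ℝ → V n}

def bump (R : ℝ) (hR : 0 ≤ R) : ContDiffBump (0:ℝ) := ⟨R + 1, R + 2, by linarith, by linarith⟩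

def fa (G : Coef n a) (u : ℝ → ℝ → V n) (R : ℝ) (hR : 0 ≤ R) (i : Fin n) (t x : ℝ) : ℝ :=
  bump R hR x * G.lam i (u t x)

def fax (G : Coef n a) (u ux : ℝ → ℝ → V n) (R : ℝ) (hR : 0 ≤ R) (i : Fin n) (t x : ℝ) : ℝ :=
  deriv (bump R hR) x * G.lam i (u t x) + bump R hR x * fderiv ℝ (G.lam i) (u t x) (ux t x)

lemma bump_one (hR : 0 ≤ R) {x : ℝ} (hx : |x| ≤ R + 1) : bump R hR x = 1 :=
  (bump R hR).one_of_mem_closedBall (by simpa [bump] using hx)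

lemma bump_deriv (hR : 0 ≤ R) {x : ℝ} (hx : |x| ≤ R) : deriv (bump R hR) x = 0 := by
  have : (bump R hR : ℝ → ℝ) =ᶠ[𝓝 x] fun _ => 1 := by
    filter_upwards [(isOpen_lt (continuous_abs) continuous_const).mem_nhds
      (show |x| < R + 1 by linarith)] with y hy
    exact bump_one hR (le_of_lt hy)
  rw [this.deriv_eq]; simp

lemma fa_fld (h : Sol G T u ut ux) (hR : 0 ≤ R) (i : Fin n) :
    ∃ K, Fld (fa G u R hR i) (fax G u ux R hR i) G.L K := by
  have hbs : ContDiff ℝ 1 (bump R hR : ℝ → ℝ) := (bump R hR).contDiff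
  have hbc : Continuous (bump R hR : ℝ → ℝ) := (bump R hR).continuous
  have hbd : Continuous (deriv (bump R hR : ℝ → ℝ)) := hbs.continuous_deriv le_rfl
  have hD : Continuous (fderiv ℝ (G.lam i)) := (G.clam i).continuous_fderiv (by norm_num)
  have hlc : Continuous (fun p : ℝ × ℝ => G.lam i (u p.1 p.2)) := (G.clam i).continuous.comp h.cu
  obtain ⟨K0, hK00, hK0⟩ := h.bdd (R + 2)
  obtain ⟨K1, hK10, hK1⟩ := bd_ball (fderiv ℝ (G.lam i)) hD K0
  obtain ⟨K2, hK2⟩ := (isCompact_closedBall (0:ℝ) (R + 2)).exists_bound_of_continuousOn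
    hbd.continuousOn
  have hL0 : 0 ≤ G.L := (abs_nonneg _).trans (G.hL i 0)
  have hb1 : ∀ x, |bump R hR x| ≤ 1 := fun x => by
    rw [abs_of_nonneg (bump R hR).nonneg]; exact (bump R hR).le_one
  refine ⟨|K2| * G.L + K1 * K0, ?_, ?_, ?_, ?_, ?_⟩
  · exact (hbc.comp continuous_snd).mul hlc
  · refine ((hbd.comp continuous_snd).mul hlc).add ((hbc.comp continuous_snd).mul ?_)
    exact (hD.comp h.cu).clm_apply h.cux
  · intro t x
    have h1 : HasDerivAt (bump R hR : ℝ → ℝ) (deriv (bump R hR) x) x :=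
      (hbs.differentiable (by norm_num) x).hasDerivAt
    have h2 := ((G.clam i).differentiable (by norm_num) (u t x)).hasFDerivAt.comp_hasDerivAt x (h.dx t x)
    exact h1.mul h2
  · intro t x
    unfold fa
    rw [abs_mul]
    calc _ ≤ 1 * G.L := mul_le_mul (hb1 x) (G.hL i _) (abs_nonneg _) zero_le_one
      _ = G.L := one_mul _
  · intro t x
    unfold fax
    by_cases hx : |x| ≤ R + 2
    · obtain ⟨h1, h2⟩ := hK0 t x hx
      refine (abs_add_le _ _).trans (add_le_add ?_ ?_)
      · rw [abs_mul]
        exact mul_le_mul ((hK2 x (by simpa using hx)).trans (le_abs_self _)) (G.hL i _)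
          (abs_nonneg _) (abs_nonneg _)
      · rw [abs_mul]
        calc _ ≤ 1 * (K1 * K0) := by
              refine mul_le_mul (hb1 x) ?_ (abs_nonneg _) zero_le_one
              refine ((fderiv ℝ (G.lam i) (u t x)).le_opNorm _).trans ?_
              exact mul_le_mul (hK1 _ h1) h2 (norm_nonneg _) hK10
          _ = _ := one_mul _
    · have hz : (bump R hR : ℝ → ℝ) =ᶠ[𝓝 x] fun _ => 0 := by
        filter_upwards [(isOpen_lt continuous_const continuous_abs).mem_nhds
          (show R + 2 < |x| by linarith)] with y hy
        exact (bump R hR).zero_of_le_dist (by simpa [bump] using (le_of_lt hy))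
      rw [hz.deriv_eq, hz.eq_of_nhds]
      simp; positivity

lemma fa_eq (hR : 0 ≤ R) (i : Fin n) {t x : ℝ} (hx : |x| ≤ R + 1) :
    fa G u R hR i t x = G.lam i (u t x) := by
  rw [fa, bump_one hR hx, one_mul]

lemma fax_eq (hR : 0 ≤ R) (i : Fin n) {t x : ℝ} (hx : |x| ≤ R) :
    fax G u ux R hR i t x = fderiv ℝ (G.lam i) (u t x) (ux t x) := by
  rw [fax, bump_one hR (by linarith), bump_deriv hR hx, zero_mul, zero_add, one_mul]

lemma abs_le_lint {φ φ' g : ℝ → ℝ} {t : ℝ} (ht : 0 ≤ t)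
    (hd : ∀ s ∈ Icc (0:ℝ) t, HasDerivWithinAt φ (φ' s) (Icc 0 t) s)
    (hg : ∀ s ∈ Icc (0:ℝ) t, |φ' s| ≤ g s) (hgc : ContinuousOn g (Icc 0 t)) :
    ENNReal.ofReal |φ t - φ 0| ≤ ∫⁻ s in Icc 0 t, ENNReal.ofReal (g s) := by
  have hgi : IntegrableOn g (Icc 0 t) := hgc.integrableOn_Icc
  have hc : ContinuousOn φ (Icc 0 t) := fun s hs => (hd s hs).continuousWithinAt
  have key : ∀ ψ ψ' : ℝ → ℝ, (∀ s ∈ Icc (0:ℝ) t, HasDerivWithinAt ψ (ψ' s) (Icc 0 t) s) →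
      (∀ s ∈ Icc (0:ℝ) t, ψ' s ≤ g s) → ψ t - ψ 0 ≤ ∫ s in Icc 0 t, g s := by
    intro ψ ψ' h1 h2
    have := intervalIntegral.sub_le_integral_of_hasDeriv_right_of_le (g := ψ) (g' := ψ') (φ := g) ht
      (fun s hs => (h1 s hs).continuousWithinAt)
      (fun x hx => ((h1 x ⟨hx.1.le, hx.2.le⟩).hasDerivAt (Icc_mem_nhds hx.1 hx.2)).hasDerivWithinAt)
      hgi (fun x hx => h2 x ⟨hx.1.le, hx.2.le⟩)
    rwa [intervalIntegral.integral_of_le ht, ← integral_Icc_eq_integral_Ioc] at this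
  have h1 := key φ φ' hd (fun s hs => (le_abs_self _).trans (hg s hs))
  have h2 := key (fun s => - φ s) (fun s => - φ' s) (fun s hs => (hd s hs).neg)
    (fun s hs => (neg_le_abs _).trans (hg s hs))
  have h3 : |φ t - φ 0| ≤ ∫ s in Icc 0 t, g s := abs_le.2 ⟨by linarith, h1⟩
  rw [← ofReal_integral_eq_lintegral_ofReal hgi]
  · exact ENNReal.ofReal_le_ofReal h3
  · rw [EventuallyLE, ae_restrict_iff' measurableSet_Icc]
    exact ae_of_all _ fun s hs => (abs_nonneg _).trans (hg s hs)

/-- the left component of `u_x` -/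
def wv (G : Coef n a) (u ux : ℝ → ℝ → V n) (t x : ℝ) : V n := lw G.l (u t x) (ux t x)

lemma cwv (h : Sol G T u ut ux) (i : Fin n) :
    Continuous (Function.uncurry fun t x => wv G u ux t x i) :=
  ((G.cl i).continuous.comp h.cu).dotProduct h.cux

lemma cui (h : Sol G T u ut ux) (i : Fin n) : Continuous (Function.uncurry fun t x => u t x i) :=
  (continuous_apply i).comp h.cu

def g1 (G : Coef n a) (u ux : ℝ → ℝ → V n) (t x : ℝ) : ℝ := G.C * h1 (u t x) (wv G u ux t x)

def g2 (G : Coef n a) (u ux : ℝ → ℝ → V n) (t x : ℝ) : ℝ :=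
  G.C * (h1 (u t x) (wv G u ux t x) + h2 (u t x) + h3 a (u t x) (wv G u ux t x))

lemma ch1 (h : Sol G T u ut ux) :
    Continuous (Function.uncurry fun t x => h1 (u t x) (wv G u ux t x)) := by
  have h1 := cwv h
  have h2 := cui h
  simp only [Function.uncurry_def] at h1 h2
  simp only [LS.h1, Function.uncurry_def]
  refine continuous_finsetSum _ fun j _ => continuous_finsetSum _ fun k _ => ?_
  split_ifs
  · exact continuous_const
  · exact ((h1 j).abs.mul (h1 k).abs).add ((h2 j).abs.mul (h1 k).abs)

lemma ch2 (h : Sol G T u ut ux) : Continuous (Function.uncurry fun t x => h2 (u t x)) := by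
  have h2 := cui h
  simp only [Function.uncurry_def] at h2
  simp only [LS.h2, Function.uncurry_def]
  refine continuous_finsetSum _ fun j _ => continuous_finsetSum _ fun k _ => ?_
  split_ifs
  · exact continuous_const
  · exact (h2 j).abs.mul (h2 k).abs

lemma ch3 (h : Sol G T u ut ux) :
    Continuous (Function.uncurry fun t x => h3 a (u t x) (wv G u ux t x)) := by
  have h1 := cwv h
  have h2 := cui h
  simp only [Function.uncurry_def] at h1 h2
  simp only [LS.h3, Function.uncurry_def]
  exact continuous_finsetSum _ fun j _ => ((h2 j).abs.pow _).mul (h1 j).abs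

lemma cg1 (h : Sol G T u ut ux) : Continuous (Function.uncurry (g1 G u ux)) :=
  continuous_const.mul (ch1 h)

lemma cg2 (h : Sol G T u ut ux) : Continuous (Function.uncurry (g2 G u ux)) :=
  continuous_const.mul (((ch1 h).add (ch2 h)).add (ch3 h))

lemma char_rel (h : Sol G T u ut ux) {t x : ℝ} (ht : t ∈ Icc (0:ℝ) T) (hu : ‖u t x‖ ≤ 2 * G.κ)
    (i k : Fin n) : G.l k (u t x) ⬝ᵥ (ut t x + G.lam i (u t x) • ux t x) =
      G.l k (u t x) ⬝ᵥ G.B (u t x) + (G.lam i (u t x) - G.lam k (u t x)) *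
        (G.l k (u t x) ⬝ᵥ ux t x) := by
  rw [← h.pde t ht x hu k]
  simp only [dotProduct_add, dotProduct_smul, smul_eq_mul]; ring

lemma Gr_abs {L t x : ℝ} (hL : 0 ≤ L) (hG : (t, x) ∈ Gr T R L) : |x| ≤ R := by
  obtain ⟨h0, h1, h2⟩ := hG
  simp only at h0 h1 h2
  nlinarith [mul_nonneg hL h0]

/-- derivative of `u` along a characteristic -/
lemma u_char (h : Sol G T u ut ux) (hL : 0 ≤ G.L) (hR : 0 ≤ R) (i : Fin n) {K : ℝ}
    {X J : ℝ → ℝ → ℝ} (hX : IsFlow T G.L K (fa G u R hR i) (fax G u ux R hR i) X J)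
    {t y : ℝ} (ht : t ∈ Icc (0:ℝ) T) (hx : |X t y| ≤ R + 1) :
    HasDerivWithinAt (fun s => u s (X s y))
      (ut t (X t y) + G.lam i (u t (X t y)) • ux t (X t y)) (Icc 0 T) t := by
  have := h.curve (Icc 0 T) Subset.rfl (fun s => X s y) _ t ht (hX.hasDeriv y t ht)
  rwa [fa_eq hR i hx] at this

lemma dens_u (h : Sol G T u ut ux) (hL : 0 ≤ G.L) (hR : 0 ≤ R) (i : Fin n) {K : ℝ}
    {X J : ℝ → ℝ → ℝ} (hX : IsFlow T G.L K (fa G u R hR i) (fax G u ux R hR i) X J)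
    (hb : ∀ t x, (t, x) ∈ Gr T R G.L → ‖u t x‖ ≤ G.κ) :
    Dens T R G.L X J (fun t x => u t x i) (g2 G u ux) := by
  have hκ := G.κ_pos
  refine ⟨cui h i, cg2 h, ?_⟩
  intro t ht y hG
  have hsub : Icc (0:ℝ) t ⊆ Icc 0 T := Icc_subset_Icc le_rfl ht.2
  have hGs : ∀ s ∈ Icc (0:ℝ) t, (s, X s y) ∈ Gr T R G.L := fun s hs => Gr_back hX hs.1 hs.2 hG
  have hcX : Continuous (fun s => (s, X s y)) :=
    continuous_id.prodMk (hX.cont.comp (by fun_prop : Continuous fun s : ℝ => (s, y)))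
  have hcJ : Continuous (fun s => J s y) := hX.contJ.comp (by fun_prop : Continuous fun s : ℝ => (s, y))
  have key := abs_le_lint (φ := fun s => u s (X s y) i * J s y)
    (φ' := fun s => ((ut s (X s y) + G.lam i (u s (X s y)) • ux s (X s y)) i +
      fderiv ℝ (G.lam i) (u s (X s y)) (ux s (X s y)) * u s (X s y) i) * J s y)
    (g := fun s => g2 G u ux s (X s y) * J s y) ht.1
    (by
      intro s hs
      have hx := Gr_abs hL (hGs s hs)
      have d1 := hasDerivWithinAt_pi.1 (u_char h hL hR i hX (hsub hs) (y := y) (by linarith)) i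
      have d2 := hX.J_deriv y s (hsub hs)
      rw [fax_eq hR i hx] at d2
      exact ((d1.mul d2).mono hsub).congr_deriv (by ring))
    (by
      intro s hs
      rw [abs_mul, abs_of_pos (hX.J_pos s y)]
      refine mul_le_mul_of_nonneg_right ?_ (hX.J_pos s y).le
      have hu := hb _ _ (hGs s hs)
      exact G.hu i _ _ _ hu (fun k => char_rel h (hsub hs) (by linarith) i k))
    ((((cg2 h).comp hcX).mul hcJ).continuousOn)
  have e0 : u 0 (X 0 y) i * J 0 y = u 0 y i := by rw [hX.zero, hX.J_zero, mul_one]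
  simp only [e0] at key
  refine le_trans ?_ (add_le_add le_rfl key)
  rw [← ENNReal.ofReal_add (abs_nonneg _) (abs_nonneg _)]
  refine ENNReal.ofReal_le_ofReal ?_
  have h1 := abs_add_le (u 0 y i) (u t (X t y) i * J t y - u 0 y i)
  rw [add_sub_cancel, abs_mul, abs_of_pos (hX.J_pos t y)] at h1
  exact h1

end
end LS

namespace LS

lemma lim_id {F g : ℝ → ℝ → ℝ} (hF : Continuous (Function.uncurry F))
    (hg : Continuous (Function.uncurry g)) {t : ℝ} (ht : 0 ≤ t)
    (hd : ∀ᶠ h in 𝓝[≠] (0:ℝ), ∀ s ∈ Icc (0:ℝ) t,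
      HasDerivWithinAt (fun s => F s h) (g s h) (Icc 0 t) s) :
    F t 0 - F 0 0 = ∫ s in (0:ℝ)..t, g s 0 := by
  have c1 : Continuous (fun h => F t h - F 0 h) :=
    (hF.comp (by fun_prop : Continuous fun h : ℝ => (t, h))).sub
      (hF.comp (by fun_prop : Continuous fun h : ℝ => ((0:ℝ), h)))
  have c2 : Continuous (fun h => ∫ s in (0:ℝ)..t, g s h) := by
    apply intervalIntegral.continuous_parametric_intervalIntegral_of_continuous'
    exact hg.comp (by fun_prop : Continuous fun p : ℝ × ℝ => (p.2, p.1))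
  have e : (fun h => F t h - F 0 h) =ᶠ[𝓝[≠] 0] (fun h => ∫ s in (0:ℝ)..t, g s h) := by
    filter_upwards [hd] with h hh
    symm
    apply intervalIntegral.integral_eq_sub_of_hasDerivAt_of_le ht
      (fun s hs => (hh s hs).continuousWithinAt)
      (fun x hx => (hh x ⟨hx.1.le, hx.2.le⟩).hasDerivAt (Icc_mem_nhds hx.1 hx.2))
    exact (hg.comp (by fun_prop : Continuous fun s : ℝ => (s, h))).intervalIntegrable _ _
  have l1 := (c1.tendsto 0).mono_left (nhdsWithin_le_nhds (s := {0}ᶜ))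
  have l2 := (c2.tendsto 0).mono_left (nhdsWithin_le_nhds (s := {0}ᶜ))
  exact tendsto_nhds_unique (l1.congr' e) l2

/-- vector difference quotient -/
def vslp {n : ℕ} (ax : ℝ → ℝ → V n) (t x x' : ℝ) : V n :=
  fun j => slp (fun s y => ax s y j) t x x'

lemma vslp_eq {n : ℕ} {a ax : ℝ → ℝ → V n} (hd : ∀ t x, HasDerivAt (a t) (ax t x) x)
    (hcx : Continuous (Function.uncurry ax)) (t x x' : ℝ) :
    a t x' - a t x = (x' - x) • vslp ax t x x' := by
  ext j
  have := slp_eq (a := fun s y => a s y j) (ax := fun s y => ax s y j)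
    (fun t x => hasDerivAt_pi.1 (hd t x) j) ((continuous_apply j).comp hcx) t x x'
  simp only [vslp, Pi.sub_apply, Pi.smul_apply, smul_eq_mul]
  rw [this, mul_comm]

lemma vslp_cont {n : ℕ} {ax : ℝ → ℝ → V n} (hcx : Continuous (Function.uncurry ax)) :
    Continuous (fun p : ℝ × ℝ × ℝ => vslp ax p.1 p.2.1 p.2.2) :=
  continuous_pi fun j => slp_cont (ax := fun s y => ax s y j) ((continuous_apply j).comp hcx)

lemma vslp_self {n : ℕ} {ax : ℝ → ℝ → V n} (t x : ℝ) : vslp ax t x x = ax t x := by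
  ext j; exact slp_self t x

section
variable {n a : ℕ} {G : Coef n a} {T R : ℝ} {u ut ux : ℝ → ℝ → V n}

lemma dens_w (h : Sol G T u ut ux) (hL : 0 ≤ G.L) (hR : 0 ≤ R) (i : Fin n) {K : ℝ}
    {X J : ℝ → ℝ → ℝ} (hX : IsFlow T G.L K (fa G u R hR i) (fax G u ux R hR i) X J)
    (hb : ∀ t x, (t, x) ∈ Gr T R G.L → ‖u t x‖ ≤ G.κ) :
    Dens T R G.L X J (fun t x => wv G u ux t x i) (g1 G u ux) := by
  have hκ := G.κ_pos
  refine ⟨cwv h i, cg1 h, ?_⟩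
  intro t ht y hG
  have hsub : Icc (0:ℝ) t ⊆ Icc 0 T := Icc_subset_Icc le_rfl ht.2
  have hGs : ∀ s ∈ Icc (0:ℝ) t, (s, X s y) ∈ Gr T R G.L := fun s hs => Gr_back hX hs.1 hs.2 hG
  have hcX2 : Continuous (fun p : ℝ × ℝ => (p.1, X p.1 p.2)) := continuous_fst.prodMk hX.cont
  set U : ℝ → ℝ → V n := fun s η => u s (X s η) with hU
  set Ux : ℝ → ℝ → V n := fun s η => J s η • ux s (X s η) with hUx
  set Q : ℝ → ℝ → V n := fun s η => ut s (X s η) + G.lam i (U s η) • ux s (X s η) with hQ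
  set b : V n → ℝ := fun v => G.l i v ⬝ᵥ G.B v with hbdef
  have cb : ContDiff ℝ 1 b := contDiff_dot (G.cl i) G.cB
  set Lx : ℝ → ℝ → V n := fun s η => fderiv ℝ (G.l i) (U s η) (Ux s η) with hLx
  set bx : ℝ → ℝ → ℝ := fun s η => fderiv ℝ b (U s η) (Ux s η) with hbx
  have cU : Continuous (Function.uncurry U) := h.cu.comp hcX2
  have cux' : Continuous (fun p : ℝ × ℝ => ux p.1 (X p.1 p.2)) := h.cux.comp hcX2
  have cUx : Continuous (Function.uncurry Ux) := hX.contJ.smul cux'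
  have cQ : Continuous (Function.uncurry Q) :=
    (h.cut.comp hcX2).add (((G.clam i).continuous.comp cU).smul cux')
  have cDl : Continuous (fun p : ℝ × ℝ => fderiv ℝ (G.l i) (U p.1 p.2)) :=
    ((G.cl i).continuous_fderiv (by norm_num)).comp cU
  have cLx : Continuous (Function.uncurry Lx) := cDl.clm_apply cUx
  have cbx : Continuous (Function.uncurry bx) :=
    ((cb.continuous_fderiv (by norm_num)).comp cU).clm_apply cUx
  have dU : ∀ s η, HasDerivAt (U s) (Ux s η) η := fun s η =>
    (h.dx s (X s η)).scomp η (hX.deriv_y s η)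
  have dL : ∀ s η, HasDerivAt (fun η => G.l i (U s η)) (Lx s η) η := fun s η =>
    ((G.cl i).differentiable (by norm_num) _).hasFDerivAt.comp_hasDerivAt η (dU s η)
  have db : ∀ s η, HasDerivAt (fun η => b (U s η)) (bx s η) η := fun s η =>
    (cb.differentiable (by norm_num) _).hasFDerivAt.comp_hasDerivAt η (dU s η)
  have cp : Continuous (fun p : ℝ × ℝ => (p.1, y, y + p.2)) := by fun_prop
  have cp0 : Continuous (fun p : ℝ × ℝ => (p.1, y)) := by fun_prop
  have cp1 : Continuous (fun p : ℝ × ℝ => (p.1, y + p.2)) := by fun_prop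
  have cvU := (vslp_cont cUx).comp cp
  have cvL := (vslp_cont cLx).comp cp
  have cvb := (slp_cont cbx).comp cp
  set F : ℝ → ℝ → ℝ := fun s η => G.l i (U s y) ⬝ᵥ vslp Ux s y (y + η) with hF
  set g : ℝ → ℝ → ℝ := fun s η => fderiv ℝ (G.l i) (U s y) (Q s y) ⬝ᵥ vslp Ux s y (y + η) +
    (slp bx s y (y + η) - vslp Lx s y (y + η) ⬝ᵥ Q s (y + η)) with hg
  have cF : Continuous (Function.uncurry F) :=
    (((G.cl i).continuous.comp cU).comp cp0).dotProduct cvU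
  have cg : Continuous (Function.uncurry g) :=
    (((cDl.comp cp0).clm_apply (cQ.comp cp0)).dotProduct cvU).add
      (cvb.sub (cvL.dotProduct (cQ.comp cp1)))
  have key : F t 0 - F 0 0 = ∫ s in (0:ℝ)..t, g s 0 := by
    refine lim_id cF cg ht.1 ?_
    have hev : ∀ᶠ η in 𝓝 (0:ℝ), ∀ s ∈ Icc (0:ℝ) t, |X s (y + η)| < R + 1 ∧ ‖U s (y + η)‖ < 2 * G.κ := by
      apply isCompact_Icc.eventually_forall_of_forall_eventually
      intro s hs
      have cq : Continuous (fun p : ℝ × ℝ => (p.2, y + p.1)) := by fun_prop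
      have c1 : Continuous (fun p : ℝ × ℝ => |X p.2 (y + p.1)|) := (hX.cont.comp cq).abs
      have c2 : Continuous (fun p : ℝ × ℝ => ‖U p.2 (y + p.1)‖) := (cU.comp cq).norm
      have m1 : |X s (y + 0)| < R + 1 := by
        rw [add_zero]; linarith [Gr_abs hL (hGs s hs)]
      have m2 : ‖U s (y + 0)‖ < 2 * G.κ := by
        rw [add_zero]; linarith [hb _ _ (hGs s hs)]
      exact Filter.inter_mem ((isOpen_lt c1 continuous_const).mem_nhds (x := ((0:ℝ), s)) m1)
        ((isOpen_lt c2 continuous_const).mem_nhds (x := ((0:ℝ), s)) m2)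
    filter_upwards [nhdsWithin_le_nhds hev, self_mem_nhdsWithin] with η hη hη0 s hs
    obtain ⟨k1, k2⟩ := hη s hs
    have hη0 : η ≠ 0 := hη0
    have k3 : ‖U s y‖ ≤ 2 * G.κ := by linarith [hb _ _ (hGs s hs)]
    have k4 : |X s y| ≤ R + 1 := by linarith [Gr_abs hL (hGs s hs)]
    have d1 : HasDerivWithinAt (fun s => U s y) (Q s y) (Icc 0 t) s :=
      (u_char h hL hR i hX (hsub hs) k4).mono hsub
    have d2 : HasDerivWithinAt (fun s => U s (y + η)) (Q s (y + η)) (Icc 0 t) s :=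
      (u_char h hL hR i hX (hsub hs) k1.le).mono hsub
    have eU : ∀ s, vslp Ux s y (y + η) = η⁻¹ • (U s (y + η) - U s y) := by
      intro s
      rw [vslp_eq dU cUx s y (y + η), add_sub_cancel_left, smul_smul, inv_mul_cancel₀ hη0, one_smul]
    have eL : G.l i (U s (y + η)) - G.l i (U s y) = η • vslp Lx s y (y + η) := by
      rw [vslp_eq dL cLx s y (y + η), add_sub_cancel_left]
    have eb : b (U s (y + η)) - b (U s y) = slp bx s y (y + η) * η := by
      rw [slp_eq db cbx s y (y + η), add_sub_cancel_left]
    have b1 : G.l i (U s y) ⬝ᵥ Q s y = b (U s y) := h.pde s (hsub hs) _ k3 i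
    have b2 : G.l i (U s (y + η)) ⬝ᵥ Q s (y + η) = b (U s (y + η)) := h.pde s (hsub hs) _ k2.le i
    have d3 : HasDerivWithinAt (fun s => vslp Ux s y (y + η)) (η⁻¹ • (Q s (y + η) - Q s y))
        (Icc 0 t) s := by
      simp only [eU]; exact (d2.fun_sub d1).fun_const_smul _
    have d4 : HasDerivWithinAt (fun s => G.l i (U s y)) (fderiv ℝ (G.l i) (U s y) (Q s y))
        (Icc 0 t) s :=
      ((G.cl i).differentiable (by norm_num) _).hasFDerivAt.comp_hasDerivWithinAt s d1
    have d5 : HasDerivWithinAt (fun s => F s η) (fderiv ℝ (G.l i) (U s y) (Q s y) ⬝ᵥ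
        vslp Ux s y (y + η) + G.l i (U s y) ⬝ᵥ (η⁻¹ • (Q s (y + η) - Q s y))) (Icc 0 t) s := by
      simp only [hF, dotProduct]
      rw [← Finset.sum_add_distrib]
      exact HasDerivWithinAt.fun_sum fun j _ =>
        (hasDerivWithinAt_pi.1 d4 j).mul (hasDerivWithinAt_pi.1 d3 j)
    refine d5.congr_deriv ?_
    simp only [hg]
    congr 1
    have e1 : η • vslp Lx s y (y + η) ⬝ᵥ Q s (y + η) =
        b (U s (y + η)) - G.l i (U s y) ⬝ᵥ Q s (y + η) := by
      rw [← b2, ← eL, sub_dotProduct]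
    rw [dotProduct_smul, dotProduct_sub, b1]
    rw [smul_dotProduct] at e1
    simp only [smul_eq_mul] at e1 ⊢
    field_simp
    linarith
  have hF0 : ∀ s, F s 0 = wv G u ux s (X s y) i * J s y := by
    intro s
    simp only [hF, add_zero, vslp_self, hUx, wv, lw, dotProduct_smul, smul_eq_mul, hU]
    ring
  have hg0 : ∀ s ∈ Icc (0:ℝ) t, |g s 0| ≤ g1 G u ux s (X s y) * J s y := by
    intro s hs
    have hu := hb _ _ (hGs s hs)
    have := G.hw i (U s y) (ux s (X s y)) (Q s y) hu
      (fun k => char_rel h (hsub hs) (by linarith) i k)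
    have e : g s 0 = (fderiv ℝ (G.l i) (U s y) (Q s y) ⬝ᵥ ux s (X s y) -
        fderiv ℝ (G.l i) (U s y) (ux s (X s y)) ⬝ᵥ Q s y +
        fderiv ℝ (fun v => G.l i v ⬝ᵥ G.B v) (U s y) (ux s (X s y))) * J s y := by
      simp only [hg, add_zero, vslp_self, slp_self, hUx, hLx, hbx, dotProduct_smul, smul_dotProduct,
        map_smul, smul_eq_mul]
      ring
    rw [e, abs_mul, abs_of_pos (hX.J_pos s y)]
    exact mul_le_mul_of_nonneg_right this (hX.J_pos s y).le
  have hcX : Continuous (fun s => (s, X s y)) :=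
    continuous_id.prodMk (hX.cont.comp (by fun_prop : Continuous fun s : ℝ => (s, y)))
  have hcJ : Continuous (fun s => J s y) := hX.contJ.comp (by fun_prop : Continuous fun s : ℝ => (s, y))
  have hcg : Continuous (fun s => g1 G u ux s (X s y) * J s y) := ((cg1 h).comp hcX).mul hcJ
  have cg0 : Continuous (fun s => g s 0) := cg.comp (by fun_prop : Continuous fun s : ℝ => (s, (0:ℝ)))
  have fin : ENNReal.ofReal |F t 0 - F 0 0| ≤
      ∫⁻ s in Icc 0 t, ENNReal.ofReal (g1 G u ux s (X s y) * J s y) := by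
    rw [← ofReal_integral_eq_lintegral_ofReal hcg.continuousOn.integrableOn_Icc]
    · refine ENNReal.ofReal_le_ofReal ?_
      rw [key, integral_Icc_eq_integral_Ioc, ← intervalIntegral.integral_of_le ht.1]
      refine (intervalIntegral.abs_integral_le_integral_abs ht.1).trans ?_
      exact intervalIntegral.integral_mono_on ht.1 (cg0.abs.intervalIntegrable _ _)
        (hcg.intervalIntegrable _ _) hg0
    · rw [EventuallyLE, ae_restrict_iff' measurableSet_Icc]
      exact ae_of_all _ fun s hs => (abs_nonneg _).trans (hg0 s hs)
  rw [hF0, hF0, hX.zero, hX.J_zero, mul_one] at fin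
  refine le_trans ?_ (add_le_add le_rfl fin)
  rw [← ENNReal.ofReal_add (abs_nonneg _) (abs_nonneg _)]
  refine ENNReal.ofReal_le_ofReal ?_
  have h1 := abs_add_le (wv G u ux 0 y i) (wv G u ux t (X t y) i * J t y - wv G u ux 0 y i)
  rw [add_sub_cancel, abs_mul, abs_of_pos (hX.J_pos t y)] at h1
  exact h1

end
end LS

namespace LS

/-- space-time integral over the domain -/
def dI (T R L : ℝ) (φ : ℝ → ℝ → ℝ) : ℝ≥0∞ :=
  ∫⁻ s in Icc 0 T, ∫⁻ x, chi T R L s x * ENNReal.ofReal (φ s x)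

section
variable {T R L : ℝ} {φ ψ : ℝ → ℝ → ℝ}

lemma dI_meas (hφ : Continuous (Function.uncurry φ)) :
    Measurable (fun p : ℝ × ℝ => chi T R L p.1 p.2 * ENNReal.ofReal (φ p.1 p.2)) :=
  (chi_meas T R L).mul hφ.measurable.ennreal_ofReal

lemma dI_mono (h : ∀ t x, (t, x) ∈ Gr T R L → φ t x ≤ ψ t x) : dI T R L φ ≤ dI T R L ψ := by
  refine lintegral_mono fun s => lintegral_mono fun x => ?_
  by_cases hG : (s, x) ∈ Gr T R L
  · exact mul_le_mul_right (ENNReal.ofReal_le_ofReal (h s x hG)) _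
  · simp [chi_of_notMem hG]

lemma dI_add (hφ : Continuous (Function.uncurry φ)) :
    dI T R L (fun t x => φ t x + ψ t x) ≤ dI T R L φ + dI T R L ψ := by
  unfold dI
  have m := dI_meas (T := T) (R := R) (L := L) hφ
  rw [← lintegral_add_left m.lintegral_prod_right']
  refine lintegral_mono fun s => ?_
  simp only
  have m' : Measurable (fun x => chi T R L s x * ENNReal.ofReal (φ s x)) :=
    m.comp measurable_prodMk_left
  rw [← lintegral_add_left m']
  refine lintegral_mono fun x => ?_
  simp only
  rw [← mul_add]
  exact mul_le_mul_right ENNReal.ofReal_add_le _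

lemma dI_sum {ι : Type*} (s : Finset ι) {φ : ι → ℝ → ℝ → ℝ}
    (hφ : ∀ i, Continuous (Function.uncurry (φ i))) :
    dI T R L (fun t x => ∑ i ∈ s, φ i t x) ≤ ∑ i ∈ s, dI T R L (φ i) := by
  classical
  induction s using Finset.induction_on with
  | empty => simp [dI]
  | insert i s hi ih =>
    simp only [Finset.sum_insert hi]
    exact (dI_add (hφ i)).trans (add_le_add le_rfl ih)

lemma dI_sum_le {ι : Type*} [Fintype ι] {φ : ι → ℝ → ℝ → ℝ} {N : ℝ}
    (hφ : ∀ i, Continuous (Function.uncurry (φ i)))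
    (hN : ∀ i, dI T R L (φ i) ≤ ENNReal.ofReal N) :
    dI T R L (fun t x => ∑ i, φ i t x) ≤ ENNReal.ofReal (Fintype.card ι * N) := by
  refine (dI_sum Finset.univ hφ).trans ?_
  refine (Finset.sum_le_card_nsmul _ _ _ fun i _ => hN i).trans ?_
  rw [nsmul_eq_mul, ENNReal.ofReal_mul (by positivity)]
  simp

lemma dI_const {k : ℝ} (hk : 0 ≤ k) :
    dI T R L (fun t x => k * φ t x) = ENNReal.ofReal k * dI T R L φ := by
  unfold dI
  rw [← lintegral_const_mul' _ _ ENNReal.ofReal_ne_top]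
  refine lintegral_congr fun s => ?_
  rw [← lintegral_const_mul' _ _ ENNReal.ofReal_ne_top]
  refine lintegral_congr fun x => ?_
  rw [ENNReal.ofReal_mul hk]; ring

lemma dI_slice {z : ℝ → ℝ → ℝ} {N : ℝ≥0∞} {k : ℝ} (hk : 0 ≤ k)
    (hN : ∀ t ∈ Icc (0:ℝ) T, ∫⁻ x, chi T R L t x * ENNReal.ofReal |z t x| ≤ N)
    (h : ∀ t x, (t, x) ∈ Gr T R L → φ t x ≤ k * |z t x|) :
    dI T R L φ ≤ ENNReal.ofReal k * (N * ENNReal.ofReal T) := by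
  refine (dI_mono (ψ := fun t x => k * |z t x|) h).trans ?_
  rw [dI_const hk]
  refine mul_le_mul_right ?_ _
  unfold dI
  refine (setLIntegral_mono measurable_const (g := fun _ => N) hN).trans ?_
  rw [setLIntegral_const]; simp

end

section
variable {n a : ℕ} {G : Coef n a} {T R : ℝ} {u ut ux : ℝ → ℝ → V n}

/-- the total source -/
def Hs (a : ℕ) (G : Coef n a) (u ux : ℝ → ℝ → V n) (t x : ℝ) : ℝ :=
  h1 (u t x) (wv G u ux t x) + h2 (u t x) + h3 a (u t x) (wv G u ux t x)

lemma gap_fa (hL : 0 ≤ G.L) (hR : 0 ≤ R) (hb : ∀ t x, (t, x) ∈ Gr T R G.L → ‖u t x‖ ≤ G.κ)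
    {i j : Fin n} (hij : i ≠ j) :
    (∀ t x, (t, x) ∈ Gr T R G.L → G.c ≤ fa G u R hR j t x - fa G u R hR i t x) ∨
    (∀ t x, (t, x) ∈ Gr T R G.L → G.c ≤ fa G u R hR i t x - fa G u R hR j t x) := by
  have e : ∀ k t x, (t, x) ∈ Gr T R G.L → fa G u R hR k t x = G.lam k (u t x) := fun k t x h =>
    fa_eq hR k (by linarith [Gr_abs hL h])
  rcases lt_or_gt_of_ne hij with h | h
  · left; intro t x hG
    rw [e _ _ _ hG, e _ _ _ hG]; exact G.gap i j h _ (hb _ _ hG)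
  · right; intro t x hG
    rw [e _ _ _ hG, e _ _ _ hG]; exact G.gap j i h _ (hb _ _ hG)

variable {K : Fin n → ℝ} {X J : Fin n → ℝ → ℝ → ℝ}

lemma off_cross (hL : 0 ≤ G.L) (hR : 0 ≤ R)
    (hX : ∀ i, IsFlow T G.L (K i) (fa G u R hR i) (fax G u ux R hR i) (X i) (J i))
    (hb : ∀ t x, (t, x) ∈ Gr T R G.L → ‖u t x‖ ≤ G.κ)
    {z : ℝ → ℝ → V n} {g : ℝ → ℝ → ℝ}
    (hd : ∀ j, Dens T R G.L (X j) (J j) (fun t x => z t x j) g) {N : ℝ} (hN0 : 0 ≤ N)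
    (hN : ∀ j, mass T R G.L (fun t x => z t x j) g ≤ ENNReal.ofReal N)
    (i : Fin n) {t y : ℝ} (ht : t ∈ Icc (0:ℝ) T) (hG : (t, X i t y) ∈ Gr T R G.L) :
    ∫⁻ s in Icc 0 t, ENNReal.ofReal (off (z s (X i s y)) i) ≤ ENNReal.ofReal (n / G.c * N) := by
  have hc := G.c_pos
  have hsub : Icc (0:ℝ) t ⊆ Icc 0 T := Icc_subset_Icc le_rfl ht.2
  have hcX : Continuous (fun s => (s, X i s y)) :=
    continuous_id.prodMk ((hX i).cont.comp (by fun_prop : Continuous fun s : ℝ => (s, y)))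
  have e : ∀ s, ENNReal.ofReal (off (z s (X i s y)) i) =
      ∑ j, ENNReal.ofReal (if j = i then 0 else |z s (X i s y) j|) := by
    intro s
    unfold off
    rw [ENNReal.ofReal_sum_of_nonneg]
    intro j _; split_ifs <;> positivity
  simp only [e]
  rw [lintegral_finsetSum]
  · have : ∀ j, ∫⁻ s in Icc 0 t, ENNReal.ofReal (if j = i then 0 else |z s (X i s y) j|) ≤
        ENNReal.ofReal (1 / G.c * N) := by
      intro j
      by_cases hj : j = i
      · simp [hj]
      · simp only [hj, if_false]
        refine (crossing (hX j) (hd j) hc (gap_fa hL hR hb hj) ht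
          (fun s hs => ((hX i).hasDeriv y s (hsub hs)).mono hsub)
          (fun s hs => Gr_back (hX i) hs.1 hs.2 hG)).trans ?_
        rw [ENNReal.ofReal_mul (by positivity)]
        exact mul_le_mul_right (hN j) _
    refine (Finset.sum_le_card_nsmul _ _ _ fun i _ => this i).trans ?_
    have e2 : (n:ℝ) / G.c * N = n * (1 / G.c * N) := by ring
    rw [nsmul_eq_mul, e2, ENNReal.ofReal_mul (p := (n:ℝ)) (by positivity)]
    simp
  · intro j _
    have c1 : Continuous fun s => z s (X i s y) j := (hd j).cz.comp hcX
    split_ifs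
    · simp
    · exact c1.measurable.norm.ennreal_ofReal

lemma c_off (z : ℝ → V n) (i : Fin n) (hz : ∀ j, Continuous fun s => z s j) :
    Continuous fun s => off (z s) i := by
  unfold off
  refine continuous_finsetSum _ fun j _ => ?_
  split_ifs
  · exact continuous_const
  · exact (hz j).abs

/-- variation of `u_i` along the `i`-th characteristic -/
lemma char_var (h : Sol G T u ut ux) (hL : 0 ≤ G.L) (hR : 0 ≤ R)
    (hX : ∀ i, IsFlow T G.L (K i) (fa G u R hR i) (fax G u ux R hR i) (X i) (J i))
    (hb : ∀ t x, (t, x) ∈ Gr T R G.L → ‖u t x‖ ≤ G.κ) {U Nu Nw : ℝ}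
    (hU0 : 0 ≤ U) (hU : ∀ t x, (t, x) ∈ Gr T R G.L → ‖u t x‖ ≤ U) (hNu0 : 0 ≤ Nu) (hNw0 : 0 ≤ Nw)
    (hNu : ∀ j, mass T R G.L (fun t x => u t x j) (g2 G u ux) ≤ ENNReal.ofReal Nu)
    (hNw : ∀ j, mass T R G.L (fun t x => wv G u ux t x j) (g1 G u ux) ≤ ENNReal.ofReal Nw)
    (i : Fin n) {t y : ℝ} (ht : t ∈ Icc (0:ℝ) T) (hG : (t, X i t y) ∈ Gr T R G.L) :
    |u t (X i t y) i - u 0 y i| ≤ G.C * U * (n / G.c * Nu + n / G.c * Nw) := by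
  have hc := G.c_pos
  have hκ := G.κ_pos
  have hC : 0 ≤ G.C := zero_le_one.trans G.C_one
  have hsub : Icc (0:ℝ) t ⊆ Icc 0 T := Icc_subset_Icc le_rfl ht.2
  have hGs : ∀ s ∈ Icc (0:ℝ) t, (s, X i s y) ∈ Gr T R G.L :=
    fun s hs => Gr_back (hX i) hs.1 hs.2 hG
  have hcX : Continuous (fun s => (s, X i s y)) :=
    continuous_id.prodMk ((hX i).cont.comp (by fun_prop : Continuous fun s : ℝ => (s, y)))
  have cu' : Continuous fun s => off (u s (X i s y)) i := c_off _ i fun j => (cui h j).comp hcX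
  have cw' : Continuous fun s => off (wv G u ux s (X i s y)) i :=
    c_off _ i fun j => (cwv h j).comp hcX
  have key := abs_le_lint (φ := fun s => u s (X i s y) i)
    (φ' := fun s => (ut s (X i s y) + G.lam i (u s (X i s y)) • ux s (X i s y)) i)
    (g := fun s => G.C * U * (off (u s (X i s y)) i + off (wv G u ux s (X i s y)) i)) ht.1
    (fun s hs => (hasDerivWithinAt_pi.1 (u_char h hL hR i (hX i) (hsub hs) (y := y)
      (by linarith [Gr_abs hL (hGs s hs)])) i).mono hsub)
    (by
      intro s hs
      have hu := hb _ _ (hGs s hs)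
      refine (G.hq i _ _ _ hu (fun k => char_rel h (hsub hs) (by linarith) i k)).trans ?_
      exact mul_le_mul_of_nonneg_right (mul_le_mul_of_nonneg_left (hU _ _ (hGs s hs)) hC)
        (add_nonneg (off_nonneg _ _) (off_nonneg _ _)))
    ((continuous_const.mul (cu'.add cw')).continuousOn)
  simp only [(hX i).zero] at key
  have e : ∫⁻ s in Icc 0 t, ENNReal.ofReal (G.C * U * (off (u s (X i s y)) i +
      off (wv G u ux s (X i s y)) i)) ≤
      ENNReal.ofReal (G.C * U * (n / G.c * Nu + n / G.c * Nw)) := by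
    have e1 : ∀ s, ENNReal.ofReal (G.C * U * (off (u s (X i s y)) i +
      off (wv G u ux s (X i s y)) i)) = ENNReal.ofReal (G.C * U) *
        (ENNReal.ofReal (off (u s (X i s y)) i) + ENNReal.ofReal (off (wv G u ux s (X i s y)) i)) := by
      intro s
      rw [ENNReal.ofReal_mul (by positivity), ENNReal.ofReal_add (off_nonneg _ _) (off_nonneg _ _)]
    simp only [e1]
    rw [lintegral_const_mul' _ _ ENNReal.ofReal_ne_top,
      lintegral_add_left cu'.measurable.ennreal_ofReal,
      ENNReal.ofReal_mul (p := G.C * U) (by positivity),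
      ENNReal.ofReal_add (by positivity) (by positivity)]
    refine mul_le_mul_right (add_le_add ?_ ?_) _
    · exact off_cross hL hR hX hb (fun j => dens_u h hL hR j (hX j) hb) hNu0 hNu i ht hG
    · exact off_cross hL hR hX hb (fun j => dens_w h hL hR j (hX j) hb) hNw0 hNw i ht hG
  have := key.trans e
  rwa [ENNReal.ofReal_le_ofReal_iff (by positivity)] at this

end
end LS

namespace LS

lemma apriori_alg {C c N σ p q1 q ν A E Nw Nu : ℝ} (hC : 1 ≤ C) (hc : 0 < c) (hN : 0 ≤ N)
    (hq1 : 0 ≤ q1) (hq : 0 ≤ q) (hqν : q ≤ ν) (hq1q : q1 ≤ q) (hA : 0 ≤ A) (hE : 0 ≤ E)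
    (hσ : σ = A + C * ν) (hS : 4 * C * N * σ ≤ c) (hNw : Nw = A + C * q1) (hNu : Nu = A + C * q)
    (i1 : q1 ≤ N * (1 / c * Nw * Nw + 1 / c * Nu * Nw)) (hp : p = A + C * ν) :
    Nw ≤ 2 * A ∧ 0 ≤ Nw ∧ 0 ≤ Nu ∧ C * (N / c * Nu + N / c * Nw) ≤ 1 / 2 ∧
    (q ≤ N * (1 / c * Nw * Nw + 1 / c * Nu * Nw) + N * (1 / c * Nu * Nu) + E →
      q ≤ Nu ∧ Nu ≤ 4 * A + 2 * C * E) := by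
  have hC0 : 0 < C := by linarith
  have w0 : 0 ≤ Nw := by rw [hNw]; positivity
  have u0 : 0 ≤ Nu := by rw [hNu]; positivity
  have wσ : Nw ≤ σ := by rw [hNw, hσ]; nlinarith
  have uσ : Nu ≤ σ := by rw [hNu, hσ]; nlinarith
  set k := C * (N / c) with hk
  have hk0 : 0 ≤ k := by positivity
  have hkσ : k * σ ≤ 1 / 4 := by
    have : k * σ = (4 * C * N * σ) / c / 4 := by rw [hk]; field_simp
    rw [this]
    have := (div_le_one hc).2 hS
    linarith
  have e1 : C * q1 ≤ k * (Nw + Nu) * Nw := by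
    calc C * q1 ≤ C * (N * (1 / c * Nw * Nw + 1 / c * Nu * Nw)) := mul_le_mul_of_nonneg_left i1 hC0.le
      _ = _ := by rw [hk]; ring
  have ks : k * (Nw + Nu) ≤ 1 / 2 := by nlinarith
  have w2 : Nw ≤ 2 * A := by nlinarith
  refine ⟨w2, w0, u0, ?_, ?_⟩
  · calc C * (N / c * Nu + N / c * Nw) = k * (Nw + Nu) := by rw [hk]; ring
      _ ≤ _ := ks
  · intro i2
    have e2 : C * q ≤ k * (Nw + Nu) * (Nw + Nu) + C * E := by
      calc C * q ≤ C * (N * (1 / c * Nw * Nw + 1 / c * Nu * Nw) + N * (1 / c * Nu * Nu) + E) :=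
            mul_le_mul_of_nonneg_left i2 hC0.le
        _ = k * (Nw * Nw + Nu * Nw + Nu * Nu) + C * E := by rw [hk]; ring
        _ ≤ k * ((Nw + Nu) * (Nw + Nu)) + C * E := by
            have : Nw * Nw + Nu * Nw + Nu * Nu ≤ (Nw + Nu) * (Nw + Nu) := by nlinarith
            nlinarith
        _ = _ := by ring
    have e3 : k * (Nw + Nu) * (Nw + Nu) ≤ 1 / 2 * (Nw + Nu) :=
      mul_le_mul_of_nonneg_right ks (by linarith)
    constructor
    · rw [hNu]; nlinarith
    · linarith

lemma le_ofReal_toReal {x : ℝ≥0∞} {y : ℝ} (hy : 0 ≤ y) (h : x ≤ ENNReal.ofReal y) :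
    x.toReal ≤ y := by
  have := ENNReal.toReal_mono ENNReal.ofReal_ne_top h
  rwa [ENNReal.toReal_ofReal hy] at this

section
variable {n a : ℕ} {G : Coef n a} {T R : ℝ} {u ut ux : ℝ → ℝ → V n}
variable {K : Fin n → ℝ} {X J : Fin n → ℝ → ℝ → ℝ}

lemma dI_pair (hL : 0 ≤ G.L) (hR : 0 ≤ R)
    (hX : ∀ i, IsFlow T G.L (K i) (fa G u R hR i) (fax G u ux R hR i) (X i) (J i))
    (hb : ∀ t x, (t, x) ∈ Gr T R G.L → ‖u t x‖ ≤ G.κ)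
    {z z2 : ℝ → ℝ → V n} {g g' : ℝ → ℝ → ℝ}
    (hd : ∀ j, Dens T R G.L (X j) (J j) (fun t x => z t x j) g)
    (hd2 : ∀ j, Dens T R G.L (X j) (J j) (fun t x => z2 t x j) g') {N N' : ℝ} (hN0 : 0 ≤ N)
    (hN : ∀ j, mass T R G.L (fun t x => z t x j) g ≤ ENNReal.ofReal N)
    (hN' : ∀ j, mass T R G.L (fun t x => z2 t x j) g' ≤ ENNReal.ofReal N')
    {j k : Fin n} (hjk : j ≠ k) :
    dI T R G.L (fun t x => |z t x j| * |z2 t x k|) ≤ ENNReal.ofReal (1 / G.c * N * N') := by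
  have hc := G.c_pos
  refine (interact (hX j) (hd j) (hX k) (hd2 k) hc (gap_fa hL hR hb hjk)).trans ?_
  rw [ENNReal.ofReal_mul (p := 1 / G.c * N) (by positivity), ENNReal.ofReal_mul (by positivity)]
  gcongr
  · exact hN j
  · exact hN' k

lemma dI_h1 (h : Sol G T u ut ux) (hL : 0 ≤ G.L) (hR : 0 ≤ R)
    (hX : ∀ i, IsFlow T G.L (K i) (fa G u R hR i) (fax G u ux R hR i) (X i) (J i))
    (hb : ∀ t x, (t, x) ∈ Gr T R G.L → ‖u t x‖ ≤ G.κ) {Nu Nw : ℝ}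
    (hNu0 : 0 ≤ Nu) (hNw0 : 0 ≤ Nw)
    (hNu : ∀ j, mass T R G.L (fun t x => u t x j) (g2 G u ux) ≤ ENNReal.ofReal Nu)
    (hNw : ∀ j, mass T R G.L (fun t x => wv G u ux t x j) (g1 G u ux) ≤ ENNReal.ofReal Nw) :
    dI T R G.L (fun t x => h1 (u t x) (wv G u ux t x)) ≤
      ENNReal.ofReal (n ^ 2 * (1 / G.c * Nw * Nw + 1 / G.c * Nu * Nw)) ∧
    dI T R G.L (fun t x => h2 (u t x)) ≤ ENNReal.ofReal (n ^ 2 * (1 / G.c * Nu * Nu)) := by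
  have hc := G.c_pos
  have du := fun j => dens_u h hL hR j (hX j) hb
  have dw := fun j => dens_w h hL hR j (hX j) hb
  have c1 := cwv h
  have c2 := cui h
  simp only [Function.uncurry_def] at c1 c2
  have sq : ∀ r : ℝ, (n:ℝ) ^ 2 * r = (Fintype.card (Fin n) : ℝ) * ((Fintype.card (Fin n) : ℝ) * r) := by
    intro r; rw [Fintype.card_fin]; ring
  rw [sq, sq]
  constructor
  · unfold h1
    have ct : ∀ j k : Fin n, Continuous (fun p : ℝ × ℝ => if j = k then 0 else
        (|wv G u ux p.1 p.2 j| * |wv G u ux p.1 p.2 k| + |u p.1 p.2 j| * |wv G u ux p.1 p.2 k|)) := by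
      intro j k
      split_ifs
      · exact continuous_const
      · exact ((c1 j).abs.mul (c1 k).abs).add ((c2 j).abs.mul (c1 k).abs)
    refine dI_sum_le (fun j => continuous_finsetSum _ fun k _ => ct j k) fun j => ?_
    refine dI_sum_le (fun k => ct j k) fun k => ?_
    by_cases hjk : j = k
    · simp [hjk, dI]
    · simp only [hjk, if_false]
      have cc : Continuous (Function.uncurry fun t x => |wv G u ux t x j| * |wv G u ux t x k|) :=
        (c1 j).abs.mul (c1 k).abs
      refine (dI_add cc).trans ?_
      rw [ENNReal.ofReal_add (by positivity) (by positivity)]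
      exact add_le_add (dI_pair hL hR hX hb dw dw hNw0 hNw hNw hjk)
        (dI_pair hL hR hX hb du dw hNu0 hNu hNw hjk)
  · unfold h2
    have ct : ∀ j k : Fin n, Continuous (fun p : ℝ × ℝ => if j = k then 0 else
        |u p.1 p.2 j| * |u p.1 p.2 k|) := by
      intro j k
      split_ifs
      · exact continuous_const
      · exact (c2 j).abs.mul (c2 k).abs
    refine dI_sum_le (fun j => continuous_finsetSum _ fun k _ => ct j k) fun j => ?_
    refine dI_sum_le (fun k => ct j k) fun k => ?_
    by_cases hjk : j = k
    · simp [hjk, dI]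
    · simp only [hjk, if_false]
      exact dI_pair hL hR hX hb du du hNu0 hNu hNu hjk

lemma dI_h3 (h : Sol G T u ut ux) (hL : 0 ≤ G.L) (hR : 0 ≤ R) (hT : 0 ≤ T)
    (hX : ∀ i, IsFlow T G.L (K i) (fa G u R hR i) (fax G u ux R hR i) (X i) (J i))
    (hb : ∀ t x, (t, x) ∈ Gr T R G.L → ‖u t x‖ ≤ G.κ) {U Nw : ℝ} (hU0 : 0 ≤ U)
    (hU : ∀ t x, (t, x) ∈ Gr T R G.L → ‖u t x‖ ≤ U) (hNw0 : 0 ≤ Nw)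
    (hNw : ∀ j, mass T R G.L (fun t x => wv G u ux t x j) (g1 G u ux) ≤ ENNReal.ofReal Nw) :
    dI T R G.L (fun t x => h3 a (u t x) (wv G u ux t x)) ≤
      ENNReal.ofReal (n * (U ^ (a + 1) * (Nw * T))) := by
  have c1 := cwv h
  have c2 := cui h
  simp only [Function.uncurry_def] at c1 c2
  unfold h3
  have := dI_sum_le (T := T) (R := R) (L := G.L) (N := U ^ (a + 1) * (Nw * T))
    (φ := fun (j : Fin n) t x => |u t x j| ^ (a + 1) * |wv G u ux t x j|)
    (fun j => ((c2 j).abs.pow _).mul (c1 j).abs) ?_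
  · rwa [Fintype.card_fin] at this
  · intro j
    refine (dI_slice (k := U ^ (a + 1)) (by positivity)
      (fun t ht => (lint_slice (hX j) (dens_w h hL hR j (hX j) hb) ht).trans (hNw j)) ?_).trans ?_
    · intro t x hG
      refine mul_le_mul_of_nonneg_right (pow_le_pow_left₀ (abs_nonneg _) ?_ _) (abs_nonneg _)
      exact (norm_le_pi_norm (u t x) j).trans (hU t x hG)
    · rw [← ENNReal.ofReal_mul hNw0, ← ENNReal.ofReal_mul (by positivity)]

lemma Gr_compact (T R L : ℝ) (hL : 0 ≤ L) : IsCompact (Gr T R L) := by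
  refine (isCompact_Icc.prod isCompact_Icc : IsCompact (Icc (0:ℝ) T ×ˢ Icc (-R) R)).of_isClosed_subset
    (Gr_closed T R L) ?_
  rintro ⟨t, x⟩ hG
  exact ⟨⟨hG.1, hG.2.1⟩, abs_le.1 (Gr_abs hL hG)⟩

end

theorem apriori {n a : ℕ} (G : Coef n a) (hL : 0 ≤ G.L) {A T0 : ℝ} (hA : 0 < A) (hT0 : 0 < T0) :
    ∃ ν ε0 B : ℝ, 0 < ν ∧ 0 < ε0 ∧ 0 < B ∧ ∀ (ε T R : ℝ) (u ut ux : ℝ → ℝ → V n), 0 < ε → ε ≤ ε0 →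
      0 ≤ T → T * ε ^ (a + 1) ≤ T0 → 0 ≤ R → Sol G T u ut ux →
      (∀ t x, (t, x) ∈ Gr T R G.L → ‖u t x‖ ≤ G.κ) →
      (∀ i, ∫⁻ y, chi T R G.L 0 y * ENNReal.ofReal |wv G u ux 0 y i| ≤ ENNReal.ofReal (A * ε)) →
      (∀ i, ∫⁻ y, chi T R G.L 0 y * ENNReal.ofReal |u 0 y i| ≤ ENNReal.ofReal (A * ε)) →
      (∀ y, ‖u 0 y‖ ≤ A * ε) →
      dI T R G.L (Hs a G u ux) ≤ ENNReal.ofReal ν →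
      (∀ t x, (t, x) ∈ Gr T R G.L → ‖u t x‖ ≤ B * ε) ∧
      dI T R G.L (Hs a G u ux) ≤ ENNReal.ofReal (B * ε) ∧
      (∀ i, mass T R G.L (fun t x => u t x i) (g2 G u ux) ≤ ENNReal.ofReal (B * ε)) ∧
      (∀ i, mass T R G.L (fun t x => wv G u ux t x i) (g1 G u ux) ≤ ENNReal.ofReal (B * ε)) := by
  have hc := G.c_pos
  have hC1 := G.C_one
  have hC : 0 < G.C := by linarith
  set N : ℝ := (n:ℝ) ^ 2 + 1 with hN
  have hN0 : 0 < N := by positivity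
  set E0 : ℝ := n * ((2 * A) ^ (a + 1) * (2 * A * T0)) with hE0
  have hE00 : 0 ≤ E0 := by positivity
  refine ⟨G.c / (8 * G.C ^ 2 * N), G.c / (8 * G.C * N * A), 4 * A + 2 * G.C * E0, by positivity,
    by positivity, by positivity, ?_⟩
  intro ε T R u ut ux hε hεle hT hTε hR h hb hIw hIu hU0 hν
  choose Kf hKf using fun i => fa_fld h hR i
  choose X J hX using fun i => exists_flow (hKf i) hT
  set ν := G.c / (8 * G.C ^ 2 * N) with hνd
  have hν0 : 0 < ν := by positivity
  have du := fun j => dens_u h hL hR j (hX j) hb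
  have dw := fun j => dens_w h hL hR j (hX j) hb
  set Q := dI T R G.L (Hs a G u ux) with hQ
  set Q1 := dI T R G.L (fun t x => h1 (u t x) (wv G u ux t x)) with hQ1
  have hQ1Q : Q1 ≤ Q := dI_mono fun t x _ => by
    have := h2_nonneg (u t x)
    have := h3_nonneg (a := a) (u t x) (wv G u ux t x)
    simp only [Hs]; linarith
  have hQf : Q ≠ ⊤ := ne_top_of_le_ne_top ENNReal.ofReal_ne_top hν
  have hQ1f : Q1 ≠ ⊤ := ne_top_of_le_ne_top hQf hQ1Q
  set q := Q.toReal with hq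
  set q1 := Q1.toReal with hq1
  have hq0 : 0 ≤ q := ENNReal.toReal_nonneg
  have hq10 : 0 ≤ q1 := ENNReal.toReal_nonneg
  have hqν : q ≤ ν := le_ofReal_toReal hν0.le hν
  have hq1q : q1 ≤ q := ENNReal.toReal_mono hQf hQ1Q
  have Qe : Q = ENNReal.ofReal q := (ENNReal.ofReal_toReal hQf).symm
  have Q1e : Q1 = ENNReal.ofReal q1 := (ENNReal.ofReal_toReal hQ1f).symm
  have hAε : 0 < A * ε := by positivity
  have mw : ∀ j, mass T R G.L (fun t x => wv G u ux t x j) (g1 G u ux) ≤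
      ENNReal.ofReal (A * ε + G.C * q1) := by
    intro j
    rw [ENNReal.ofReal_add hAε.le (by positivity), ENNReal.ofReal_mul hC.le, ← Q1e, ← dI_const hC.le]
    exact add_le_add (hIw j) le_rfl
  have mu : ∀ j, mass T R G.L (fun t x => u t x j) (g2 G u ux) ≤
      ENNReal.ofReal (A * ε + G.C * q) := by
    intro j
    rw [ENNReal.ofReal_add hAε.le (by positivity), ENNReal.ofReal_mul hC.le, ← Qe, hQ, ← dI_const hC.le]
    exact add_le_add (hIu j) le_rfl
  set Nw := A * ε + G.C * q1 with hNw
  set Nu := A * ε + G.C * q with hNu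
  have w0 : 0 ≤ Nw := by positivity
  have u0 : 0 ≤ Nu := by positivity
  obtain ⟨j1, j2⟩ := dI_h1 h hL hR hX hb u0 w0 mu mw
  have hnN : (n:ℝ) ^ 2 ≤ N := by rw [hN]; linarith
  have hnN1 : (n:ℝ) ≤ N := by rw [hN]; nlinarith
  have i1 : q1 ≤ N * (1 / G.c * Nw * Nw + 1 / G.c * Nu * Nw) := by
    refine (le_ofReal_toReal (by positivity) j1).trans ?_
    gcongr
  have hS : 4 * G.C * N * (A * ε + G.C * ν) ≤ G.c := by
    have e1 : 8 * G.C * N * A * ε ≤ G.c := by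
      rw [le_div_iff₀ (by positivity)] at hεle; linarith
    have e2 : 8 * G.C ^ 2 * N * ν = G.c := by rw [hνd]; field_simp
    nlinarith
  obtain ⟨a1, -, -, a2, a3⟩ := apriori_alg (E := E0 * ε) hC1 hc hN0.le hq10 hq0 hqν hq1q hAε.le
    (by positivity) rfl hS hNw hNu i1 rfl
  have hUb : ∀ t x, (t, x) ∈ Gr T R G.L → ‖u t x‖ ≤ 2 * (A * ε) := by
    intro t x hG
    obtain ⟨⟨tm, xm⟩, hm, hmax⟩ := (Gr_compact T R G.L hL).exists_isMaxOn ⟨_, hG⟩ h.cu.norm.continuousOn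
    set U := ‖u tm xm‖ with hU
    have hUU : ∀ t x, (t, x) ∈ Gr T R G.L → ‖u t x‖ ≤ U := fun t x h => hmax h
    have key : U ≤ A * ε + 1 / 2 * U := by
      refine (pi_norm_le_iff_of_nonneg (by positivity)).2 fun i => ?_
      have htm : tm ∈ Icc (0:ℝ) T := ⟨hm.1, hm.2.1⟩
      obtain ⟨y, hy⟩ := (hX i).surj htm xm
      rw [← hy] at hm
      have v := char_var h hL hR hX hb (norm_nonneg _) hUU u0 w0 mu mw i htm hm
      rw [hy] at v
      have v0 : |u 0 y i| ≤ A * ε := (norm_le_pi_norm (u 0 y) i).trans (hU0 y)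
      have v1 : G.C * U * (n / G.c * Nu + n / G.c * Nw) ≤ 1 / 2 * U := by
        have : G.C * (n / G.c * Nu + n / G.c * Nw) ≤ G.C * (N / G.c * Nu + N / G.c * Nw) := by gcongr
        calc _ = G.C * (n / G.c * Nu + n / G.c * Nw) * U := by ring
          _ ≤ 1 / 2 * U := mul_le_mul_of_nonneg_right (this.trans a2) (norm_nonneg _)
      rw [Real.norm_eq_abs]
      have := abs_add_le (u 0 y i) (u tm xm i - u 0 y i)
      rw [add_sub_cancel] at this
      linarith
    linarith [hUU t x hG]
  have j3 := dI_h3 h hL hR hT hX hb (U := 2 * (A * ε)) (by positivity) hUb w0 mw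
  have hE : n * ((2 * (A * ε)) ^ (a + 1) * (Nw * T)) ≤ E0 * ε := by
    calc n * ((2 * (A * ε)) ^ (a + 1) * (Nw * T))
        ≤ n * ((2 * (A * ε)) ^ (a + 1) * (2 * (A * ε) * T)) := by gcongr
      _ = n * ((2 * A) ^ (a + 1) * (2 * A * (T * ε ^ (a + 1)))) * ε := by
          rw [show 2 * (A * ε) = 2 * A * ε by ring, mul_pow]; ring
      _ ≤ n * ((2 * A) ^ (a + 1) * (2 * A * T0)) * ε := by gcongr
      _ = _ := rfl
  have i2 : q ≤ N * (1 / G.c * Nw * Nw + 1 / G.c * Nu * Nw) + N * (1 / G.c * Nu * Nu) + E0 * ε := by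
    have s : Q ≤ ENNReal.ofReal (n ^ 2 * (1 / G.c * Nw * Nw + 1 / G.c * Nu * Nw) +
        n ^ 2 * (1 / G.c * Nu * Nu) + n * ((2 * (A * ε)) ^ (a + 1) * (Nw * T))) := by
      rw [ENNReal.ofReal_add (by positivity) (by positivity),
        ENNReal.ofReal_add (by positivity) (by positivity)]
      have cc : Continuous (Function.uncurry fun t x => h1 (u t x) (wv G u ux t x) + h2 (u t x)) :=
        (ch1 h).add (ch2 h)
      refine (dI_add cc).trans (add_le_add ((dI_add (ch1 h)).trans (add_le_add j1 j2)) j3)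
    refine (le_ofReal_toReal (by positivity) s).trans ?_
    gcongr
  obtain ⟨b1, b2⟩ := a3 i2
  have hBε : (4 * A + 2 * G.C * E0) * ε = 4 * (A * ε) + 2 * G.C * (E0 * ε) := by ring
  have hCE : 0 ≤ 2 * G.C * (E0 * ε) := by positivity
  rw [hBε]
  refine ⟨fun t x hG => ?_, ?_, fun i => ?_, fun i => ?_⟩
  · linarith [hUb t x hG]
  · rw [Qe]; exact ENNReal.ofReal_le_ofReal (b1.trans b2)
  · exact (mu i).trans (ENNReal.ofReal_le_ofReal b2)
  · exact (mw i).trans (ENNReal.ofReal_le_ofReal (by linarith))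

end LS

namespace LS

lemma dI_step {T R L τ τ' : ℝ} (hL : 0 ≤ L) (hR : 0 ≤ R) (h0 : 0 ≤ τ) (h1 : τ ≤ τ') (h2 : τ' ≤ T)
    {φ : ℝ → ℝ → ℝ} {H : ℝ} (hH0 : 0 ≤ H)
    (hH : ∀ t ∈ Icc (0:ℝ) T, ∀ x ∈ Icc (-R) R, φ t x ≤ H) :
    dI τ' R L φ ≤ dI τ R L φ + ENNReal.ofReal (H * (2 * R) * (τ' - τ)) := by
  unfold dI
  rw [← Icc_union_Ioc_eq_Icc h0 h1, lintegral_union measurableSet_Ioc]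
  · refine add_le_add ?_ ?_
    · refine setLIntegral_mono' measurableSet_Icc fun s hs => lintegral_mono fun x => ?_
      simp only
      by_cases hG : (s, x) ∈ Gr τ' R L
      · rw [chi_of_mem hG, chi_of_mem (T := τ) ⟨hG.1, hs.2, hG.2.2⟩]
      · rw [chi_of_notMem hG]; simp
    · have : ∀ s ∈ Ioc τ τ', ∫⁻ x, chi τ' R L s x * ENNReal.ofReal (φ s x) ≤
          ENNReal.ofReal (H * (2 * R)) := by
        intro s hs
        have hs' : s ∈ Icc (0:ℝ) T := ⟨h0.trans hs.1.le, hs.2.trans h2⟩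
        calc ∫⁻ x, chi τ' R L s x * ENNReal.ofReal (φ s x)
            ≤ ∫⁻ x, (Icc (-R) R).indicator (fun _ => ENNReal.ofReal H) x := by
              refine lintegral_mono fun x => ?_
              by_cases hG : (s, x) ∈ Gr τ' R L
              · have hx : x ∈ Icc (-R) R := abs_le.1 (Gr_abs hL hG)
                simp only [chi_of_mem hG, one_mul, indicator_of_mem hx]
                exact ENNReal.ofReal_le_ofReal (hH s hs' x hx)
              · simp [chi_of_notMem hG]
          _ = ENNReal.ofReal (H * (2 * R)) := by
              rw [lintegral_indicator measurableSet_Icc, setLIntegral_const, Real.volume_Icc,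
                ENNReal.ofReal_mul hH0]
              congr 2; ring
      refine (setLIntegral_mono measurable_const this).trans ?_
      rw [setLIntegral_const, Real.volume_Ioc, ← ENNReal.ofReal_mul (by positivity)]
  · rw [Set.disjoint_left]; intro x hx hx'; exact absurd hx.2 (not_le.2 hx'.1)

theorem boot {n a : ℕ} (G : Coef n a) (hL : 0 ≤ G.L) {A T0 : ℝ} (hA : 0 < A) (hT0 : 0 < T0) :
    ∃ ε0 B : ℝ, 0 < ε0 ∧ 0 < B ∧ ∀ (ε T R : ℝ) (u ut ux : ℝ → ℝ → V n), 0 < ε → ε ≤ ε0 →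
      0 ≤ T → T * ε ^ (a + 1) ≤ T0 → 0 ≤ R → Sol G T u ut ux →
      (∀ i, ∫⁻ y, ENNReal.ofReal |wv G u ux 0 y i| ≤ ENNReal.ofReal (A * ε)) →
      (∀ i, ∫⁻ y, ENNReal.ofReal |u 0 y i| ≤ ENNReal.ofReal (A * ε)) →
      (∀ y, ‖u 0 y‖ ≤ A * ε) →
      (∀ t x, (t, x) ∈ Gr T R G.L → ‖u t x‖ ≤ G.κ) ∧
      (∀ t x, (t, x) ∈ Gr T R G.L → ‖u t x‖ ≤ B * ε) ∧
      (∀ i, mass T R G.L (fun t x => u t x i) (g2 G u ux) ≤ ENNReal.ofReal (B * ε)) ∧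
      (∀ i, mass T R G.L (fun t x => wv G u ux t x i) (g1 G u ux) ≤ ENNReal.ofReal (B * ε)) := by
  obtain ⟨ν, ε0, B, hν, hε0, hB, H⟩ := apriori G hL hA hT0
  have hκ := G.κ_pos
  refine ⟨min ε0 (min (G.κ / (2 * B)) (min (ν / (2 * B)) (G.κ / A))), B, by positivity, hB, ?_⟩
  intro ε T R u ut ux hε hεle hT hTε hR h hIw hIu hU0
  simp only [le_min_iff] at hεle
  obtain ⟨e1, e2, e3, e4⟩ := hεle
  rw [le_div_iff₀ (by positivity)] at e2 e3 e4
  have chile : ∀ τ x, chi τ R G.L 0 x ≤ 1 := fun τ x => by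
    by_cases hG : ((0:ℝ), x) ∈ Gr τ R G.L
    · rw [chi_of_mem hG]
    · rw [chi_of_notMem hG]; exact zero_le_one
  have H' := fun τ (hτ : τ ∈ Icc (0:ℝ) T) => H ε τ R u ut ux hε e1 hτ.1
    ((mul_le_mul_of_nonneg_right hτ.2 (by positivity)).trans hTε) hR (h.mono hτ.2)
  set P : ℝ → Prop := fun τ => (∀ t x, (t, x) ∈ Gr τ R G.L → ‖u t x‖ ≤ G.κ) ∧
    dI τ R G.L (Hs a G u ux) ≤ ENNReal.ofReal ν with hP
  have H2 := fun τ (hτ : τ ∈ Icc (0:ℝ) T) (hPτ : P τ) => H' τ hτ hPτ.1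
    (fun i => (lintegral_mono fun y => mul_le_of_le_one_left' (chile τ y)).trans (hIw i))
    (fun i => (lintegral_mono fun y => mul_le_of_le_one_left' (chile τ y)).trans (hIu i)) hU0 hPτ.2
  have cH : Continuous (Function.uncurry (Hs a G u ux)) := ((ch1 h).add (ch2 h)).add (ch3 h)
  have hK : IsCompact (Icc (0:ℝ) T ×ˢ Icc (-R) R) := isCompact_Icc.prod isCompact_Icc
  obtain ⟨Hm, hHm⟩ := hK.exists_bound_of_continuousOn cH.continuousOn
  have huc := hK.uniformContinuousOn_of_continuous h.cu.continuousOn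
  rw [Metric.uniformContinuousOn_iff_le] at huc
  obtain ⟨η0, hη0, huc⟩ := huc (G.κ / 2) (by positivity)
  set η := min η0 (ν / (2 * (|Hm| * (2 * R) + 1))) with hη
  have hη_pos : 0 < η := by positivity
  have step : ∀ τ ∈ Icc (0:ℝ) T, P τ → ∀ τ', τ ≤ τ' → τ' ≤ T → τ' - τ ≤ η → P τ' := by
    intro τ hτ hPτ τ' h1 h2 h3
    obtain ⟨p1, p2, -, -⟩ := H2 τ hτ hPτ
    constructor
    · intro t x hG
      by_cases htτ : t ≤ τ
      · exact hPτ.1 t x ⟨hG.1, htτ, hG.2.2⟩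
      · push Not at htτ
        have hG2 := hG.2.1
        have hG3 := hG.2.2
        simp only at hG2 hG3
        have hGτ : (τ, x) ∈ Gr τ R G.L := ⟨hτ.1, le_rfl, by simp only; nlinarith⟩
        have hx : x ∈ Icc (-R) R := abs_le.1 (Gr_abs hL hG)
        have d := huc (t, x) ⟨⟨hG.1, hG2.trans h2⟩, hx⟩ (τ, x) ⟨hτ, hx⟩ (by
          rw [dist_prod_same_right, Real.dist_eq, abs_of_pos (by linarith)]
          exact le_trans (by linarith) (min_le_left _ _))
        rw [dist_eq_norm] at d
        simp only [Function.uncurry] at d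
        have := norm_add_le (u τ x) (u t x - u τ x)
        rw [add_sub_cancel] at this
        linarith [p1 τ x hGτ]
    · refine (dI_step hL hR hτ.1 h1 h2 (abs_nonneg Hm) (fun t ht x hx =>
        (le_abs_self _).trans ((hHm (t, x) ⟨ht, hx⟩).trans (le_abs_self _)))).trans ?_
      have hνs : ν = ν / 2 + ν / 2 := by ring
      rw [hνs, ENNReal.ofReal_add (by positivity) (by positivity)]
      refine add_le_add (p2.trans (ENNReal.ofReal_le_ofReal (by linarith))) (ENNReal.ofReal_le_ofReal ?_)
      have h4 : τ' - τ ≤ ν / (2 * (|Hm| * (2 * R) + 1)) := h3.trans (min_le_right _ _)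
      rw [le_div_iff₀ (by positivity)] at h4
      nlinarith
  have P0 : P 0 := by
    constructor
    · intro t x hG
      have : t = 0 := le_antisymm hG.2.1 hG.1
      rw [this]; exact (hU0 x).trans (by linarith)
    · simp [dI]
  have ind : ∀ k : ℕ, ∀ τ ∈ Icc (0:ℝ) T, τ ≤ k * η → P τ := by
    intro k
    induction k with
    | zero =>
      intro τ hτ hk
      have : τ = 0 := le_antisymm (by simpa using hk) hτ.1
      rw [this]; exact P0
    | succ k ih =>
      intro τ hτ hk
      push_cast at hk
      have m0 : max 0 (τ - η) ∈ Icc (0:ℝ) T := ⟨le_max_left _ _, max_le hT (by linarith [hτ.2])⟩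
      refine step _ m0 (ih _ m0 (max_le (by positivity) (by linarith))) τ
        (max_le hτ.1 (by linarith)) hτ.2 ?_
      linarith [le_max_right 0 (τ - η)]
  have PT : P T := by
    obtain ⟨k, hk⟩ := exists_nat_ge (T / η)
    rw [div_le_iff₀ hη_pos] at hk
    exact ind k T ⟨hT, le_rfl⟩ hk
  obtain ⟨q1, q2, q3, q4⟩ := H2 T ⟨hT, le_rfl⟩ PT
  exact ⟨PT.1, q1, q3, q4⟩

end LS

namespace LS

lemma pow_sub_le {x y r : ℝ} (hx : |x| ≤ r) (hy : |y| ≤ r) (m : ℕ) :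
    |x ^ (m + 1) - y ^ (m + 1)| ≤ (m + 1) * r ^ m * |x - y| := by
  have h := abs_pow_sub_pow_le x y (m + 1)
  have hr : 0 ≤ r := (abs_nonneg _).trans hx
  refine h.trans ?_
  rw [Nat.add_sub_cancel, mul_comm |x - y|, mul_right_comm]
  push_cast
  have : max |x| |y| ^ m ≤ r ^ m := pow_le_pow_left₀ (by positivity) (max_le hx hy) m
  have h0 : 0 ≤ |x - y| := abs_nonneg _
  calc _ = ((m:ℝ) + 1) * max |x| |y| ^ m * |x - y| := by ring
    _ ≤ _ := by gcongr

/-- The characteristics of the same family cannot cross. -/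
theorem ordering {n a : ℕ} (G : Coef n a) (hL : 0 ≤ G.L) {A T0 : ℝ} (hA : 0 < A) (hT0 : 0 < T0) :
    ∃ ε0 B : ℝ, 0 < ε0 ∧ ∀ (ε T : ℝ) (u ut ux : ℝ → ℝ → V n), 0 < ε → ε ≤ ε0 →
      0 ≤ T → T * ε ^ (a + 1) ≤ T0 → Sol G T u ut ux →
      (∀ i, ∫⁻ y, ENNReal.ofReal |wv G u ux 0 y i| ≤ ENNReal.ofReal (A * ε)) →
      (∀ i, ∫⁻ y, ENNReal.ofReal |u 0 y i| ≤ ENNReal.ofReal (A * ε)) →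
      (∀ y, ‖u 0 y‖ ≤ A * ε) → ∀ i y1 y2, y1 < y2 →
      y1 + T * G.d i * u 0 y1 i ^ (a + 1) ≤ y2 + T * G.d i * u 0 y2 i ^ (a + 1) + B * ε := by
  obtain ⟨ε0, B, hε0, hB, H⟩ := boot G hL hA hT0
  have hc := G.c_pos
  have hκ := G.κ_pos
  have hC : 0 < G.C := lt_of_lt_of_le one_pos G.C_one
  set B2 := G.C * B * (n / G.c * B + n / G.c * B) with hB2
  have hB20 : 0 ≤ B2 := by positivity
  set D := ∑ i, |G.d i| with hD
  have hD0 : 0 ≤ D := Finset.sum_nonneg fun _ _ => abs_nonneg _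
  set B3 := G.C * B ^ (a + 2) + D * ((a + 1) * B ^ a * B2) with hB3
  have hB30 : 0 ≤ B3 := by positivity
  set B4 := B3 * T0 + G.C * (n / G.c * B) with hB4
  have hB40 : 0 ≤ B4 := by positivity
  refine ⟨ε0, 2 * B4, hε0, ?_⟩
  intro ε T u ut ux hε hεle hT hTε h hIw hIu hU0 i y1 y2 hy
  set R := |y1| + |y2| + 2 * G.L * T with hRd
  have hR : 0 ≤ R := by positivity
  obtain ⟨hb, hU, mu, mw⟩ := H ε T R u ut ux hε hεle hT hTε hR h hIw hIu hU0
  choose Kf hKf using fun i => fa_fld h hR i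
  choose X J hX using fun i => exists_flow (hKf i) hT
  have hBε : 0 ≤ B * ε := by positivity
  have key : ∀ y, |y| ≤ |y1| + |y2| →
      |X i T y - (y + T * G.lam i 0 + T * G.d i * u 0 y i ^ (a + 1))| ≤ B4 * ε := by
    intro y hy
    have hGT : (T, X i T y) ∈ Gr T R G.L := by
      refine ⟨hT, le_rfl, ?_⟩
      have := (hX i).bound y 0 T le_rfl hT le_rfl
      rw [(hX i).zero] at this
      have h2 := abs_sub_abs_le_abs_sub (X i T y) y
      simp only
      rw [hRd]; linarith
    have hTT : T ∈ Icc (0:ℝ) T := ⟨hT, le_rfl⟩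
    have hGs : ∀ s ∈ Icc (0:ℝ) T, (s, X i s y) ∈ Gr T R G.L :=
      fun s hs => Gr_back (hX i) hs.1 hs.2 hGT
    have hcX : Continuous (fun s => (s, X i s y)) :=
      continuous_id.prodMk ((hX i).cont.comp (by fun_prop : Continuous fun s : ℝ => (s, y)))
    have cu' : Continuous fun s => off (u s (X i s y)) i := c_off _ i fun j => (cui h j).comp hcX
    set k := G.lam i 0 + G.d i * u 0 y i ^ (a + 1) with hk
    have e := abs_le_lint (φ := fun s => X i s y - s * k)
      (φ' := fun s => G.lam i (u s (X i s y)) - k)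
      (g := fun s => B3 * ε ^ (a + 2) + G.C * off (u s (X i s y)) i) hT
      (by
        intro s hs
        have d1 := (hX i).hasDeriv y s hs
        rw [fa_eq hR i (by linarith [Gr_abs hL (hGs s hs)])] at d1
        exact d1.sub (by simpa using (hasDerivWithinAt_id s (Icc 0 T)).mul_const k))
      (by
        intro s hs
        have hG := hGs s hs
        have v1 := G.hlam i (u s (X i s y)) (hb _ _ hG)
        have v2 := char_var h hL hR hX hb hBε hU hBε hBε mu mw i hs hG
        have v3 : |u s (X i s y) i| ≤ B * ε := (norm_le_pi_norm _ i).trans (hU _ _ hG)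
        have hG0 := hGs 0 ⟨le_rfl, hT⟩
        rw [(hX i).zero] at hG0
        have v4 : |u 0 y i| ≤ B * ε := (norm_le_pi_norm _ i).trans (hU _ _ hG0)
        have v5 := pow_sub_le v3 v4 a
        have v6 : |G.d i| ≤ D := Finset.single_le_sum (f := fun i => |G.d i|)
          (fun _ _ => abs_nonneg _) (Finset.mem_univ i)
        have v7 : |G.d i * (u s (X i s y) i ^ (a + 1) - u 0 y i ^ (a + 1))| ≤
            D * ((a + 1) * B ^ a * B2) * ε ^ (a + 2) := by
          rw [abs_mul]
          calc |G.d i| * |u s (X i s y) i ^ (a + 1) - u 0 y i ^ (a + 1)|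
              ≤ D * ((a + 1) * (B * ε) ^ a *
                (G.C * (B * ε) * (n / G.c * (B * ε) + n / G.c * (B * ε)))) :=
                mul_le_mul v6 (v5.trans (mul_le_mul_of_nonneg_left v2 (by positivity)))
                  (abs_nonneg _) hD0
            _ = _ := by rw [hB2, mul_pow]; ring
        have v8 : |u s (X i s y) i| ^ (a + 2) ≤ B ^ (a + 2) * ε ^ (a + 2) := by
          rw [← mul_pow]; exact pow_le_pow_left₀ (abs_nonneg _) v3 _
        have e1 : G.lam i (u s (X i s y)) - k = (G.lam i (u s (X i s y)) - G.lam i 0 -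
            G.d i * u s (X i s y) i ^ (a + 1)) +
            G.d i * (u s (X i s y) i ^ (a + 1) - u 0 y i ^ (a + 1)) := by rw [hk]; ring
        rw [e1]
        refine (abs_add_le _ _).trans ?_
        have v9 := mul_le_mul_of_nonneg_left v8 hC.le
        calc _ ≤ G.C * (|u s (X i s y) i| ^ (a + 2) + off (u s (X i s y)) i) +
              D * ((a + 1) * B ^ a * B2) * ε ^ (a + 2) := add_le_add v1 v7
          _ ≤ _ := by rw [hB3]; linarith)
      ((continuous_const.add (continuous_const.mul cu')).continuousOn)
    simp only [(hX i).zero] at e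
    have e2 : ∫⁻ s in Icc 0 T, ENNReal.ofReal (B3 * ε ^ (a + 2) + G.C * off (u s (X i s y)) i) ≤
        ENNReal.ofReal (B4 * ε) := by
      have o0 : ∀ s, 0 ≤ off (u s (X i s y)) i := fun s => off_nonneg _ _
      have e1 : ∀ s, ENNReal.ofReal (B3 * ε ^ (a + 2) + G.C * off (u s (X i s y)) i) =
          ENNReal.ofReal (B3 * ε ^ (a + 2)) + ENNReal.ofReal G.C *
            ENNReal.ofReal (off (u s (X i s y)) i) := by
        intro s
        rw [ENNReal.ofReal_add (by positivity) (mul_nonneg hC.le (o0 s)), ENNReal.ofReal_mul hC.le]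
      simp only [e1]
      rw [lintegral_add_left measurable_const, lintegral_const_mul' _ _ ENNReal.ofReal_ne_top,
        setLIntegral_const, Real.volume_Icc, ← ENNReal.ofReal_mul (by positivity)]
      have o := off_cross hL hR hX hb (fun j => dens_u h hL hR j (hX j) hb) hBε mu i hTT hGT
      refine (add_le_add le_rfl (mul_le_mul_right o _)).trans ?_
      rw [← ENNReal.ofReal_mul hC.le, ← ENNReal.ofReal_add (by rw [sub_zero]; positivity) (by positivity)]
      refine ENNReal.ofReal_le_ofReal ?_
      have : B3 * ε ^ (a + 2) * (T - 0) = B3 * ε * (T * ε ^ (a + 1)) := by ring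
      rw [this, hB4]
      have := mul_le_mul_of_nonneg_left hTε (show 0 ≤ B3 * ε by positivity)
      nlinarith
    have e3 := e.trans e2
    rw [ENNReal.ofReal_le_ofReal_iff (by positivity)] at e3
    refine le_trans (le_of_eq ?_) e3
    congr 1; rw [hk]; ring
  have k1 := abs_le.1 (key y1 (by linarith [abs_nonneg y2]))
  have k2 := abs_le.1 (key y2 (by linarith [abs_nonneg y1]))
  have k3 := (hX i).mono T y1 y2 hy
  linarith [k1.1, k2.2]

end LS

namespace LS

lemma fx_diff {n : ℕ} (D : InitData n) (ε x : ℝ) :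
    HasDerivAt (D.f ε) (deriv (D.f ε) x) x := by
  have : ContDiff ℝ 1 (fun y : ℝ => D.f ε y) :=
    D.smooth.comp (contDiff_const.prodMk contDiff_id)
  exact (this.differentiable (by norm_num) x).hasDerivAt

lemma fx_cont {n : ℕ} (D : InitData n) (ε : ℝ) :
    Continuous (D.f ε) ∧ Continuous (deriv (D.f ε)) := by
  have : ContDiff ℝ 1 (fun y : ℝ => D.f ε y) :=
    D.smooth.comp (contDiff_const.prodMk contDiff_id)
  exact ⟨this.continuous, this.continuous_deriv le_rfl⟩

lemma f_bound {n : ℕ} (D : InitData n) {K1 K2 ε : ℝ} (h : D.Small K1 K2 ε) (y : ℝ) :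
    ‖D.f ε y‖ ≤ K1 * ε := by
  obtain ⟨h1, h2, h3, h4⟩ := h
  have c := fx_cont D ε
  have i1 : Integrable (deriv (D.f ε)) :=
    h1.mono' c.2.aestronglyMeasurable (Eventually.of_forall fun x => norm_le_eunorm _)
  have i2 : Integrable (D.f ε) :=
    h2.mono' c.1.aestronglyMeasurable (Eventually.of_forall fun x => norm_le_eunorm _)
  have t := MeasureTheory.tendsto_zero_of_hasDerivAt_of_integrableOn_Iic (a := y)
    (fun x _ => fx_diff D ε x) i1.integrableOn i2.integrableOn
  have e := integral_Iic_of_hasDerivAt_of_tendsto' (a := y)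
    (fun x _ => fx_diff D ε x) i1.integrableOn t
  rw [sub_zero] at e
  rw [← e]
  calc ‖∫ x in Iic y, deriv (D.f ε) x‖ ≤ ∫ x in Iic y, ‖deriv (D.f ε) x‖ :=
        norm_integral_le_integral_norm _
    _ ≤ ∫ x, ‖deriv (D.f ε) x‖ :=
        setIntegral_le_integral i1.norm (Eventually.of_forall fun x => norm_nonneg _)
    _ ≤ ∫ x, eunorm (deriv (D.f ε) x) := integral_mono i1.norm h1 fun x => norm_le_eunorm _
    _ ≤ K1 * ε := h3

lemma lint_le {g h : ℝ → ℝ} (hh : Integrable h) (hgh : ∀ x, g x ≤ h x) (h0 : ∀ x, 0 ≤ h x)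
    {K : ℝ} (hK : ∫ x, h x ≤ K) : ∫⁻ x, ENNReal.ofReal (g x) ≤ ENNReal.ofReal K := by
  calc ∫⁻ x, ENNReal.ofReal (g x) ≤ ∫⁻ x, ENNReal.ofReal (h x) :=
        lintegral_mono fun x => ENNReal.ofReal_le_ofReal (hgh x)
    _ = ENNReal.ofReal (∫ x, h x) :=
        (ofReal_integral_eq_lintegral_ofReal hh (Eventually.of_forall h0)).symm
    _ ≤ _ := ENNReal.ofReal_le_ofReal hK

lemma eunorm_nonneg {n : ℕ} (v : V n) : 0 ≤ eunorm v := Real.sqrt_nonneg _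

lemma psi_lim {n : ℕ} (D : InitData n) (x : ℝ) :
    Tendsto (fun ε => ε⁻¹ • D.f ε x) (𝓝[>] 0) (𝓝 (D.psi x)) := by
  have : ContDiff ℝ 1 (fun e : ℝ => D.f e x) :=
    D.smooth.comp (contDiff_id.prodMk contDiff_const)
  have h := ((this.differentiable (by norm_num)) 0).hasDerivAt.tendsto_slope_zero_right
  simpa [D.zero, InitData.psi] using h

lemma psi_bound {n : ℕ} (D : InitData n) {K1 K2 : ℝ}
    (hSmall : ∀ ε ∈ Set.Ioc (0 : ℝ) D.ε₁, D.Small K1 K2 ε) (x : ℝ) : ‖D.psi x‖ ≤ K1 := by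
  refine le_of_tendsto (psi_lim D x).norm ?_
  filter_upwards [Ioc_mem_nhdsGT D.ε₁_pos] with ε hε
  rw [norm_smul, norm_inv, Real.norm_of_nonneg hε.1.le, inv_mul_le_iff₀ hε.1, mul_comm]
  exact f_bound D (hSmall ε hε) x

lemma psi_deriv {n : ℕ} (D : InitData n) (x : ℝ) (i : Fin n) :
    HasDerivAt (fun y => D.psi y i) (deriv D.psi x i) x := by
  have h : ContDiff ℝ 1 D.psi := D.psi_smooth
  exact hasDerivAt_pi.1 ((h.differentiable (by norm_num)) x).hasDerivAt i

lemma blow_bdd {n : ℕ} (S : HypSys n) (D : InitData n) (a : ℕ) {K1 K2 : ℝ}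
    (hSmall : ∀ ε ∈ Set.Ioc (0 : ℝ) D.ε₁, D.Small K1 K2 ε) (i : Fin n) :
    BddAbove (range fun x : ℝ => (-(1 / (Nat.factorial a : ℝ)) * S.axisDeriv i (a + 1) *
      (D.psi x) i ^ a * deriv (fun x' => (D.psi x') i) x)) := by
  obtain ⟨M, hM⟩ := D.M_bdd
  refine ⟨|(-(1 / (Nat.factorial a : ℝ)) * S.axisDeriv i (a + 1))| * K1 ^ a * M, ?_⟩
  rintro _ ⟨x, rfl⟩
  refine (le_abs_self _).trans ?_
  have hp : |D.psi x i| ≤ K1 := (norm_le_pi_norm (D.psi x) i).trans (psi_bound D hSmall x)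
  have hd : |deriv D.psi x i| ≤ M :=
    ((norm_le_pi_norm (deriv D.psi x) i).trans (norm_le_eunorm _)).trans (hM ⟨x, rfl⟩)
  have hK : 0 ≤ K1 := (abs_nonneg _).trans hp
  simp only [(psi_deriv D x i).deriv]
  rw [abs_mul, abs_mul, abs_pow]
  gcongr

theorem main {n : ℕ} (S : HypSys n) (hNorm : S.Normalized) (hMatch : S.Matching)
    (a : ℕ) (hMin : S.IsMinAlpha a)
    (D : InitData n) (K1 K2 : ℝ) (hK1 : 0 < K1)
    (hSmall : ∀ ε ∈ Set.Ioc (0 : ℝ) D.ε₁, D.Small K1 K2 ε)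
    (i0 : Fin n) (hi0 : ¬ S.WLD i0 ∧ S.IsAlphaOf i0 a) (x0 : ℝ)
    (hneg : S.axisDeriv i0 (a + 1) * (D.psi x0) i0 ^ a *
      deriv (fun x' => (D.psi x') i0) x0 < 0) :
    Filter.limsup (fun ε : ℝ => ENNReal.ofReal (ε ^ (a + 1)) * S.lifespan (D.f ε))
      (𝓝[>] 0) ≤ ENNReal.ofReal (blowRate S D a)⁻¹ := by
  obtain ⟨G, hG, hGd⟩ := exists_coef S hNorm hMatch hMin
  have hL : 0 ≤ G.L := (abs_nonneg _).trans (G.hL i0 0)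
  have hbdd := blow_bdd S D a hSmall
  have hpos : 0 < blowRate S D a := by
    have h1 := le_ciSup (hbdd i0) x0
    have h2 := le_ciSup (f := fun i : {i : Fin n // ¬ S.WLD i ∧ S.IsAlphaOf i a} => ⨆ x : ℝ,
      (-(1 / (Nat.factorial a : ℝ)) * S.axisDeriv i.1 (a + 1) * (D.psi x) i.1 ^ a *
        deriv (fun x' => (D.psi x') i.1) x)) (Set.finite_range _).bddAbove ⟨i0, hi0⟩
    refine lt_of_lt_of_le ?_ (h1.trans h2)
    have h3 : 0 < (1 / (Nat.factorial a : ℝ)) := by positivity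
    have := mul_pos h3 (neg_pos.2 hneg)
    linarith
  refine ENNReal.le_of_forall_pos_le_add fun δ hδ _ => ?_
  have hδ' : (0:ℝ) < δ := hδ
  set T0 : ℝ := (blowRate S D a)⁻¹ + δ with hT0d
  have hT0 : 0 < T0 := by positivity
  rw [← ENNReal.ofReal_coe_nnreal, ← ENNReal.ofReal_add (by positivity) hδ'.le, ← hT0d]
  have hlt : T0⁻¹ < blowRate S D a := by
    rw [inv_lt_comm₀ hT0 hpos]; linarith
  have : Nonempty {i : Fin n // ¬ S.WLD i ∧ S.IsAlphaOf i a} := ⟨⟨i0, hi0⟩⟩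
  obtain ⟨⟨i, hi⟩, hix⟩ := exists_lt_of_lt_ciSup hlt
  obtain ⟨x, hx⟩ := exists_lt_of_lt_ciSup hix
  dsimp only at hx
  rw [(psi_deriv D x i).deriv] at hx
  -- the limiting flow map is decreasing somewhere
  obtain ⟨y, hxy, hy⟩ : ∃ y, x < y ∧
      y + T0 * G.d i * D.psi y i ^ (a + 1) < x + T0 * G.d i * D.psi x i ^ (a + 1) := by
    have hd := (hasDerivAt_id x).add (((psi_deriv D x i).pow (a + 1)).const_mul (T0 * G.d i))
    have hval : 1 + T0 * G.d i * (((a + 1 : ℕ) : ℝ) * D.psi x i ^ (a + 1 - 1) * deriv D.psi x i)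
        < 0 := by
      rw [hGd, Nat.factorial_succ, Nat.add_sub_cancel]
      have hf : (0:ℝ) < Nat.factorial a := by positivity
      have ha : (0:ℝ) < ((a + 1 : ℕ) : ℝ) := by positivity
      have e : T0 * (S.axisDeriv i (a + 1) / (((a + 1) * Nat.factorial a : ℕ) : ℝ)) *
          (((a + 1 : ℕ) : ℝ) * D.psi x i ^ a * deriv D.psi x i) =
          -(T0 * (-(1 / (Nat.factorial a : ℝ)) * S.axisDeriv i (a + 1) * D.psi x i ^ a *
            deriv D.psi x i)) := by
        push_cast at ha ⊢
        field_simp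
      rw [e]
      have := mul_lt_mul_of_pos_left hx hT0
      rw [mul_inv_cancel₀ hT0.ne'] at this
      linarith
    have hs := hd.tendsto_slope_zero_right
    have hev := (hs.eventually (gt_mem_nhds hval)).and self_mem_nhdsWithin
    obtain ⟨t, ht, ht0⟩ := hev.exists
    have ht0' : (0:ℝ) < t := ht0
    refine ⟨x + t, by linarith, ?_⟩
    have h4 := neg_of_mul_neg_right (a := t⁻¹) (by simpa using ht) (by positivity)
    simp at h4
    linarith
  set A : ℝ := G.C * K1 + |K2 / (D.M + 1)| + K1 with hA
  have hC : 0 < G.C := lt_of_lt_of_le one_pos G.C_one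
  have hApos : 0 < A := by positivity
  obtain ⟨ε0, B, hε0, H⟩ := ordering G hL hApos hT0
  have hlim : ∀ z, Tendsto (fun ε : ℝ => z + T0 * G.d i * (ε⁻¹ * D.f ε z i) ^ (a + 1)) (𝓝[>] 0)
      (𝓝 (z + T0 * G.d i * D.psi z i ^ (a + 1))) := fun z => by
    have h := ((continuous_apply i).tendsto _).comp (psi_lim D z)
    exact ((h.pow (a + 1)).const_mul _).const_add _
  have hBl : Tendsto (fun ε : ℝ => B * ε) (𝓝[>] 0) (𝓝 0) := by
    have : Tendsto (fun ε : ℝ => B * ε) (𝓝 0) (𝓝 (B * 0)) :=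
      (continuous_const.mul continuous_id).tendsto 0
    rw [mul_zero] at this
    exact this.mono_left nhdsWithin_le_nhds
  have hcon := ((hlim y).add hBl).eventually_lt (hlim x) (by simpa using hy)
  have hκ := G.κ_pos
  refine limsup_le_of_le (by isBoundedDefault) ?_
  filter_upwards [hcon, Ioc_mem_nhdsGT D.ε₁_pos, Ioc_mem_nhdsGT hε0,
    Ioc_mem_nhdsGT (show 0 < G.κ / K1 by positivity)] with ε hc h1 h2 h3
  have hε := h1.1
  have hεp : 0 < ε ^ (a + 1) := by positivity
  have hsm := hSmall ε h1
  have hfb := f_bound D hsm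
  have hKκ : K1 * ε ≤ G.κ := by
    have := (le_div_iff₀ hK1).1 h3.2; linarith
  have key : S.lifespan (D.f ε) ≤ ENNReal.ofReal (T0 / ε ^ (a + 1)) := by
    refine iSup_le fun T' => iSup_le fun ⟨v, hv⟩ => ENNReal.ofReal_le_ofReal ?_
    by_contra! hgt
    have hTp : 0 < T0 / ε ^ (a + 1) := by positivity
    obtain ⟨u, ut, ux, hs, h0⟩ := exists_sol S G hG (hTp.trans hgt) hv
    have hu0 : u 0 = D.f ε := funext h0
    have hux : ∀ z, ux 0 z = deriv (D.f ε) z := fun z => by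
      have := hs.dx 0 z
      rw [hu0] at this
      exact this.deriv.symm
    have hA1 : G.C * (K1 * ε) ≤ A * ε := by
      have : 0 ≤ (|K2 / (D.M + 1)| + K1) * ε := by positivity
      rw [hA]; nlinarith
    have hA2 : K2 / (D.M + 1) * ε ≤ A * ε := by
      refine mul_le_mul_of_nonneg_right ?_ hε.le
      have : 0 ≤ G.C * K1 := by positivity
      linarith [le_abs_self (K2 / (D.M + 1))]
    have hA3 : K1 * ε ≤ A * ε := by
      refine mul_le_mul_of_nonneg_right ?_ hε.le
      have : 0 ≤ G.C * K1 := by positivity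
      linarith [abs_nonneg (K2 / (D.M + 1))]
    obtain ⟨s1, s2, s3, s4⟩ := hsm
    have hord := H ε (T0 / ε ^ (a + 1)) u ut ux hε h2.2 hTp.le
      (div_mul_cancel₀ _ hεp.ne').le (hs.mono hgt.le)
      (fun k => lint_le (s1.const_mul G.C)
        (fun z => by
          have : wv G u ux 0 z k = G.l k (D.f ε z) ⬝ᵥ deriv (D.f ε) z := by
            rw [← hux z, ← h0 z]; rfl
          rw [this]
          exact (G.hl _ ((hfb z).trans hKκ) k _).trans
            (mul_le_mul_of_nonneg_left (norm_le_eunorm _) hC.le))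
        (fun z => mul_nonneg hC.le (eunorm_nonneg _))
        (by rw [integral_const_mul]
            exact (mul_le_mul_of_nonneg_left s3 hC.le).trans hA1))
      (fun k => lint_le s2
        (fun z => by
          rw [h0 z]
          exact (norm_le_pi_norm (D.f ε z) k).trans (norm_le_eunorm _))
        (fun z => eunorm_nonneg _) (s4.trans hA2))
      (fun z => by rw [h0 z]; exact (hfb z).trans hA3) i x y hxy
    have e : ∀ z, T0 / ε ^ (a + 1) * G.d i * u 0 z i ^ (a + 1) =
        T0 * G.d i * (ε⁻¹ * D.f ε z i) ^ (a + 1) := fun z => by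
      rw [h0 z, mul_pow, inv_pow]; field_simp
    rw [e, e] at hord
    exact absurd hc (not_lt.2 hord)
  calc ENNReal.ofReal (ε ^ (a + 1)) * S.lifespan (D.f ε)
      ≤ ENNReal.ofReal (ε ^ (a + 1)) * ENNReal.ofReal (T0 / ε ^ (a + 1)) := by gcongr
    _ = ENNReal.ofReal T0 := by
      rw [← ENNReal.ofReal_mul hεp.le, mul_div_cancel₀ _ hεp.ne']

end LS

/-- **Upper bound of the lifespan** (Section 5, part (I)).  Under the
hypotheses of Theorem 1.2,
`limsup_{ε→0⁺} ε^{α+1} T̃(ε) ≤ M₀`, where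
`M₀ = [max_{i∈J₁} sup_{x∈ℝ} (−(1/α!) ∂^{α+1}λ_i/∂u_i^{α+1}(0) ψ_i(x)^α ψ_i'(x))]⁻¹`. -/
theorem stmt5 {n : ℕ} (S : HypSys n) (hNorm : S.Normalized) (hMatch : S.Matching)
    (a : ℕ) (hMin : S.IsMinAlpha a)
    (D : InitData n) (K1 K2 : ℝ) (hK1 : 0 < K1) (hK2 : 0 < K2)
    (hSmall : ∀ ε ∈ Set.Ioc (0 : ℝ) D.ε₁, D.Small K1 K2 ε)
    (i0 : Fin n) (hi0 : ¬ S.WLD i0 ∧ S.IsAlphaOf i0 a) (x0 : ℝ)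
    (hneg : S.axisDeriv i0 (a + 1) * (D.psi x0) i0 ^ a *
      deriv (fun x' => (D.psi x') i0) x0 < 0) :
    Filter.limsup (fun ε : ℝ => ENNReal.ofReal (ε ^ (a + 1)) * S.lifespan (D.f ε))
      (𝓝[>] 0) ≤ ENNReal.ofReal (blowRate S D a)⁻¹ := by
  exact LS.main S hNorm hMatch a hMin D K1 K2 hK1 hSmall i0 hi0 x0 hneg
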